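/- Let b>1 and B<3 be fixed constants and let m:ℕ→ℕ satisfy bn ≤ m(n) ≤ Bn for all sufficiently large n. Let H_1,…,H_l be fixed connected planar graphs, with each H_i having vertex set {1,…,|H_i|}, and let t be a fixed positive integer. Then there exist constants ε>0 and N such that for all n ≥ N, the probability that, simultaneously for every i ≤ l, the graph P_{n,m(n)} has at least t components admitting an order-preserving isomorphism to H_i is at least ε. -/

import Mathlib

open SimpleGraph Filter Asymptotics

/-- `H` is a minor of `G`: to each vertex of `H` we can assign a connected nonempty
branch set in `G`, pairwise disjoint, with an edge of `G` between the branch sets of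
any two adjacent vertices of `H`. -/
def IsMinor {α β : Type*} (H : SimpleGraph α) (G : SimpleGraph β) : Prop :=
  ∃ f : α → Set β,
    (∀ a, (G.induce (f a)).Connected) ∧
    (∀ a b, a ≠ b → Disjoint (f a) (f b)) ∧
    (∀ a b, H.Adj a b → ∃ u ∈ f a, ∃ v ∈ f b, G.Adj u v)

/-- A graph is planar iff it has neither a `K₅`-minor nor a `K₃,₃`-minor
(Wagner's theorem). -/
def IsPlanar {V : Type*} (G : SimpleGraph V) : Prop :=
  ¬ IsMinor (completeGraph (Fin 5)) G ∧
    ¬ IsMinor (completeBipartiteGraph (Fin 3) (Fin 3)) G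

/-- The number of edges of a graph. -/
noncomputable def edgeCount {V : Type*} (G : SimpleGraph V) : ℕ :=
  G.edgeSet.ncard

/-- The degree of a vertex. -/
noncomputable def vertexDegree {V : Type*} (G : SimpleGraph V) (v : V) : ℕ :=
  (G.neighborSet v).ncard

/-- `𝒫(n,m)`: the set of labelled planar graphs on `{1,…,n}` with exactly `m` edges. -/
def planarSet (n m : ℕ) : Set (SimpleGraph (Fin n)) :=
  {G | IsPlanar G ∧ edgeCount G = m}

/-- The probability that the uniform random planar graph `P_{n,m}` satisfies `P`. -/
noncomputable def planarProb (n m : ℕ) (P : SimpleGraph (Fin n) → Prop) : ℝ :=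
  ({G ∈ planarSet n m | P G}.ncard : ℝ) / ((planarSet n m).ncard : ℝ)

/-- The number of pendant edges (edges incident to a vertex of degree 1). -/
noncomputable def pendantCount {V : Type*} (G : SimpleGraph V) : ℕ :=
  {e ∈ G.edgeSet | ∃ v ∈ e, vertexDegree G v = 1}.ncard

/-- The set of addable non-edges of `G`: non-edges whose addition keeps the graph planar. -/
def addableSet {V : Type*} (G : SimpleGraph V) : Set (Sym2 V) :=
  {e | ¬ e.IsDiag ∧ e ∉ G.edgeSet ∧ IsPlanar (G ⊔ SimpleGraph.fromEdgeSet {e})}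

/-- `add(n,m)`: the minimum number of addable non-edges over all graphs in `𝒫(n,m)`. -/
noncomputable def addMin (n m : ℕ) : ℕ :=
  sInf ((fun G => (addableSet G).ncard) '' planarSet n m)

/-- `W` carries an induced order-preserving copy of `H` in `G`: the increasing bijection
from `{1,…,h}` to `W` is an isomorphism between `H` and the induced subgraph `G[W]`. -/
def IsOrderCopy {h n : ℕ} (H : SimpleGraph (Fin h)) (G : SimpleGraph (Fin n))
    (W : Finset (Fin n)) : Prop :=
  ∃ hW : W.card = h,
    ∀ i j : Fin h,
      H.Adj i j ↔ G.Adj ((W.orderIsoOfFin hW i : Fin n)) ((W.orderIsoOfFin hW j : Fin n))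

/-- `W` is the vertex set of a connected component of `G`. -/
def IsComponent {V : Type*} (G : SimpleGraph V) (W : Finset V) : Prop :=
  (G.induce (W : Set V)).Connected ∧ ∀ v ∈ W, ∀ u, G.Adj v u → u ∈ W

/-- The number of components of `G` admitting an order-preserving isomorphism to `H`. -/
noncomputable def numOrderComponents {h n : ℕ} (H : SimpleGraph (Fin h))
    (G : SimpleGraph (Fin n)) : ℕ :=
  {W : Finset (Fin n) | IsComponent G W ∧ IsOrderCopy H G W}.ncard

/-- The number of distinct cycles (as subgraphs, identified with their edge sets) of
length at most `k` in `S`. -/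
noncomputable def cycleCountLe {V : Type*} (S : SimpleGraph V) (k : ℕ) : ℕ :=
  {E : Set (Sym2 V) | ∃ (v : V) (c : S.Walk v v),
    c.IsCycle ∧ c.length ≤ k ∧ {e | e ∈ c.edges} = E}.ncard

/-!
The proof compares all planar graphs with `n` vertices and `m` edges to those with the required
components through a switching argument. From a planar graph `G` a bounded set `F` of vertices is
freed, that is, `G` is reduced to a planar graph `G₀` in which `F` is isolated, losing `j` edges.
On `F` the required components are then built, together with a connected blob using up exactly the
remaining edges, which is attached by one edge to an arbitrary vertex `y ∉ F`. The result `G'` has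
`m` edges again. Counting the triples `(G, F, y)` mapped to one `G'` gives the theorem.

*Reductions.* Deleting a few vertices of high degree from `G` leaves a planar graph of bounded
degree, which splits into connected pieces of bounded size with few edges between them; the pieces
are obtained by repeated merging along heavy connections. A piece with many vertices is contracted
to one of its vertices. A small piece attached only to high-degree vertices is deleted; by
planarity, only few such pieces can have pairwise distinct attachment sets, so that almost all have
an untouched twin with the same attachment set. In both cases the place where the piece has to be
restored can be described in `G₀` by one vertex: the vertex of contraction, or a vertex of the twin.
Almost all of `G` is covered by such pieces.

*Density.* Since `m / n` is bounded away from `1` and `3`, linearly many pieces of one type lose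
more than `1 + η` edges per freed vertex, and linearly many of one type lose less than `3 - η`.
Combining `r` pieces of these two types in a suitable ratio gives, for a bounded `r`, at least a
constant times `n ^ r` sets `F` with `1 + η ≤ j / |F| ≤ 3 - η`. For large `|F|` this leaves room for
the new components, because connected planar blobs with a dominating vertex exist for every number
of edges up to nearly three times the number of vertices.

*Recovery.* Each `G` yields at least a constant times `n ^ (r + 1)` triples. Given `G'`, the hub of
the blob is one of `n` vertices, `y` is one of its boundedly many neighbours, and `F` consists of
the rest of the closed neighbourhood of the hub and of the new components. New components are
built only for those `H i` of which `G` has boundedly many copies, so that there are boundedly many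
choices for them too. Then `G₀` is `G'` with `F` isolated, and the `r` places where the pieces have
to be restored are chosen in `n ^ r` ways; the change there is one of boundedly many. Thus at most
a constant times `n ^ (r + 1)` triples lead to the same `G'`.

Planarity enters only through the excluded minors: a planar graph stays planar under contraction of
connected sets and under joining by a bridge, and has a vertex of bounded degree.
-/

namespace PlanarSwitch

open scoped Classical

open Finset

universe w

/-! ### Connected vertex sets and minors -/

section Minor

variable {V W α : Type*} {G : SimpleGraph V} {S : Set V}

theorem preconnected_induce_iff_exists_adj :
    (G.induce S).Preconnected ↔ ∀ A : Set V, ∀ u ∈ S, ∀ w ∈ S, u ∈ A → w ∉ A →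
      ∃ x ∈ S, ∃ y ∈ S, x ∈ A ∧ y ∉ A ∧ G.Adj x y := by
  constructor
  · intro h A u hu w hw huA hwA
    obtain ⟨p⟩ := h ⟨u, hu⟩ ⟨w, hw⟩
    obtain ⟨d, -, hd, hd'⟩ := p.exists_boundary_dart (Subtype.val ⁻¹' A) huA hwA
    exact ⟨d.fst, d.fst.2, d.snd, d.snd.2, hd, hd', d.adj⟩
  · intro h u w
    by_contra hcon
    obtain ⟨x, hx, y, hy, ⟨_, hux⟩, hyA, hxy⟩ :=
      h {x | ∃ hx : x ∈ S, (G.induce S).Reachable u ⟨x, hx⟩} u u.2 w w.2 ⟨u.2, .rfl⟩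
        fun ⟨_, h⟩ => hcon h
    have hadj : (G.induce S).Adj ⟨x, hx⟩ ⟨y, hy⟩ := hxy
    exact hyA ⟨hy, hux.trans hadj.reachable⟩

theorem preconnected_induce_of_subsingleton (hS : S.Subsingleton) :
    (G.induce S).Preconnected :=
  haveI := hS.coe_sort
  .of_subsingleton

theorem preconnected_induce_union_biUnion {ι : Type*} (hS : (G.induce S).Preconnected) (J : Set ι)
    (T : ι → Set V) (hT : ∀ i ∈ J, (G.induce (T i)).Preconnected)
    (hadj : ∀ i ∈ J, ∃ x ∈ S, ∃ y ∈ T i, G.Adj x y) :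
    (G.induce (S ∪ ⋃ i ∈ J, T i)).Preconnected := by
  rw [preconnected_induce_iff_exists_adj] at hS ⊢
  intro A u hu w hw huA hwA
  have hSU : S ⊆ S ∪ ⋃ i ∈ J, T i := Set.subset_union_left
  have hTU : ∀ i ∈ J, T i ⊆ S ∪ ⋃ i ∈ J, T i := fun i hi =>
    (Set.subset_biUnion_of_mem (u := T) hi).trans Set.subset_union_right
  by_contra! hcon
  have hside : ∀ z ∈ S ∪ ⋃ i ∈ J, T i, ∃ s ∈ S, (s ∈ A ↔ z ∈ A) := by
    rintro z (hz | hz)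
    · exact ⟨z, hz, Iff.rfl⟩
    obtain ⟨i, hi, hzi⟩ := Set.mem_iUnion₂.1 hz
    obtain ⟨s, hs, y, hy, hsy⟩ := hadj i hi
    have hsides : s ∈ A ↔ y ∈ A :=
      ⟨fun h => by_contra fun h' => hcon s (hSU hs) y (hTU i hi hy) h h' hsy,
        fun h => by_contra fun h' => hcon y (hTU i hi hy) s (hSU hs) h h' hsy.symm⟩
    refine ⟨s, hs, hsides.trans ?_⟩
    have hTi := preconnected_induce_iff_exists_adj.1 (hT i hi) A
    constructor <;> intro h <;> by_contra h'
    · obtain ⟨p, hp, q, hq, hpA, hqA, hpq⟩ := hTi y hy z hzi h h'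
      exact hcon p (hTU i hi hp) q (hTU i hi hq) hpA hqA hpq
    · obtain ⟨p, hp, q, hq, hpA, hqA, hpq⟩ := hTi z hzi y hy h h'
      exact hcon p (hTU i hi hp) q (hTU i hi hq) hpA hqA hpq
  obtain ⟨s, hs, hsu⟩ := hside u hu
  obtain ⟨s', hs', hsw⟩ := hside w hw
  obtain ⟨p, hp, q, hq, hpA, hqA, hpq⟩ :=
    hS A s hs s' hs' (hsu.2 huA) fun h => hwA (hsw.1 h)
  exact hcon p (hSU hp) q (hSU hq) hpA hqA hpq

/-- The minor of `G` described by a partial map `ρ`: the fibre of `a` is contracted to the vertex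
`a`, and the vertices at which `ρ` is undefined are deleted. Labels with an empty fibre become
isolated vertices, and for planarity to be inherited the fibres have to be connected. -/
def contract (G : SimpleGraph V) (ρ : V → Option W) : SimpleGraph W where
  Adj a b := a ≠ b ∧ ∃ u w, ρ u = some a ∧ ρ w = some b ∧ G.Adj u w
  symm := ⟨fun _ _ ⟨hne, u, w, hu, hw, h⟩ => ⟨hne.symm, w, u, hw, hu, h.symm⟩⟩
  loopless := ⟨fun _ h => h.1 rfl⟩

theorem preconnected_induce_preimage_of_contract (ρ : V → Option W)
    (hρ : ∀ a, (G.induce {u | ρ u = some a}).Preconnected) {S : Set W}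
    (hS : ((contract G ρ).induce S).Preconnected) :
    (G.induce {u | ∃ c ∈ S, ρ u = some c}).Preconnected := by
  simp only [preconnected_induce_iff_exists_adj] at hρ hS ⊢
  rintro A u ⟨a, ha, hua⟩ w ⟨c, hc, hwc⟩ huA hwA
  by_contra! hcon
  have hfibre : ∀ c ∈ S, ∀ x y, ρ x = some c → ρ y = some c → x ∈ A → y ∈ A := by
    intro c hc x y hx hy hxA
    by_contra hyA
    obtain ⟨p, hp, q, hq, hpA, hqA, hpq⟩ := hρ c A x hx y hy hxA hyA
    exact hcon p ⟨c, hc, hp⟩ q ⟨c, hc, hq⟩ hpA hqA hpq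
  obtain ⟨b, hb, d, hd, ⟨x, hxb, hxA⟩, hdA, -, p, q, hp, hq, hpq⟩ :=
    hS {b | ∃ x, ρ x = some b ∧ x ∈ A} a ha c hc ⟨u, hua, huA⟩
      fun ⟨x, hx, hxA⟩ => hwA (hfibre c hc x w hx hwc hxA)
  exact hcon p ⟨b, hb, hp⟩ q ⟨d, hd, hq⟩ (hfibre b hb x p hxb hp hxA) (fun h => hdA ⟨q, hq, h⟩) hpq

theorem isMinor_of_contract {M : SimpleGraph α} (hM : ∀ a, ∃ b, M.Adj a b) (ρ : V → Option W)
    (hρ : ∀ a, (G.induce {u | ρ u = some a}).Preconnected) (h : IsMinor M (contract G ρ)) :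
    IsMinor M G := by
  obtain ⟨f, hconn, hdisj, hadj⟩ := h
  refine ⟨fun a => {u | ∃ c ∈ f a, ρ u = some c}, fun a => ?_, fun a b hab => ?_,
    fun a b hab => ?_⟩
  · obtain ⟨b, hb⟩ := hM a
    obtain ⟨x, hx, -, -, -, u, -, hu, -, -⟩ := hadj a b hb
    exact (connected_iff _).2 ⟨preconnected_induce_preimage_of_contract ρ hρ (hconn a).preconnected,
      ⟨⟨u, x, hx, hu⟩⟩⟩
  · rw [Set.disjoint_left]
    rintro u ⟨c, hc, huc⟩ ⟨c', hc', huc'⟩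
    obtain rfl : c = c' := Option.some.inj (huc.symm.trans huc')
    exact Set.disjoint_left.1 (hdisj a b hab) hc hc'
  · obtain ⟨x, hx, y, hy, -, u, w, hu, hw, huw⟩ := hadj a b hab
    exact ⟨u, ⟨x, hx, hu⟩, w, ⟨y, hy, hw⟩, huw⟩

theorem _root_.IsMinor.mono {M : SimpleGraph α} {G' : SimpleGraph V} (h : IsMinor M G)
    (hle : G ≤ G') : IsMinor M G' := by
  obtain ⟨f, hconn, hdisj, hadj⟩ := h
  refine ⟨f, fun a => (hconn a).mono (comap_monotone _ hle), hdisj, fun a b hab => ?_⟩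
  obtain ⟨u, hu, v, hv, huv⟩ := hadj a b hab
  exact ⟨u, hu, v, hv, hle huv⟩

theorem _root_.IsPlanar.mono {G' : SimpleGraph V} (h : IsPlanar G') (hle : G ≤ G') : IsPlanar G :=
  ⟨fun hM => h.1 (hM.mono hle), fun hM => h.2 (hM.mono hle)⟩

theorem completeGraph_five_exists_adj (a : Fin 5) : ∃ b, (completeGraph (Fin 5)).Adj a b :=
  ⟨a + 1, by simp [completeGraph]⟩

theorem completeBipartiteGraph_three_exists_adj :
    ∀ a : Fin 3 ⊕ Fin 3, ∃ b, (completeBipartiteGraph (Fin 3) (Fin 3)).Adj a b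
  | .inl _ => ⟨.inr 0, by simp⟩
  | .inr _ => ⟨.inl 0, by simp⟩

theorem _root_.IsPlanar.contract (h : IsPlanar G) (ρ : V → Option W)
    (hρ : ∀ a, (G.induce {u | ρ u = some a}).Preconnected) : IsPlanar (contract G ρ) :=
  ⟨fun hM => h.1 (isMinor_of_contract completeGraph_five_exists_adj ρ hρ hM),
   fun hM => h.2 (isMinor_of_contract completeBipartiteGraph_three_exists_adj ρ hρ hM)⟩

theorem _root_.IsPlanar.map (h : IsPlanar G) (e : V ↪ W) : IsPlanar (G.map e) := by
  refine (h.contract (fun u => some (e u)) fun a => ?_).mono ?_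
  · refine preconnected_induce_of_subsingleton fun u hu w hw => e.injective ?_
    exact Option.some.inj (hu.trans (Eq.symm hw))
  · intro a b hab
    obtain ⟨u, w, huw, rfl, rfl⟩ := (map_adj _ _ _ _).1 hab
    exact ⟨hab.ne, u, w, rfl, rfl, huw⟩

theorem _root_.IsPlanar.induce (h : IsPlanar G) (A : Set V) : IsPlanar (G.induce A) := by
  refine (h.contract (fun u => if hu : u ∈ A then some (⟨u, hu⟩ : A) else none) fun a => ?_).mono ?_
  · refine preconnected_induce_of_subsingleton fun u hu w hw => ?_
    have eq_of_some : ∀ z, (if hz : z ∈ A then some (⟨z, hz⟩ : A) else none) = some a → z = a := by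
      grind
    exact (eq_of_some u hu).trans (eq_of_some w hw).symm
  · intro a b hab
    exact ⟨hab.ne, a, b, by simp, by simp, hab⟩

end Minor

/-! ### Joining planar graphs by a bridge -/

section Bridge

variable {V α : Type*} {M : SimpleGraph α} {G : SimpleGraph V} {A : Set V} {x y : V}

theorem bridge_end_mem_of_crossing {S : Set V}
    (hbridge : ∀ u ∈ A, ∀ v ∉ A, G.Adj u v → u = x ∧ v = y)
    (hS : (G.induce S).Preconnected) (hin : (S ∩ A).Nonempty) (hout : (S \ A).Nonempty) :
    x ∈ S ∩ A := by
  obtain ⟨u, hu, huA⟩ := hin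
  obtain ⟨w, hw, hwA⟩ := hout
  obtain ⟨p, hp, q, -, hpA, hqA, hpq⟩ :=
    preconnected_induce_iff_exists_adj.1 hS A u hu w hw huA hwA
  exact (hbridge p hpA q hqA hpq).1 ▸ ⟨hp, hpA⟩

theorem preconnected_induce_preimage_of_bridge {S : Set V}
    (hbridge : ∀ u ∈ A, ∀ v ∉ A, G.Adj u v → u = x ∧ v = y) (hS : (G.induce S).Preconnected) :
    ((G.induce A).induce (Subtype.val ⁻¹' S)).Preconnected := by
  rw [preconnected_induce_iff_exists_adj] at hS ⊢
  intro B u hu w hw huB hwB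
  -- a cut of the near side is extended by the whole far side, which is attached at `x`
  let C : Set V := {z | if hz : z ∈ A then ⟨z, hz⟩ ∈ B else ∃ hx : x ∈ A, ⟨x, hx⟩ ∈ B}
  obtain ⟨p, hp, q, hq, hpC, hqC, hpq⟩ := hS C u hu w hw (by simpa [C] using huB)
    (by simpa [C] using hwB)
  by_cases hpA : p ∈ A <;> by_cases hqA : q ∈ A
  · exact ⟨⟨p, hpA⟩, hp, ⟨q, hqA⟩, hq, by simpa [C, hpA] using hpC, by simpa [C, hqA] using hqC,
      hpq⟩
  · obtain ⟨rfl, -⟩ := hbridge p hpA q hqA hpq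
    simp_all [C]
  · obtain ⟨rfl, -⟩ := hbridge q hqA p hpA hpq.symm
    simp_all [C]
  · simp_all [C]

theorem isMinor_induce_of_bridge (hbridge : ∀ u ∈ A, ∀ v ∉ A, G.Adj u v → u = x ∧ v = y)
    {f : α → Set V} (hconn : ∀ a, (G.induce (f a)).Connected)
    (hdisj : ∀ a b, a ≠ b → Disjoint (f a) (f b))
    (hadj : ∀ a b, M.Adj a b → ∃ u ∈ f a, ∃ v ∈ f b, G.Adj u v)
    (hmeet : ∀ a, (f a ∩ A).Nonempty) : IsMinor M (G.induce A) := by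
  have hx : ∀ a, ∀ v ∈ f a, v ∉ A → x ∈ f a := fun a v hv hvA =>
    (bridge_end_mem_of_crossing hbridge (hconn a).preconnected (hmeet a) ⟨v, hv, hvA⟩).1
  refine ⟨fun a => Subtype.val ⁻¹' f a, fun a => (connected_iff _).2
    ⟨preconnected_induce_preimage_of_bridge hbridge (hconn a).preconnected, ?_⟩,
    fun a b hab => (hdisj a b hab).preimage _, fun a b hab => ?_⟩
  · obtain ⟨u, hu, huA⟩ := hmeet a
    exact ⟨⟨⟨u, huA⟩, hu⟩⟩
  · obtain ⟨u, hu, v, hv, huv⟩ := hadj a b hab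
    have hdis := Set.disjoint_left.1 (hdisj a b hab.ne)
    by_cases huA : u ∈ A <;> by_cases hvA : v ∈ A
    · exact ⟨⟨u, huA⟩, hu, ⟨v, hvA⟩, hv, huv⟩
    · obtain ⟨rfl, -⟩ := hbridge u huA v hvA huv
      exact absurd (hx b v hv hvA) (hdis hu)
    · obtain ⟨rfl, -⟩ := hbridge v hvA u huA huv.symm
      exact absurd hv (hdis (hx a u hu huA))
    · exact absurd (hx b v hv hvA) (hdis (hx a u hu huA))

/-- The two ends of the bridge lie in branch sets other than `f c`, since `M` stays connected when
`c` is deleted. -/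
theorem exists_bridge_ends_mem (hbridge : ∀ u ∈ A, ∀ v ∉ A, G.Adj u v → u = x ∧ v = y)
    {f : α → Set V} (hadj : ∀ a b, M.Adj a b → ∃ u ∈ f a, ∃ v ∈ f b, G.Adj u v) {c : α}
    (hc : (M.induce {c}ᶜ).Preconnected) (hside : ∀ a ≠ c, f a ⊆ A ∨ Disjoint (f a) A)
    {a b : α} (hac : a ≠ c) (hbc : b ≠ c) (ha : f a ⊆ A) (hb : ¬ f b ⊆ A) :
    ∃ a ≠ c, ∃ b ≠ c, f a ⊆ A ∧ ¬ f b ⊆ A ∧ x ∈ f a ∧ y ∈ f b := by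
  obtain ⟨p, hp, q, hq, hpA, hqA, hpq⟩ :=
    preconnected_induce_iff_exists_adj.1 hc {a | f a ⊆ A} a hac b hbc ha hb
  obtain ⟨u, hu, v, hv, huv⟩ := hadj p q hpq
  obtain ⟨rfl, rfl⟩ := hbridge u (hpA hu) v
    (Set.disjoint_left.1 ((hside q hq).resolve_left hqA) hv) huv
  exact ⟨p, hp, q, hq, hpA, hqA, hu, hv⟩

/-- If no branch set meets both sides, then some edge of `M` is modelled by the bridge, and deleting
a suitable end of it leaves a cut of `M` without edges. -/
theorem not_isMinor_of_bridge (hM : ∀ c, (M.induce {c}ᶜ).Preconnected)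
    (hcard : ∀ a b : α, ∃ c, c ≠ a ∧ c ≠ b)
    (hbridge : ∀ u ∈ A, ∀ v ∉ A, G.Adj u v → u = x ∧ v = y)
    (hA : ¬ IsMinor M (G.induce A)) (hA' : ¬ IsMinor M (G.induce Aᶜ)) : ¬ IsMinor M G := by
  rintro ⟨f, hconn, hdisj, hadj⟩
  have unique : ∀ {a b z}, z ∈ f a → z ∈ f b → a = b := fun {a b z} ha hb =>
    by_contra fun hab => Set.disjoint_left.1 (hdisj a b hab) ha hb
  obtain ⟨b, hb⟩ : ∃ b, ¬ (f b ∩ A).Nonempty := by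
    by_contra! h
    exact hA (isMinor_induce_of_bridge hbridge hconn hdisj hadj h)
  obtain ⟨a, ha⟩ : ∃ a, ¬ (f a ∩ Aᶜ).Nonempty := by
    by_contra! h
    refine hA' (isMinor_induce_of_bridge (x := y) (y := x) ?_ hconn hdisj hadj h)
    exact fun u hu v hv huv => (hbridge v (not_not.1 hv) u hu huv.symm).symm
  replace ha : f a ⊆ A := fun u hu => by_contra fun huA => ha ⟨u, hu, huA⟩
  replace hb : Disjoint (f b) A := Set.disjoint_left.2 fun u hu huA => hb ⟨u, hu, huA⟩
  have not_subset : ¬ f b ⊆ A := fun hsub => by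
    obtain ⟨u, hu⟩ := (hconn b).nonempty
    exact Set.disjoint_left.1 hb hu (hsub hu)
  have mem_of_spread : ∀ c, ¬ (f c ⊆ A ∨ Disjoint (f c) A) → x ∈ f c := by
    intro c hc
    rw [not_or, Set.not_subset, Set.not_disjoint_iff_nonempty_inter] at hc
    exact (bridge_end_mem_of_crossing hbridge (hconn c).preconnected hc.2 hc.1).1
  by_cases hspread : ∃ c, ¬ (f c ⊆ A ∨ Disjoint (f c) A)
  · obtain ⟨c, hc⟩ := hspread
    obtain ⟨p, hp, -, -, -, -, hx, -⟩ := exists_bridge_ends_mem hbridge hadj (hM c)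
      (fun d hd => by_contra fun h => hd (unique (mem_of_spread d h) (mem_of_spread c hc)))
      (by rintro rfl; exact hc (.inl ha)) (by rintro rfl; exact hc (.inr hb)) ha not_subset
    exact hp (unique hx (mem_of_spread c hc))
  · push Not at hspread
    obtain ⟨c, hca, hcb⟩ := hcard a b
    obtain ⟨p, -, q, -, hpA, hqA, hx, hy⟩ := exists_bridge_ends_mem hbridge hadj (hM c)
      (fun d _ => hspread d) hca.symm hcb.symm ha not_subset
    by_cases hp : ∃ p' ≠ p, f p' ⊆ A
    · obtain ⟨p', hp', hp'A⟩ := hp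
      obtain ⟨p'', hp'', -, -, -, -, hx', -⟩ := exists_bridge_ends_mem hbridge hadj (hM p)
        (fun d _ => hspread d) hp' (by rintro rfl; exact hqA hpA) hp'A hqA
      exact hp'' (unique hx' hx)
    · push Not at hp
      obtain ⟨d, hdp, hdq⟩ := hcard p q
      obtain ⟨-, -, q', hq', -, -, -, hy'⟩ := exists_bridge_ends_mem hbridge hadj (hM q)
        (fun d _ => hspread d) (by rintro rfl; exact hqA hpA) hdq hpA (hp d hdp)
      exact hq' (unique hy' hy)

theorem preconnected_induce_compl_completeGraph_five (c : Fin 5) :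
    ((completeGraph (Fin 5)).induce {c}ᶜ).Preconnected := by
  rw [preconnected_induce_iff_exists_adj]
  intro A u hu w hw huA hwA
  exact ⟨u, hu, w, hw, huA, hwA, by rintro rfl; exact hwA huA⟩

theorem preconnected_induce_compl_completeBipartiteGraph_three (c : Fin 3 ⊕ Fin 3) :
    ((completeBipartiteGraph (Fin 3) (Fin 3)).induce {c}ᶜ).Preconnected := by
  have hdist : ∀ u w : Fin 3 ⊕ Fin 3, u ≠ c → w ≠ c →
      (u.isLeft ≠ w.isLeft) ∨ ∃ d, d ≠ c ∧ u.isLeft ≠ d.isLeft ∧ d.isLeft ≠ w.isLeft := by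
    revert c; decide
  have hadj : ∀ u w : Fin 3 ⊕ Fin 3, u.isLeft ≠ w.isLeft →
      (completeBipartiteGraph (Fin 3) (Fin 3)).Adj u w := by
    rintro (u | u) (w | w) <;> simp
  rw [preconnected_induce_iff_exists_adj]
  intro A u hu w hw huA hwA
  rcases hdist u w hu hw with huw | ⟨d, hd, hud, hdw⟩
  · exact ⟨u, hu, w, hw, huA, hwA, hadj _ _ huw⟩
  by_cases hdA : d ∈ A
  · exact ⟨d, hd, w, hw, hdA, hwA, hadj _ _ hdw⟩
  · exact ⟨u, hu, d, hd, huA, hdA, hadj _ _ hud⟩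

theorem isPlanar_of_bridge (hbridge : ∀ u ∈ A, ∀ v ∉ A, G.Adj u v → u = x ∧ v = y)
    (hA : IsPlanar (G.induce A)) (hA' : IsPlanar (G.induce Aᶜ)) : IsPlanar G :=
  ⟨not_isMinor_of_bridge preconnected_induce_compl_completeGraph_five (by decide) hbridge
      hA.1 hA'.1,
    not_isMinor_of_bridge preconnected_induce_compl_completeBipartiteGraph_three (by decide) hbridge
      hA.2 hA'.2⟩

end Bridge

/-! ### Sparsity of planar graphs -/

section Sparsity

variable {V : Type*} {G : SimpleGraph V} {u v : V}

theorem spanningCoe_induce_adj {A : Set V} :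
    (G.induce A).spanningCoe.Adj u v ↔ u ∈ A ∧ v ∈ A ∧ G.Adj u v := by
  simp [map_adj, and_left_comm]

theorem isMinor_completeGraph_one [Nonempty V] : IsMinor (completeGraph (Fin 1)) G := by
  obtain ⟨x⟩ := ‹Nonempty V›
  refine ⟨fun _ => {x}, fun _ => (connected_iff _).2
    ⟨preconnected_induce_of_subsingleton Set.subsingleton_singleton, ⟨⟨x, rfl⟩⟩⟩,
    fun a b hab => absurd (Subsingleton.elim a b) hab,
    fun a b hab => absurd (Subsingleton.elim a b) hab.ne⟩

theorem isMinor_completeGraph_succ_of_neighborSet {r : ℕ}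
    (h : IsMinor (completeGraph (Fin r)) (G.induce (G.neighborSet v))) :
    IsMinor (completeGraph (Fin (r + 1))) G := by
  obtain ⟨f, hconn, hdisj, hadj⟩ := h
  have connected_image : ∀ a, (G.induce (Subtype.val '' f a)).Connected := fun a => by
    let φ : (G.induce (G.neighborSet v)).induce (f a) →g G.induce (Subtype.val '' f a) :=
      ⟨fun z => ⟨z.1, z, z.2, rfl⟩, fun h => h⟩
    refine (hconn a).map φ ?_
    rintro ⟨_, z, hz, rfl⟩
    exact ⟨⟨z, hz⟩, rfl⟩
  have exists_adj : ∀ a, ∃ w ∈ Subtype.val '' f a, G.Adj v w := fun a => by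
    obtain ⟨w⟩ := (hconn a).nonempty
    exact ⟨w, ⟨w, w.2, rfl⟩, w.1.2⟩
  refine ⟨Fin.cons {v} fun a => Subtype.val '' f a, Fin.forall_fin_succ.2 ⟨?_, connected_image⟩,
    Fin.forall_fin_succ.2 ⟨Fin.forall_fin_succ.2 ⟨?_, fun b _ => ?_⟩,
      fun a => Fin.forall_fin_succ.2 ⟨fun _ => ?_, fun b hab => ?_⟩⟩,
    Fin.forall_fin_succ.2 ⟨Fin.forall_fin_succ.2 ⟨?_, fun b _ => ?_⟩,
      fun a => Fin.forall_fin_succ.2 ⟨fun _ => ?_, fun b hab => ?_⟩⟩⟩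
  · exact (connected_iff _).2
      ⟨preconnected_induce_of_subsingleton Set.subsingleton_singleton, ⟨⟨v, rfl⟩⟩⟩
  · exact fun h => absurd rfl h
  · simp
  · simp
  · exact (Set.disjoint_image_iff Subtype.val_injective).2
      (hdisj a b fun h => hab (congrArg Fin.succ h))
  · exact fun h => absurd rfl h.ne
  · exact ⟨v, rfl, exists_adj b⟩
  · obtain ⟨w, hw, hvw⟩ := exists_adj a
    exact ⟨w, hw, v, rfl, hvw.symm⟩
  · obtain ⟨x, hx, y, hy, hxy⟩ := hadj a b fun h => hab.ne (congrArg Fin.succ h)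
    exact ⟨x, ⟨x, hx, rfl⟩, y, ⟨y, hy, rfl⟩, hxy⟩

/-- The contraction of the edge `uv` to the vertex `v`; the vertex `u` is left isolated. -/
noncomputable def contractEdge (G : SimpleGraph V) (u v : V) : SimpleGraph V :=
  contract G fun w => some (if w = u then v else w)

theorem isMinor_of_contractEdge (huv : G.Adj u v) {α : Type*} {M : SimpleGraph α}
    (hM : ∀ a, ∃ b, M.Adj a b) (h : IsMinor M (contractEdge G u v)) : IsMinor M G := by
  refine isMinor_of_contract hM _ (fun a => ?_) h
  by_cases hav : a = v
  · have hfibre : {w | some (if w = u then v else w) = some a} = {u, v} := by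
      ext w
      by_cases hw : w = u <;> simp [hw, hav]
    rw [hfibre]
    exact (induce_pair_connected_of_adj huv).preconnected
  · refine preconnected_induce_of_subsingleton fun x hx y hy => ?_
    simp only [Option.some.injEq, Set.mem_ofPred_eq] at hx hy
    grind

variable [Fintype V]

/-- The number of ordered pairs of adjacent vertices, i.e. twice the number of edges. -/
noncomputable def dartCount (G : SimpleGraph V) : ℕ := ∑ u, G.degree u

theorem dartCount_eq_two_mul_edgeCount (G : SimpleGraph V) : dartCount G = 2 * edgeCount G := by
  rw [dartCount, sum_degrees_eq_twice_card_edges, edgeCount, ← coe_edgeFinset,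
    Set.ncard_coe_finset]

theorem dartCount_eq_card (G : SimpleGraph V) :
    dartCount G = #{p : V × V | G.Adj p.1 p.2} := by
  rw [dartCount, card_filter, Fintype.sum_prod_type]
  simp [← card_neighborFinset_eq_degree, neighborFinset_eq_filter]

theorem dartCount_strictMono : StrictMono (dartCount (V := V)) := fun G G' h => by
  rw [dartCount_eq_two_mul_edgeCount, dartCount_eq_two_mul_edgeCount]
  have := Set.ncard_lt_ncard (edgeSet_ssubset_edgeSet.2 h)
  simp only [edgeCount]
  omega

/-- The projection of the darts is injective except for the two directions of `uv` and for the pairs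
of darts joining `u` and `v` to a common neighbour. -/
theorem dartCount_le_contractEdge (G : SimpleGraph V) (u v : V) :
    dartCount G ≤ dartCount (contractEdge G u v) +
      2 * #(G.neighborFinset u ∩ G.neighborFinset v) + 2 := by
  set C := G.neighborFinset u ∩ G.neighborFinset v with hC
  set lost : Finset (V × V) := {u} ×ˢ insert v C ∪ insert v C ×ˢ {u} with hlost
  have card_lost : #lost ≤ (#C + 1) + (#C + 1) := by
    refine (card_union_le _ _).trans ?_
    rw [card_product, card_product, card_singleton, one_mul, mul_one]
    exact Nat.add_le_add (card_insert_le v C) (card_insert_le v C)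
  have mem_kept : ∀ p : V × V, p ∈ ({p : V × V | G.Adj p.1 p.2} : Finset _) \ lost ↔
      G.Adj p.1 p.2 ∧ ¬ (p.1 = u ∧ (p.2 = v ∨ p.2 ∈ C)) ∧ ¬ (p.2 = u ∧ (p.1 = v ∨ p.1 ∈ C)) := by
    intro p
    simp only [hlost, Finset.mem_sdiff, mem_filter, mem_univ, true_and, mem_union, mem_product,
      mem_singleton, mem_insert]
    tauto
  have card_kept : #(({p : V × V | G.Adj p.1 p.2} : Finset _) \ lost) ≤
      dartCount (contractEdge G u v) := by
    rw [dartCount_eq_card]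
    refine card_le_card_of_injOn
      (fun p => (if p.1 = u then v else p.1, if p.2 = u then v else p.2)) ?_ ?_
    · rintro ⟨a, b⟩ hab
      obtain ⟨hadj, hab⟩ := (mem_kept _).1 hab
      have := hadj.ne
      simp only [coe_filter, mem_univ, true_and, Set.mem_ofPred_eq]
      exact ⟨by grind, a, b, rfl, rfl, hadj⟩
    · rintro ⟨a, b⟩ hab ⟨c, d⟩ hcd h
      simp only [mem_coe, mem_kept, hC, mem_inter, mem_neighborFinset, Prod.mk.injEq] at hab hcd h
      have := hab.1.symm
      have := hcd.1.symm
      have := hab.1.ne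
      have := hcd.1.ne
      grind
  have := card_le_card_sdiff_add_card (s := {p : V × V | G.Adj p.1 p.2}) (t := lost)
  rw [dartCount_eq_card G]
  omega

end Sparsity

/-- Mader's argument: an edge in few triangles is contracted, and if there is none, then the
neighbourhood of any vertex spans a graph of large minimum degree. -/
theorem isMinor_completeGraph_of_le_dartCount (r : ℕ) :
    ∀ {V : Type w} [Fintype V] {G : SimpleGraph V} {A : Finset V}, A.Nonempty →
      (∀ u v, G.Adj u v → u ∈ A) → 2 ^ r * #A ≤ dartCount G →
        IsMinor (completeGraph (Fin (r + 1))) G := by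
  induction r with
  | zero =>
    intro V _ G A hA _ _
    have : Nonempty V := hA.to_type
    exact isMinor_completeGraph_one
  | succ r ihr =>
    intro V _ G A hA hGA hle
    induction hk : #A generalizing G A with
    | zero => simp_all
    | succ k ihk =>
      by_cases hex : ∃ u v, G.Adj u v ∧ #(G.neighborFinset u ∩ G.neighborFinset v) + 1 ≤ 2 ^ r
      · obtain ⟨u, v, huv, hcommon⟩ := hex
        have hcard := card_erase_of_mem (hGA u v huv)
        have hvA : v ∈ A.erase u := mem_erase.2 ⟨huv.ne', hGA v u huv.symm⟩
        refine isMinor_of_contractEdge huv (fun a => (exists_ne a).imp fun _ => Ne.symm)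
          (ihk ⟨v, hvA⟩ ?_ ?_ (by omega))
        · rintro p q ⟨-, p', q', hp, -, hadj⟩
          have := hGA p' q' hadj
          grind
        · have hcontract := dartCount_le_contractEdge G u v
          rw [show #A = #(A.erase u) + 1 by omega, mul_add, pow_succ] at hle
          rw [pow_succ]
          omega
      · push Not at hex
        have hpos : 0 < dartCount G := lt_of_lt_of_le (by rw [hk]; positivity) hle
        obtain ⟨v, -, hv⟩ := exists_ne_zero_of_sum_ne_zero hpos.ne'
        obtain ⟨x, hvx⟩ := (G.degree_pos_iff_exists_adj v).1 (Nat.pos_of_ne_zero hv)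
        refine isMinor_completeGraph_succ_of_neighborSet (v := v)
          (ihr (A := univ) ⟨⟨x, hvx⟩, mem_univ _⟩ (fun u _ _ => mem_univ u) ?_)
        rw [mul_comm, ← smul_eq_mul]
        refine card_nsmul_le_sum _ _ _ fun z _ => (Nat.lt_succ_iff.1 (hex v z z.2)).trans ?_
        rw [← card_neighborFinset_eq_degree]
        refine card_le_card_of_injOn
          (fun y => if hy : G.Adj v y then ⟨y, hy⟩ else z) (fun y hy => ?_) fun y hy y' hy' h => ?_
        · simp_all
        · simp_all [Subtype.ext_iff]

section Planar

variable {V : Type*} [Fintype V] {G : SimpleGraph V}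

theorem _root_.IsPlanar.dartCount_le (h : IsPlanar G) {A : Finset V}
    (hGA : ∀ u v, G.Adj u v → u ∈ A) : dartCount G ≤ 16 * #A := by
  by_contra! hlt
  obtain rfl | hA := A.eq_empty_or_nonempty
  · obtain ⟨v, -, hv⟩ := exists_ne_zero_of_sum_ne_zero (Nat.zero_lt_of_lt hlt).ne'
    obtain ⟨w, hw⟩ := (G.degree_pos_iff_exists_adj v).1 (Nat.pos_of_ne_zero hv)
    simpa using hGA v w hw
  · exact h.1 (isMinor_completeGraph_of_le_dartCount 4 hA hGA hlt.le)

theorem _root_.IsPlanar.exists_card_neighborFinset_inter_le (h : IsPlanar G) {A : Finset V}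
    (hA : A.Nonempty) : ∃ v ∈ A, #(G.neighborFinset v ∩ A) ≤ 16 := by
  obtain ⟨L, hLG, hL⟩ : ∃ L ≤ G, ∀ u v, L.Adj u v ↔ u ∈ A ∧ v ∈ A ∧ G.Adj u v :=
    ⟨_, spanningCoe_induce_le G A, fun _ _ => spanningCoe_induce_adj⟩
  by_contra! hcon
  have hupper : dartCount L ≤ 16 * #A :=
    (h.mono hLG).dartCount_le fun u v huv => ((hL u v).1 huv).1
  have hlower : #A • 17 ≤ dartCount L := by
    refine (card_nsmul_le_sum A _ 17 fun v hv => ?_).trans (sum_le_sum_of_subset A.subset_univ)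
    refine (hcon v hv).trans_le (card_le_card fun w hw => ?_)
    rw [mem_inter, mem_neighborFinset] at hw
    simpa [hL] using ⟨hv, hw.2, hw.1⟩
  have := hA.card_pos
  rw [smul_eq_mul] at hlower
  omega

end Planar

/-! ### Planar graphs with a universal vertex and a prescribed number of edges -/

section Blob

theorem lt_of_ordConnected_of_disjoint {β : Type*} [LinearOrder β] {S T : Set β}
    (hS : S.OrdConnected) (hT : T.OrdConnected) (hST : Disjoint S T) {x y : β} (hx : x ∈ S)
    (hy : y ∈ T) (hxy : x < y) {u v : β} (hu : u ∈ S) (hv : v ∈ T) : u < v := by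
  have hdisj := Set.disjoint_left.1 hST
  by_contra! hvu
  rcases le_total v x with hvx | hxv
  · exact hdisj hx (hT.out hv hy ⟨hvx, hxy.le⟩)
  · exact hdisj (hS.out hx hu ⟨hxv, hvu⟩) hv

/-- The join of an edge `{0, 1}` with a path on the remaining vertices, a nearly maximal planar
graph in which `0` is adjacent to every other vertex. -/
def edgeJoinPath (σ : ℕ) : SimpleGraph (Fin σ) where
  Adj a b := a ≠ b ∧ (a.val ≤ 1 ∨ b.val ≤ 1 ∨ a.val + 1 = b.val ∨ b.val + 1 = a.val)
  symm := ⟨fun _ _ h => ⟨h.1.symm, by tauto⟩⟩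
  loopless := ⟨fun _ h => h.1 rfl⟩

theorem ordConnected_of_preconnected_edgeJoinPath {σ : ℕ} {S : Set (Fin σ)}
    (hS : ((edgeJoinPath σ).induce S).Preconnected) (hhub : ∀ u ∈ S, 1 < u.val) :
    S.OrdConnected := by
  refine ⟨fun x hx y hy z ⟨hxz, hzy⟩ => ?_⟩
  obtain rfl | hxz := hxz.eq_or_lt
  · exact hx
  obtain ⟨p, hp, q, hq, hpz, hqz, -, hpq⟩ := preconnected_induce_iff_exists_adj.1 hS {v | v < z}
    x hx y hy hxz hzy.not_gt
  have := hhub p hp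
  have := hhub q hq
  simp only [Set.mem_ofPred_eq, Fin.lt_def, not_lt] at hpz hqz
  rwa [show z = q from Fin.ext (by omega)]

theorem card_le_card_avoiding_add_two {α V : Type*} [Fintype α] (f : α → Set V)
    (hdisj : ∀ a b, a ≠ b → Disjoint (f a) (f b)) (x y : V) :
    Fintype.card α ≤ #{a | x ∉ f a ∧ y ∉ f a} + 2 := by
  have card_containing : ∀ z, #{a | z ∈ f a} ≤ 1 := by
    intro z
    rw [card_le_one]
    intro a ha b hb
    by_contra hab
    exact Set.disjoint_left.1 (hdisj a b hab) (mem_filter.1 ha).2 (mem_filter.1 hb).2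
  have hcover : (univ : Finset α) ⊆
      ({a | x ∉ f a ∧ y ∉ f a} : Finset α) ∪
        (({a | x ∈ f a} : Finset α) ∪ ({a | y ∈ f a} : Finset α)) := by
    intro a _
    simp only [mem_union, mem_filter, mem_univ, true_and]
    tauto
  calc Fintype.card α ≤ _ := card_le_card hcover
    _ ≤ _ := (card_union_le _ _).trans (Nat.add_le_add_left (card_union_le _ _) _)
    _ ≤ _ := Nat.add_le_add_left (Nat.add_le_add (card_containing x) (card_containing y)) _

theorem exists_strictMono_comp {α β : Type*} [LinearOrder β] {p : α → β}
    (hp : Function.Injective p) {R : Finset α} {r : ℕ} (hr : r ≤ #R) :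
    ∃ g : Fin r → α, (∀ i, g i ∈ R) ∧ StrictMono fun i => p (g i) := by
  obtain ⟨R', hR'R, hR'⟩ := exists_subset_card_eq hr
  have hcard : #(R'.image p) = r := by rw [card_image_of_injective _ hp, hR']
  choose g hg hge using fun i => mem_image.1 (orderEmbOfFin_mem (R'.image p) hcard i)
  refine ⟨g, fun i => hR'R (hg i), ?_⟩
  simp only [hge]
  exact (orderEmbOfFin _ hcard).strictMono

/-- Branch sets avoiding the ends of the edge are intervals of the path, and only consecutive ones
are joined by an edge. -/
theorem exists_nonadjacent_branchSets {α : Type*} [Fintype α] {σ : ℕ} (f : α → Set (Fin σ))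
    (hconn : ∀ a, ((edgeJoinPath σ).induce (f a)).Connected)
    (hdisj : ∀ a b, a ≠ b → Disjoint (f a) (f b)) {r : ℕ} (hr : r + 2 ≤ Fintype.card α) :
    ∃ g : Fin r → α, Function.Injective g ∧ ∀ i j : Fin r, i.val + 2 ≤ j.val →
      ¬ ∃ u ∈ f (g i), ∃ v ∈ f (g j), (edgeJoinPath σ).Adj u v := by
  choose p hp using fun a => Set.nonempty_coe_sort.1 (hconn a).nonempty
  have p_injective : Function.Injective p := fun a b hab => by
    by_contra hne
    exact Set.disjoint_left.1 (hdisj a b hne) (hp a) (hab ▸ hp b)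
  let R : Finset α := {a | ∀ u ∈ f a, 1 < u.val}
  have card_R : r ≤ #R := by
    obtain hσ | hσ := le_or_gt σ 1
    · have : Subsingleton (Fin σ) := Fin.subsingleton_iff_le_one.2 hσ
      have := Fintype.card_le_one_iff_subsingleton.2 p_injective.subsingleton
      omega
    · have hcard := card_le_card_avoiding_add_two f hdisj ⟨0, by omega⟩ ⟨1, hσ⟩
      refine (Nat.le_of_add_le_add_right (hr.trans hcard)).trans (card_le_card fun a ha => ?_)
      simp only [R, mem_filter, mem_univ, true_and] at ha ⊢
      intro u hu
      by_contra! h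
      rcases Nat.le_one_iff_eq_zero_or_eq_one.1 h with h | h
      · exact ha.1 ((Fin.ext h : u = ⟨0, by omega⟩) ▸ hu)
      · exact ha.2 ((Fin.ext h : u = ⟨1, hσ⟩) ▸ hu)
  obtain ⟨g, hgR, hg⟩ := exists_strictMono_comp p_injective card_R
  have avoids : ∀ i, ∀ u ∈ f (g i), 1 < u.val := fun i => (mem_filter.1 (hgR i)).2
  have g_injective : Function.Injective g := fun i j hij => hg.injective (congrArg p hij)
  have ordConnected : ∀ i, (f (g i)).OrdConnected := fun i =>
    ordConnected_of_preconnected_edgeJoinPath (hconn _).preconnected (avoids i)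
  have ordered : ∀ i j, i < j → ∀ u ∈ f (g i), ∀ w ∈ f (g j), u < w := fun i j hij u hu w hw =>
    lt_of_ordConnected_of_disjoint (ordConnected i) (ordConnected j)
      (hdisj _ _ (g_injective.ne hij.ne)) (hp _) (hp _) (hg hij) hu hw
  refine ⟨g, g_injective, ?_⟩
  rintro i j hij ⟨u, hu, v, hv, -, huv⟩
  let k : Fin r := ⟨i.val + 1, by omega⟩
  have huk := ordered i k (Fin.lt_def.2 (Nat.lt_succ_self _)) u hu _ (hp (g k))
  have hkv := ordered k j (Fin.lt_def.2 hij) _ (hp (g k)) v hv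
  have := avoids i u hu
  have := avoids j v hv
  rw [Fin.lt_def] at huk hkv
  omega

theorem not_isMinor_completeGraph_five_edgeJoinPath (σ : ℕ) :
    ¬ IsMinor (completeGraph (Fin 5)) (edgeJoinPath σ) := by
  rintro ⟨f, hconn, hdisj, hadj⟩
  obtain ⟨g, hg, hg'⟩ := exists_nonadjacent_branchSets f hconn hdisj (r := 3) (by simp)
  exact hg' 0 2 (by simp) (hadj _ _ (hg.ne (by decide)))

/-- Four branch sets, of which only consecutive ones are adjacent, would have to lie on the same
side of `K₃,₃`. -/
theorem not_isMinor_completeBipartiteGraph_three_edgeJoinPath (σ : ℕ) :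
    ¬ IsMinor (completeBipartiteGraph (Fin 3) (Fin 3)) (edgeJoinPath σ) := by
  rintro ⟨f, hconn, hdisj, hadj⟩
  obtain ⟨g, hg, hg'⟩ := exists_nonadjacent_branchSets f hconn hdisj (r := 4) (by simp)
  have same_side : ∀ i j : Fin 4, i.val + 2 ≤ j.val → (g i).isLeft = (g j).isLeft := by
    intro i j hij
    by_contra hne
    refine hg' i j hij (hadj _ _ ?_)
    rw [completeBipartiteGraph_adj]
    cases hi : g i <;> cases hj : g j <;> simp_all
  have all_same_side : ∀ i, (g i).isLeft = (g 0).isLeft := by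
    have h02 := same_side 0 2 (by simp)
    have h03 := same_side 0 3 (by simp)
    have h13 := same_side 1 3 (by simp)
    intro i
    fin_cases i
    exacts [rfl, h13.trans h03.symm, h02.symm, h03.symm]
  have hinj : Function.Injective (fun i => Sum.elim id id (g i) : Fin 4 → Fin 3) := by
    intro i j hij
    apply hg
    have hside := (all_same_side i).trans (all_same_side j).symm
    cases hi : g i <;> cases hj : g j <;> simp_all
  simpa using Fintype.card_le_of_injective _ hinj

theorem isPlanar_edgeJoinPath (σ : ℕ) : IsPlanar (edgeJoinPath σ) :=
  ⟨not_isMinor_completeGraph_five_edgeJoinPath σ,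
    not_isMinor_completeBipartiteGraph_three_edgeJoinPath σ⟩

/-- Every vertex `v ≥ 3` has the three smaller neighbours `0`, `1` and `v - 1`. -/
theorem le_edgeCount_edgeJoinPath (σ : ℕ) : 3 * (σ - 3) ≤ edgeCount (edgeJoinPath σ) := by
  have smaller_lt : ∀ (k : Fin 3) (i : Fin (σ - 3)), ![0, 1, i.val + 2] k < i + 3 := by
    intro k i
    fin_cases k <;> simp
  let e : Fin 3 × Fin (σ - 3) → Sym2 (Fin σ) := fun p =>
    s(⟨![0, 1, p.2.val + 2] p.1, (smaller_lt _ _).trans (by omega)⟩, ⟨p.2 + 3, by omega⟩)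
  have he : ∀ p, e p ∈ (edgeJoinPath σ).edgeFinset := by
    rintro ⟨k, i⟩
    refine mem_edgeFinset.2 ⟨fun h => (smaller_lt k i).ne (congrArg Fin.val h), ?_⟩
    fin_cases k <;> simp
  have e_injective : Function.Injective e := by
    rintro ⟨k, i⟩ ⟨k', i'⟩ h
    have := smaller_lt k i
    have := smaller_lt k' i'
    simp only [e, Sym2.eq_iff, Fin.ext_iff] at h
    obtain rfl : i = i' := Fin.ext (by omega)
    fin_cases k <;> fin_cases k' <;> simp at h ⊢
  calc 3 * (σ - 3) = #(univ.image e) := by simp [card_image_of_injective _ e_injective]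
    _ ≤ #(edgeJoinPath σ).edgeFinset := card_le_card (image_subset_iff.2 fun p _ => he p)
    _ = edgeCount (edgeJoinPath σ) := by rw [edgeCount, ← coe_edgeFinset, Set.ncard_coe_finset]

theorem exists_edgeCount_eq {V : Type*} [Finite V] {G₁ G₂ : SimpleGraph V} (hle : G₁ ≤ G₂)
    {m : ℕ} (h₁ : edgeCount G₁ ≤ m) (h₂ : m ≤ edgeCount G₂) :
    ∃ G, G₁ ≤ G ∧ G ≤ G₂ ∧ edgeCount G = m := by
  obtain ⟨E, hE₁, hE₂, hE⟩ :=
    Set.exists_subsuperset_card_eq (edgeSet_mono hle) h₁ h₂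
  have hedge : (fromEdgeSet E).edgeSet = E := by
    rw [edgeSet_fromEdgeSet, sdiff_eq_left, Set.disjoint_left]
    exact fun e he => G₂.not_isDiag_of_mem_edgeSet (hE₂ he)
  refine ⟨fromEdgeSet E, ?_, ?_, ?_⟩
  · rwa [← edgeSet_subset_edgeSet, hedge]
  · rwa [← edgeSet_subset_edgeSet, hedge]
  · rw [edgeCount, hedge, hE]

theorem exists_isPlanar_isUniversal {σ μ : ℕ} (x : Fin σ) (hx : x.val = 0) (h₁ : σ ≤ μ + 1)
    (h₂ : μ ≤ 3 * (σ - 3)) :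
    ∃ G : SimpleGraph (Fin σ), IsPlanar G ∧ edgeCount G = μ ∧ G.IsUniversal x := by
  have hstar : edgeCount (starGraph x) ≤ μ := by
    have := (isTree_starGraph x).card_edgeFinset
    rw [edgeCount, ← coe_edgeFinset, Set.ncard_coe_finset]
    simp at this
    omega
  have hle : starGraph x ≤ edgeJoinPath σ := by
    intro a b hab
    obtain ⟨hne, hab⟩ := starGraph_adj.1 hab
    refine ⟨hne, ?_⟩
    rcases hab with rfl | rfl <;> omega
  obtain ⟨G, hxG, hG, hμ⟩ := exists_edgeCount_eq hle hstar (h₂.trans (le_edgeCount_edgeJoinPath σ))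
  exact ⟨G, (isPlanar_edgeJoinPath σ).mono hG, hμ, fun v hv => hxG (starGraph_center_adj hv)⟩

end Blob

/-! ### Hyperfiniteness of planar graphs of bounded degree -/

/-- A uniformly random `S` contains `φ a` but not `a` with probability `1 / 4`. -/
theorem exists_sum_le_four_mul_sum {ι : Type*} [Fintype ι] (φ : ι → ι) (M : ι → ℕ)
    (hM : ∀ a, φ a = a → M a = 0) :
    ∃ S : Finset ι, ∑ a, M a ≤ 4 * ∑ a with a ∉ S ∧ φ a ∈ S, M a := by
  have count (a : ι) (ha : φ a ≠ a) :
      4 * #{S : Finset ι | a ∉ S ∧ φ a ∈ S} = 2 ^ Fintype.card ι := by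
    have hIcc : ({S : Finset ι | a ∉ S ∧ φ a ∈ S} : Finset _) = Icc {φ a} {a}ᶜ := by
      ext S
      simp [subset_compl_singleton, and_comm]
    have htwo : 2 ≤ Fintype.card ι := by simpa [ha] using card_le_univ {φ a, a}
    rw [hIcc, card_Icc_finset (by simpa using Ne.symm ha), card_compl, card_singleton,
      card_singleton, show Fintype.card ι = Fintype.card ι - 1 - 1 + 2 by omega, pow_add]
    simp [mul_comm]
  have average : ∑ _S : Finset ι, ∑ a, M a ≤
      ∑ S : Finset ι, 4 * ∑ a with a ∉ S ∧ φ a ∈ S, M a := by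
    calc ∑ _S : Finset ι, ∑ a, M a = ∑ a, 2 ^ Fintype.card ι * M a := by
          rw [sum_const, card_univ, Fintype.card_finset, smul_eq_mul, mul_sum]
      _ ≤ ∑ a, 4 * ∑ S : Finset ι, (if a ∉ S ∧ φ a ∈ S then M a else 0) := by
          refine sum_le_sum fun a _ => ?_
          rw [← sum_filter, sum_const, smul_eq_mul, ← mul_assoc]
          by_cases ha : φ a = a
          · simp [hM a ha]
          · rw [count a ha]
      _ = ∑ S : Finset ι, 4 * ∑ a with a ∉ S ∧ φ a ∈ S, M a := by
          simp only [sum_filter]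
          rw [← mul_sum, ← mul_sum, sum_comm]
  obtain ⟨S, -, hS⟩ := exists_le_of_sum_le univ_nonempty average
  exact ⟨S, hS⟩

theorem _root_.IsPlanar.sum_weight_le {ι : Type*} [Finite ι] {G : SimpleGraph ι}
    (hG : IsPlanar G) {w : ι → ι → ℕ} (hsymm : ∀ a b, w a b = w b a)
    (hw : ∀ a b, w a b ≠ 0 → G.Adj a b) {M : ι → ℕ}
    (hM : ∀ a b, w a b ≤ M a) (A : Finset ι) :
    ∑ a ∈ A, ∑ b ∈ A, w a b ≤ 32 * ∑ a ∈ A, M a := by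
  cases nonempty_fintype ι
  induction A using Finset.strongInduction with
  | H A ih =>
    obtain rfl | hA := A.eq_empty_or_nonempty
    · simp
    obtain ⟨v, hv, hdeg⟩ := hG.exists_card_neighborFinset_inter_le hA
    have hrow : ∑ b ∈ A.erase v, w v b ≤ 16 * M v := by
      calc ∑ b ∈ A.erase v, w v b ≤ ∑ b ∈ G.neighborFinset v ∩ A, w v b := by
            refine sum_le_sum_of_ne_zero fun b hb hne => ?_
            rw [mem_inter, mem_neighborFinset]
            exact ⟨hw v b hne, mem_of_mem_erase hb⟩
        _ ≤ #(G.neighborFinset v ∩ A) * M v := sum_le_card_nsmul _ _ _ fun b _ => hM v b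
        _ ≤ 16 * M v := Nat.mul_le_mul_right _ hdeg
    have hdiag : w v v = 0 := by_contra fun h => (hw v v h).ne rfl
    have hrest := ih _ (erase_ssubset hv)
    rw [← insert_erase hv]
    simp only [sum_insert (notMem_erase v A), sum_add_distrib, hdiag, hsymm _ v]
    omega

section Pieces

variable {V ι : Type*} [Fintype V] (L : SimpleGraph V) (pc : V → ι)

/-- The ordered pairs of adjacent vertices lying in different pieces, where `pc` assigns to every
vertex the index of its piece. -/
noncomputable def crossingDarts : Finset (V × V) := {p | L.Adj p.1 p.2 ∧ pc p.1 ≠ pc p.2}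

/-- The number of crossing darts from the piece `a` to the piece `b`. -/
noncomputable def crossingWeight (a b : ι) : ℕ :=
  #{p ∈ crossingDarts L pc | pc p.1 = a ∧ pc p.2 = b}

variable {L pc}

theorem mem_crossingDarts {p : V × V} :
    p ∈ crossingDarts L pc ↔ L.Adj p.1 p.2 ∧ pc p.1 ≠ pc p.2 := by
  simp [crossingDarts]

theorem crossingWeight_comm (a b : ι) : crossingWeight L pc a b = crossingWeight L pc b a := by
  refine card_nbij' Prod.swap Prod.swap ?_ ?_ ?_ ?_ <;>
    simp +contextual [Set.MapsTo, Set.LeftInvOn, mem_crossingDarts, adj_comm, eq_comm]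

theorem exists_adj_of_crossingWeight_ne_zero {a b : ι} (h : crossingWeight L pc a b ≠ 0) :
    a ≠ b ∧ ∃ u v, L.Adj u v ∧ pc u = a ∧ pc v = b := by
  obtain ⟨⟨u, v⟩, huv⟩ := card_ne_zero.1 h
  obtain ⟨hcross, rfl, rfl⟩ := mem_filter.1 huv
  obtain ⟨hadj, hne⟩ := mem_crossingDarts.1 hcross
  exact ⟨hne, u, v, hadj, rfl, rfl⟩

theorem sum_sum_crossingWeight [Fintype ι] :
    ∑ a, ∑ b, crossingWeight L pc a b = #(crossingDarts L pc) := by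
  rw [← Fintype.sum_prod_type', card_eq_sum_card_fiberwise (f := fun p => (pc p.1, pc p.2))
    (t := univ) fun _ _ => by simp]
  simp [crossingWeight, Prod.ext_iff]

theorem card_crossingDarts_le_dartCount : #(crossingDarts L pc) ≤ dartCount L := by
  rw [dartCount_eq_card]
  exact card_le_card fun p hp => by simpa using (mem_crossingDarts.1 hp).1

theorem _root_.IsPlanar.card_crossingDarts_le [Fintype ι] (hL : IsPlanar L)
    (hpc : ∀ a, (L.induce {u | pc u = a}).Preconnected) {M : ι → ℕ}
    (hM : ∀ a b, crossingWeight L pc a b ≤ M a) : #(crossingDarts L pc) ≤ 32 * ∑ a, M a := by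
  have hquot : IsPlanar (contract L fun u => some (pc u)) := hL.contract _ fun a => by
    have hfibre : {u | some (pc u) = some a} = {u | pc u = a} := Set.ext fun u => Option.some_inj
    rw [hfibre]
    exact hpc a
  rw [← sum_sum_crossingWeight]
  refine hquot.sum_weight_le crossingWeight_comm (fun a b hab => ?_) hM univ
  obtain ⟨hne, u, v, hadj, rfl, rfl⟩ := exists_adj_of_crossingWeight_ne_zero hab
  exact ⟨hne, u, v, rfl, rfl, hadj⟩

/-! Merging: every piece `a ∈ J` is absorbed into the piece `φ a ∉ J`. -/

section Merge

variable {J : Finset ι} {φ : ι → ι} (hJ : ∀ a ∈ J, φ a ∉ J)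

include hJ in
theorem card_crossingDarts_merge_add_le :
    #(crossingDarts L fun u => if pc u ∈ J then φ (pc u) else pc u) +
      ∑ a ∈ J, crossingWeight L pc a (φ a) ≤ #(crossingDarts L pc) := by
  set merged : Finset (V × V) := {p ∈ crossingDarts L pc | pc p.1 ∈ J ∧ pc p.2 = φ (pc p.1)}
  have hsum : ∑ a ∈ J, crossingWeight L pc a (φ a) = #merged := by
    rw [card_eq_sum_card_fiberwise (f := fun p => pc p.1) (t := J)
      fun p hp => (mem_filter.1 hp).2.1]
    refine sum_congr rfl fun a ha => congrArg card (ext fun p => ?_)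
    simp only [merged, mem_filter]
    grind
  rw [hsum, ← card_union_of_disjoint]
  · refine card_le_card (union_subset (fun p hp => ?_) (filter_subset _ _))
    rw [mem_crossingDarts] at hp ⊢
    exact ⟨hp.1, fun h => hp.2 (by rw [h])⟩
  · refine disjoint_left.2 fun p hp hp' => ?_
    obtain ⟨-, hmem, heq⟩ := mem_filter.1 hp'
    refine (mem_crossingDarts.1 hp).2 ?_
    rw [if_pos hmem, heq, if_neg (hJ _ hmem)]

variable (hadj : ∀ a ∈ J, ∃ u v, L.Adj u v ∧ pc u = a ∧ pc v = φ a)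

include hadj in
theorem card_fibre_merge_le {D K : ℕ} (hD : ∀ v, L.degree v ≤ D) (hK : ∀ a, #{u | pc u = a} ≤ K)
    (b : ι) :
    #{u | (if pc u ∈ J then φ (pc u) else pc u) = b} ≤ K + K * (D * K) := by
  have hsub : ({u | (if pc u ∈ J then φ (pc u) else pc u) = b} : Finset V) ⊆
      ({u | pc u = b} : Finset V) ∪ ({u | pc u = b} : Finset V).biUnion fun v =>
        (L.neighborFinset v).biUnion fun z => {u | pc u = pc z} := by
    intro u hu
    simp only [mem_filter, mem_univ, true_and, mem_union, mem_biUnion, mem_neighborFinset] at hu ⊢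
    split_ifs at hu with hm
    · obtain ⟨p, q, hpq, hp, hq⟩ := hadj _ hm
      exact Or.inr ⟨q, by rw [hq, hu], p, hpq.symm, hp.symm⟩
    · exact Or.inl hu
  refine (card_le_card hsub).trans ((card_union_le _ _).trans (Nat.add_le_add (hK b) ?_))
  refine (card_biUnion_le_card_mul _ _ (D * K) fun v _ => ?_).trans (Nat.mul_le_mul_right _ (hK b))
  exact (card_biUnion_le_card_mul _ _ K fun z _ => hK _).trans (Nat.mul_le_mul_right _ (hD v))

end Merge

end Pieces

theorem preconnected_fibre_merge {V ι : Type*} {L : SimpleGraph V} {pc : V → ι} {J : Finset ι}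
    {φ : ι → ι} (hJ : ∀ a ∈ J, φ a ∉ J)
    (hadj : ∀ a ∈ J, ∃ u v, L.Adj u v ∧ pc u = a ∧ pc v = φ a)
    (hpc : ∀ a, (L.induce {u | pc u = a}).Preconnected) (b : ι) :
    (L.induce {u | (if pc u ∈ J then φ (pc u) else pc u) = b}).Preconnected := by
  by_cases hb : b ∈ J
  · refine preconnected_induce_of_subsingleton fun u hu => ?_
    grind
  · have hfibre : {u | (if pc u ∈ J then φ (pc u) else pc u) = b} =
        {u | pc u = b} ∪ ⋃ a ∈ {a | a ∈ J ∧ φ a = b}, {u | pc u = a} := by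
      ext u
      simp only [Set.mem_union, Set.mem_iUnion, Set.mem_ofPred_eq, exists_prop]
      grind
    rw [hfibre]
    refine preconnected_induce_union_biUnion (hpc b) _ _ (fun a _ => hpc a) ?_
    rintro a ⟨ha, rfl⟩
    obtain ⟨u, v, huv, hu, hv⟩ := hadj a ha
    exact ⟨v, hv, u, hu, huv.symm⟩

/-- Absorbing pieces into the piece to which they send most darts. -/
theorem _root_.IsPlanar.exists_coarser_partition {V ι : Type*} [Fintype V] [Finite ι]
    {L : SimpleGraph V} (hL : IsPlanar L) {D K : ℕ} (hD : ∀ v, L.degree v ≤ D) {pc : V → ι}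
    (hpc : ∀ a, (L.induce {u | pc u = a}).Preconnected) (hK : ∀ a, #{u | pc u = a} ≤ K) :
    ∃ pc' : V → ι, (∀ a, (L.induce {u | pc' u = a}).Preconnected) ∧
      (∀ a, #{u | pc' u = a} ≤ K + K * (D * K)) ∧
      128 * #(crossingDarts L pc') ≤ 127 * #(crossingDarts L pc) := by
  cases nonempty_fintype ι
  have exists_heaviest (a : ι) : ∃ b, ∀ c, crossingWeight L pc a c ≤ crossingWeight L pc a b := by
    have : Nonempty ι := ⟨a⟩
    exact Finite.exists_max (crossingWeight L pc a)
  choose φ hφ using exists_heaviest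
  have hdiag (a : ι) (ha : φ a = a) : crossingWeight L pc a (φ a) = 0 :=
    by_contra fun h => (exists_adj_of_crossingWeight_ne_zero h).1 ha.symm
  have hheavy := hL.card_crossingDarts_le hpc hφ
  obtain ⟨S, hS⟩ := exists_sum_le_four_mul_sum φ (fun a => crossingWeight L pc a (φ a)) hdiag
  set J : Finset ι := {a | (a ∉ S ∧ φ a ∈ S) ∧ crossingWeight L pc a (φ a) ≠ 0}
  have hJ : ∀ a ∈ J, φ a ∉ J := by simp +contextual [J]
  have hadj : ∀ a ∈ J, ∃ u v, L.Adj u v ∧ pc u = a ∧ pc v = φ a := fun a ha =>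
    (exists_adj_of_crossingWeight_ne_zero (mem_filter.1 ha).2.2).2
  refine ⟨_, preconnected_fibre_merge hJ hadj hpc, card_fibre_merge_le hadj hD hK, ?_⟩
  have hdrop := card_crossingDarts_merge_add_le (L := L) (pc := pc) hJ
  have hsum : ∑ a ∈ J, crossingWeight L pc a (φ a) =
      ∑ a with a ∉ S ∧ φ a ∈ S, crossingWeight L pc a (φ a) := by
    rw [← sum_filter_ne_zero (s := {a | a ∉ S ∧ φ a ∈ S}), filter_filter]
  omega

theorem exists_hyperfinite_bound (D R : ℕ) : ∃ K : ℕ, ∀ {V : Type w} [Fintype V]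
    {L : SimpleGraph V}, IsPlanar L → (∀ v, L.degree v ≤ D) →
      ∃ pc : V → V, (∀ a, (L.induce {u | pc u = a}).Preconnected) ∧ (∀ a, #{u | pc u = a} ≤ K) ∧
        128 ^ R * #(crossingDarts L pc) ≤ 127 ^ R * dartCount L := by
  induction R with
  | zero =>
    refine ⟨1, fun {V} _ L _ _ => ⟨id, fun a => ?_, fun a => ?_, ?_⟩⟩
    · exact preconnected_induce_of_subsingleton (by simp)
    · exact card_le_one.2 (by simp +contextual)
    · simpa using card_crossingDarts_le_dartCount
  | succ R ih =>
    obtain ⟨K, hK⟩ := ih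
    refine ⟨K + K * (D * K), fun {V} _ L hL hD => ?_⟩
    obtain ⟨pc, hconn, hcard, hcross⟩ := hK hL hD
    obtain ⟨pc', hconn', hcard', hcross'⟩ := hL.exists_coarser_partition hD hconn hcard
    refine ⟨pc', hconn', hcard', ?_⟩
    rw [pow_succ, pow_succ, mul_right_comm]
    nlinarith [Nat.mul_le_mul_left (128 ^ R) hcross', Nat.mul_le_mul_left 127 hcross]

/-! ### Twins -/

theorem _root_.IsPlanar.card_cliques_le {V : Type*} [Finite V] {G : SimpleGraph V}
    (hG : IsPlanar G) (X : Finset V) :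
    #(X.powerset.filter fun S : Finset V => G.IsClique (S : Set V)) ≤ 2 ^ 16 * #X + 1 := by
  cases nonempty_fintype V
  induction X using Finset.strongInduction with
  | H X ih =>
    obtain rfl | hX := X.eq_empty_or_nonempty
    · exact (card_filter_le _ _).trans (by simp)
    obtain ⟨v, hv, hdeg⟩ := hG.exists_card_neighborFinset_inter_le hX
    have hsub : (X.powerset.filter fun S : Finset V => G.IsClique (S : Set V)) ⊆
        ((X.erase v).powerset.filter fun S : Finset V => G.IsClique (S : Set V)) ∪
          (G.neighborFinset v ∩ X).powerset.image (insert v) := by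
      intro S hS
      simp only [mem_filter, mem_powerset] at hS
      simp only [mem_union, mem_filter, mem_powerset, mem_image]
      by_cases hvS : v ∈ S
      · refine Or.inr ⟨S.erase v, fun y hy => ?_, insert_erase hvS⟩
        obtain ⟨hyv, hyS⟩ := mem_erase.1 hy
        exact mem_inter.2 ⟨(mem_neighborFinset ..).2 (hS.2 hvS hyS hyv.symm), hS.1 hyS⟩
      · exact Or.inl ⟨subset_erase.2 ⟨hS.1, hvS⟩, hS.2⟩
    have hnew : #((G.neighborFinset v ∩ X).powerset.image (insert v)) ≤ 2 ^ 16 := by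
      refine card_image_le.trans ?_
      rw [card_powerset]
      exact Nat.pow_le_pow_right two_pos hdeg
    have hrest := ih _ (erase_ssubset hv)
    have hcard := card_erase_add_one hv
    have := (card_le_card hsub).trans (card_union_le _ _)
    omega

section Absorb

variable {V ι : Type*}

/-- The vertices of `X` with a neighbour in the piece `a`. -/
noncomputable def attachments (G : SimpleGraph V) (pc : V → ι) (X : Finset V) (a : ι) : Finset V :=
  {x ∈ X | ∃ u, pc u = a ∧ G.Adj u x}

/-- The partial map contracting every piece `a` with `τ a = some x` to the vertex `x`, fixing the
vertices of `X` and deleting all other vertices. -/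
noncomputable def absorb (pc : V → ι) (X : Finset V) (τ : ι → Option V) (u : V) : Option V :=
  if u ∈ X then some u else τ (pc u)

variable {G : SimpleGraph V} {pc : V → ι} {X : Finset V} {𝓛 : Finset ι} {τ : ι → Option V}

theorem mem_attachments {a : ι} {x : V} :
    x ∈ attachments G pc X a ↔ x ∈ X ∧ ∃ u, pc u = a ∧ G.Adj u x := mem_filter

variable (hX : ∀ u, pc u ∈ 𝓛 → u ∉ X)
  (hτ : ∀ a x, τ a = some x → a ∈ 𝓛 ∧ x ∈ attachments G pc X a)

include hτ in
theorem mem_of_absorb_eq_some {u x : V} (h : absorb pc X τ u = some x) : x ∈ X := by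
  have := hτ (pc u) x
  simp only [absorb, mem_attachments] at *
  grind

include hX hτ in
theorem _root_.IsPlanar.contract_absorb (hG : IsPlanar G)
    (hpc : ∀ a ∈ 𝓛, (G.induce {u | pc u = a}).Preconnected) :
    IsPlanar (contract G (absorb pc X τ)) := by
  refine hG.contract _ fun x => ?_
  by_cases hx : x ∈ X
  · have hfibre : {u | absorb pc X τ u = some x} =
        {x} ∪ ⋃ a ∈ {a | τ a = some x}, {u | pc u = a} := by
      ext u
      have := hX u
      have := hτ (pc u)
      simp only [Set.mem_union, Set.mem_iUnion, Set.mem_ofPred_eq, exists_prop,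
        Set.mem_singleton_iff, absorb]
      grind
    rw [hfibre]
    refine preconnected_induce_union_biUnion
      (preconnected_induce_of_subsingleton Set.subsingleton_singleton) _ _
      (fun a ha => hpc a (hτ a x ha).1) fun a ha => ?_
    obtain ⟨-, u, hu, hux⟩ := mem_attachments.1 (hτ a x ha).2
    exact ⟨x, rfl, u, hu, hux.symm⟩
  · exact preconnected_induce_of_subsingleton
      fun u hu => absurd (mem_of_absorb_eq_some hτ hu) hx

theorem contract_absorb_le_update {a : ι} (ha : τ a = none) (x : V) :
    contract G (absorb pc X τ) ≤
      contract G (absorb pc X (Function.update τ a (some x))) := by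
  have hmono (u b) (h : absorb pc X τ u = some b) :
      absorb pc X (Function.update τ a (some x)) u = some b := by
    simp only [absorb, Function.update_apply] at h ⊢
    grind
  rintro p q ⟨hpq, u, w, hu, hw, huw⟩
  exact ⟨hpq, u, w, hmono u p hu, hmono w q hw, huw⟩

include hX in
theorem contract_absorb_update_adj {a : ι} (ha : a ∈ 𝓛) {x y : V}
    (hy : y ∈ attachments G pc X a) (hxy : x ≠ y) :
    (contract G (absorb pc X (Function.update τ a (some x)))).Adj x y := by
  obtain ⟨hyX, u, rfl, huy⟩ := mem_attachments.1 hy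
  exact ⟨hxy, u, y, by simp [absorb, hX u ha], by simp [absorb, hyX], huy⟩

end Absorb

/-- As many pieces as possible are contracted into `X`, each so as to create a new edge inside
`X`. -/
theorem exists_isClique_attachments {V ι : Type*} [Fintype V] [Finite ι] (G : SimpleGraph V)
    {pc : V → ι} {X : Finset V} {𝓛 : Finset ι} (hX : ∀ u, pc u ∈ 𝓛 → u ∉ X) :
    ∃ τ : ι → Option V, (∀ a x, τ a = some x → a ∈ 𝓛 ∧ x ∈ attachments G pc X a) ∧
      #{a ∈ 𝓛 | τ a ≠ none} ≤ dartCount (contract G (absorb pc X τ)) ∧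
      ∀ a ∈ 𝓛, τ a = none →
        (contract G (absorb pc X τ)).IsClique (attachments G pc X a : Set V) := by
  cases nonempty_fintype ι
  set used : (ι → Option V) → Finset ι := fun τ => {a ∈ 𝓛 | τ a ≠ none}
  set valid : Finset (ι → Option V) :=
    {τ | (∀ a x, τ a = some x → a ∈ 𝓛 ∧ x ∈ attachments G pc X a) ∧
      #(used τ) ≤ dartCount (contract G (absorb pc X τ))}
  obtain ⟨τ, hmem, hmax⟩ := exists_max_image valid (fun τ => #(used τ))
    ⟨fun _ => none, by simp [valid, used]⟩
  simp only [valid, mem_filter, mem_univ, true_and] at hmem hmax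
  refine ⟨τ, hmem.1, hmem.2, fun a ha hτa x hx y hy hxy => by_contra fun hn => ?_⟩
  have hlt : dartCount (contract G (absorb pc X τ)) <
      dartCount (contract G (absorb pc X (Function.update τ a (some x)))) :=
    dartCount_strictMono <| lt_of_le_not_ge (contract_absorb_le_update hτa x)
      fun hge => hn (hge (contract_absorb_update_adj hX ha hy hxy))
  have hcard : #(used (Function.update τ a (some x))) = #(used τ) + 1 := by
    rw [show used (Function.update τ a (some x)) = insert a (used τ) by
      ext b
      simp only [used, mem_filter, mem_insert, Function.update_apply]
      grind]
    exact card_insert_of_notMem fun h => (mem_filter.1 h).2 hτa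
  have := hmax (Function.update τ a (some x)) ⟨fun b y hb => ?_, by omega⟩
  · omega
  · simp only [Function.update_apply] at hb
    grind

theorem _root_.IsPlanar.card_le_of_injOn_attachments {V ι : Type*} [Finite V] [Finite ι]
    {G : SimpleGraph V} (hG : IsPlanar G) {pc : V → ι} {X : Finset V} {𝓛 : Finset ι}
    (hpc : ∀ a ∈ 𝓛, (G.induce {u | pc u = a}).Preconnected) (hX : ∀ u, pc u ∈ 𝓛 → u ∉ X)
    (hinj : Set.InjOn (attachments G pc X) 𝓛) : #𝓛 ≤ (2 ^ 16 + 16) * #X + 1 := by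
  cases nonempty_fintype V
  obtain ⟨τ, hτ, hdarts, hclique⟩ := exists_isClique_attachments G hX
  have hplanar := hG.contract_absorb hX hτ hpc
  have hused : #{a ∈ 𝓛 | τ a ≠ none} ≤ 16 * #X :=
    hdarts.trans (hplanar.dartCount_le fun x y ⟨_, u, _, hu, _⟩ => mem_of_absorb_eq_some hτ hu)
  have hrest : #{a ∈ 𝓛 | ¬ τ a ≠ none} ≤ 2 ^ 16 * #X + 1 := by
    refine le_trans ?_ (hplanar.card_cliques_le X)
    refine card_le_card_of_injOn (attachments G pc X) (fun a ha => ?_)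
      (hinj.mono (coe_subset.2 (filter_subset _ _)))
    obtain ⟨ha, hτa⟩ := mem_filter.1 ha
    rw [mem_coe, mem_filter, mem_powerset]
    exact ⟨fun x hx => (mem_attachments.1 hx).1, hclique a ha (not_not.1 hτa)⟩
  have hsplit := card_filter_add_card_filter_not (s := 𝓛) fun a => τ a ≠ none
  omega

/-! ### Reductions -/

section Pieces

variable {V ι : Type*} [Fintype V]

/-- The darts touching the piece `a`. -/
noncomputable def incidentDarts (G : SimpleGraph V) (pc : V → ι) (a : ι) : Finset (V × V) :=
  {p | G.Adj p.1 p.2 ∧ (pc p.1 = a ∨ pc p.2 = a)}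

/-- The vertices outside the piece `a` with a neighbour in it. -/
noncomputable def pieceBoundary (G : SimpleGraph V) (pc : V → ι) (a : ι) : Finset V :=
  {w | pc w ≠ a ∧ ∃ u, pc u = a ∧ G.Adj u w}

/-- The number of labels freed by reducing the piece `a`: all its vertices, except the target
`tg a` of the contraction if there is one. -/
noncomputable def freedCount (pc : V → ι) (tg : ι → Option V) (a : ι) : ℕ :=
  #{u | pc u = a ∧ tg a ≠ some u}

/-- The number of darts lost by reducing the piece `a`. -/
noncomputable def dartLoss (G : SimpleGraph V) (pc : V → ι) (tg : ι → Option V) (a : ι) : ℤ :=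
  #(incidentDarts G pc a) - if tg a = none then 0 else 2 * (#(pieceBoundary G pc a) : ℤ)

/-- `Gd` is a set of (labels of) reducible pieces of `G`: connected pieces of at most `K` vertices
of degree at most `D`.  A piece `a` is reduced by contracting it to the vertex `tg a` or, if
`tg a = none`, by deleting it; in the latter case some bounded connected set `S`, not touching
any reducible piece, dominates the neighbourhood of the piece. -/
structure IsReducible (G : SimpleGraph V) (pc : V → ι) (Gd : Finset ι) (tg : ι → Option V)
    (K D : ℕ) : Prop where
  preconnected : ∀ a ∈ Gd, (G.induce {u | pc u = a}).Preconnected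
  card_le : ∀ a ∈ Gd, #{u | pc u = a} ≤ K
  degree_le : ∀ u, pc u ∈ Gd → G.degree u ≤ D
  piece_target : ∀ a ∈ Gd, ∀ v, tg a = some v → pc v = a
  exists_freed : ∀ a ∈ Gd, ∃ u, pc u = a ∧ tg a ≠ some u
  exists_dominating : ∀ a ∈ Gd, tg a = none → ∃ S : Finset V, S.Nonempty ∧
    (G.induce (S : Set V)).Preconnected ∧ #S ≤ K ∧ (∀ u ∈ S, G.degree u ≤ D) ∧
    (∀ u ∈ S, pc u ∉ Gd) ∧ (∀ u ∈ S, ∀ w, G.Adj u w → pc w ∉ Gd) ∧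
    ∀ u w, pc u = a → G.Adj u w → pc w ≠ a → ∃ u' ∈ S, G.Adj u' w

/-- No two pieces with labels in `T` are joined by an edge. -/
def PairwiseNonadjacent {V ι : Type*} (G : SimpleGraph V) (pc : V → ι) (T : Finset ι) : Prop :=
  ∀ u w, G.Adj u w → pc u ∈ T → pc w ∈ T → pc u = pc w

/-- The partial map reducing simultaneously the pieces with label in `T`. -/
noncomputable def reductionMap {V ι : Type*} (pc : V → ι) (tg : ι → Option V) (T : Finset ι)
    (u : V) : Option V :=
  if pc u ∈ T then tg (pc u) else some u

/-- The graph on the same vertex set obtained by reducing the pieces with label in `T`; the freed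
labels become isolated vertices. -/
noncomputable def reduce {V ι : Type*} (G : SimpleGraph V) (pc : V → ι) (tg : ι → Option V)
    (T : Finset ι) : SimpleGraph V :=
  contract G (reductionMap pc tg T)

/-- The labels freed by reducing the pieces in `T`. -/
noncomputable def freedVertices (pc : V → ι) (tg : ι → Option V) (T : Finset ι) : Finset V :=
  {u | pc u ∈ T ∧ tg (pc u) ≠ some u}

theorem mem_pieceBoundary {G : SimpleGraph V} {pc : V → ι} {a : ι} {w : V} :
    w ∈ pieceBoundary G pc a ↔ pc w ≠ a ∧ ∃ u, pc u = a ∧ G.Adj u w := by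
  simp [pieceBoundary]

theorem mem_freedVertices {pc : V → ι} {tg : ι → Option V} {T : Finset ι} {u : V} :
    u ∈ freedVertices pc tg T ↔ pc u ∈ T ∧ tg (pc u) ≠ some u := by
  simp [freedVertices]

theorem card_freedVertices (pc : V → ι) (tg : ι → Option V) (T : Finset ι) :
    #(freedVertices pc tg T) = ∑ a ∈ T, freedCount pc tg a := by
  rw [card_eq_sum_card_fiberwise (f := pc) (t := T) fun u hu => (mem_freedVertices.1 hu).1]
  refine sum_congr rfl fun a ha => congrArg card ?_
  ext u
  simp only [mem_filter, mem_freedVertices, mem_univ, true_and]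
  grind

theorem dartCount_eq_add_sum_incidentDarts {H : SimpleGraph V} {pc : V → ι} {T : Finset ι}
    (hind : PairwiseNonadjacent H pc T) :
    dartCount H = #{p : V × V | H.Adj p.1 p.2 ∧ pc p.1 ∉ T ∧ pc p.2 ∉ T} +
      ∑ a ∈ T, #(incidentDarts H pc a) := by
  have hdisj : (T : Set ι).PairwiseDisjoint (incidentDarts H pc) := by
    intro a ha b hb hab
    refine Finset.disjoint_left.2 fun p hp hp' => hab ?_
    have := hind p.1 p.2
    have := hind p.2 p.1
    simp only [incidentDarts, mem_filter, mem_univ, true_and, mem_coe] at *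
    grind [H.adj_comm p.1 p.2]
  rw [dartCount_eq_card, ← card_biUnion hdisj, ← card_union_of_disjoint]
  · refine congrArg card ?_
    ext p
    simp only [incidentDarts, mem_union, mem_biUnion, mem_filter, mem_univ, true_and]
    grind
  · refine Finset.disjoint_left.2 fun p hp hp' => ?_
    simp only [incidentDarts, mem_biUnion, mem_filter, mem_univ, true_and] at hp hp'
    grind

namespace IsReducible

variable {G : SimpleGraph V} {pc : V → ι} {Gd T : Finset ι} {tg : ι → Option V} {K D : ℕ}
  (hred : IsReducible G pc Gd tg K D)

include hred

theorem freedCount_pos {a : ι} (ha : a ∈ Gd) : 0 < freedCount pc tg a := by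
  obtain ⟨u, hu⟩ := hred.exists_freed a ha
  exact card_pos.2 ⟨u, by simpa using hu⟩

theorem card_pieceBoundary_le {a : ι} (ha : a ∈ Gd) : #(pieceBoundary G pc a) ≤ K * D := by
  have hsub : pieceBoundary G pc a ⊆
      ({u | pc u = a} : Finset V).biUnion fun u => G.neighborFinset u := by
    intro w hw
    obtain ⟨-, u, hu, huw⟩ := mem_pieceBoundary.1 hw
    exact mem_biUnion.2 ⟨u, by simpa using hu, (mem_neighborFinset ..).2 huw⟩
  refine (card_le_card hsub).trans <| (card_biUnion_le_card_mul _ _ D fun u hu => ?_).trans <|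
    Nat.mul_le_mul_right _ (hred.card_le a ha)
  exact hred.degree_le u (by simp_all)

variable (hT : T ⊆ Gd)

include hT

theorem eq_of_reductionMap_eq_some {x u : V} (hu : pc u ∉ T)
    (h : reductionMap pc tg T x = some u) : x = u := by
  unfold reductionMap at h
  split_ifs at h with hx
  · exact absurd hx (hred.piece_target _ (hT hx) _ h ▸ hu)
  · simpa using h

theorem piece_eq_of_reductionMap_eq_some {x u : V} (hu : pc u ∈ T)
    (h : reductionMap pc tg T x = some u) : pc x = pc u ∧ tg (pc u) = some u := by
  unfold reductionMap at h
  split_ifs at h with hx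
  · have hxu := hred.piece_target _ (hT hx) _ h
    exact ⟨hxu.symm, hxu ▸ h⟩
  · simp_all

theorem reduce_adj_of_notMem {u w : V} (hu : pc u ∉ T) (hw : pc w ∉ T) :
    (reduce G pc tg T).Adj u w ↔ G.Adj u w := by
  constructor
  · rintro ⟨-, x, y, hx, hy, h⟩
    rwa [hred.eq_of_reductionMap_eq_some hT hu hx, hred.eq_of_reductionMap_eq_some hT hw hy] at h
  · exact fun h => ⟨h.ne, u, w, if_neg hu, if_neg hw, h⟩

theorem isPlanar_reduce (hG : IsPlanar G) : IsPlanar (reduce G pc tg T) := by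
  refine hG.contract _ fun v => ?_
  by_cases hv : pc v ∈ T ∧ tg (pc v) = some v
  · have hfibre : {u | reductionMap pc tg T u = some v} = {u | pc u = pc v} := by
      ext u
      refine ⟨fun h => (hred.piece_eq_of_reductionMap_eq_some hT hv.1 h).1, fun h => ?_⟩
      simp_all [reductionMap]
    rw [hfibre]
    exact hred.preconnected _ (hT hv.1)
  · refine preconnected_induce_of_subsingleton fun x hx y hy => ?_
    have hvT : pc v ∉ T := fun h =>
      hv ⟨h, (hred.piece_eq_of_reductionMap_eq_some hT h hx).2⟩
    rw [hred.eq_of_reductionMap_eq_some hT hvT hx, hred.eq_of_reductionMap_eq_some hT hvT hy]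

theorem not_reduce_adj_of_mem_freedVertices {u : V} (hu : u ∈ freedVertices pc tg T) (w : V) :
    ¬ (reduce G pc tg T).Adj u w := by
  rintro ⟨-, x, -, hx, -, -⟩
  obtain ⟨huT, hne⟩ := mem_freedVertices.1 hu
  exact hne (hred.piece_eq_of_reductionMap_eq_some hT huT hx).2

variable (hind : PairwiseNonadjacent G pc T)

include hind

theorem reduce_adj_of_mem {v w : V} (hv : pc v ∈ T) :
    (reduce G pc tg T).Adj v w ↔ tg (pc v) = some v ∧ pc w ∉ T ∧ ∃ u, pc u = pc v ∧ G.Adj u w := by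
  constructor
  · rintro ⟨hne, x, y, hx, hy, h⟩
    obtain ⟨hxv, htv⟩ := hred.piece_eq_of_reductionMap_eq_some hT hv hx
    by_cases hyT : pc y ∈ T
    · have hxy := hind x y h (hxv ▸ hv) hyT
      simp_all [reductionMap]
    · obtain rfl : y = w := by simpa [reductionMap, hyT] using hy
      exact ⟨htv, hyT, x, hxv, h⟩
  · rintro ⟨htv, hw, u, hu, huw⟩
    exact ⟨fun h => hw (h ▸ hv), u, w, by simp [reductionMap, hu, hv, htv],
      by simp [reductionMap, hw], huw⟩

theorem reduce_adj_target {a : ι} (ha : a ∈ T) {v : V} (hv : tg a = some v) (w : V) :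
    (reduce G pc tg T).Adj v w ↔ w ∈ pieceBoundary G pc a := by
  obtain rfl := hred.piece_target a (hT ha) v hv
  rw [hred.reduce_adj_of_mem hT hind ha, mem_pieceBoundary]
  constructor
  · rintro ⟨-, hw, h⟩
    exact ⟨fun h => hw (h ▸ ha), h⟩
  · rintro ⟨hw, u, hu, huw⟩
    exact ⟨hv, fun h => hw (hu ▸ (hind u w huw (hu ▸ ha) h).symm), u, hu, huw⟩

theorem incidentDarts_reduce {a : ι} (ha : a ∈ T) {v : V} (hv : tg a = some v) :
    incidentDarts (reduce G pc tg T) pc a =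
      {v} ×ˢ pieceBoundary G pc a ∪ pieceBoundary G pc a ×ˢ {v} := by
  have hpv := hred.piece_target a (hT ha) v hv
  have hadj := hred.reduce_adj_target hT hind ha hv
  have hend (u w) (h : (reduce G pc tg T).Adj u w) (hu : pc u = a) : u = v := by
    have := ((hred.reduce_adj_of_mem hT hind (hu ▸ ha)).1 h).1
    simp_all
  ext ⟨p, q⟩
  simp only [incidentDarts, mem_filter, mem_univ, true_and, mem_union, mem_product, mem_singleton,
    ← hadj]
  grind [(reduce G pc tg T).adj_comm p q]

theorem card_incidentDarts_reduce {a : ι} (ha : a ∈ T) :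
    #(incidentDarts (reduce G pc tg T) pc a) =
      if tg a = none then 0 else 2 * #(pieceBoundary G pc a) := by
  cases hta : tg a with
  | none =>
    rw [if_pos rfl, card_eq_zero, incidentDarts, filter_eq_empty_iff]
    rintro p - ⟨h, rfl | rfl⟩
    · simpa [hta] using ((hred.reduce_adj_of_mem hT hind ha).1 h).1
    · simpa [hta] using ((hred.reduce_adj_of_mem hT hind ha).1 h.symm).1
  | some v =>
    have hv : v ∉ pieceBoundary G pc a := fun h =>
      (mem_pieceBoundary.1 h).1 (hred.piece_target a (hT ha) v hta)
    rw [if_neg (by simp), hred.incidentDarts_reduce hT hind ha hta, card_union_of_disjoint]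
    · simp [two_mul]
    · refine Finset.disjoint_left.2 fun p hp hp' => hv ?_
      simp only [mem_product, mem_singleton] at hp hp'
      exact hp.1 ▸ hp'.1

theorem dartCount_eq_add_sum_dartLoss :
    (dartCount G : ℤ) = dartCount (reduce G pc tg T) + ∑ a ∈ T, dartLoss G pc tg a := by
  have hind' : PairwiseNonadjacent (reduce G pc tg T) pc T := fun u w h hu hw =>
    absurd hw ((hred.reduce_adj_of_mem hT hind hu).1 h).2.1
  have houter : #{p : V × V | (reduce G pc tg T).Adj p.1 p.2 ∧ pc p.1 ∉ T ∧ pc p.2 ∉ T} =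
      #{p : V × V | G.Adj p.1 p.2 ∧ pc p.1 ∉ T ∧ pc p.2 ∉ T} :=
    congrArg card <| filter_congr fun p _ =>
      and_congr_left fun h => hred.reduce_adj_of_notMem hT h.1 h.2
  rw [dartCount_eq_add_sum_incidentDarts hind, dartCount_eq_add_sum_incidentDarts hind', houter,
    sum_congr rfl fun a ha => hred.card_incidentDarts_reduce hT hind ha]
  simp only [dartLoss, sum_sub_distrib]
  push_cast
  ring

end IsReducible

end Pieces

/-! ### Bounded neighbourhoods in the reduced graph -/

section LowDegreeBall

variable {V : Type*} [Fintype V] {G : SimpleGraph V} {D : ℕ} {v : V}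

/-- Vertices reachable from `v` by at most `k` steps, each leaving a vertex of degree at
most `D`. -/
noncomputable def lowDegreeBall (G : SimpleGraph V) (D : ℕ) : ℕ → V → Finset V
  | 0, v => {v}
  | k + 1, v => lowDegreeBall G D k v ∪
      {u ∈ lowDegreeBall G D k v | G.degree u ≤ D}.biUnion fun u => G.neighborFinset u

theorem card_lowDegreeBall_le (G : SimpleGraph V) (D k : ℕ) (v : V) :
    #(lowDegreeBall G D k v) ≤ (1 + D) ^ k := by
  induction k with
  | zero => simp [lowDegreeBall]
  | succ k ih =>
    set B := lowDegreeBall G D k v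
    calc #(lowDegreeBall G D (k + 1) v)
        ≤ #B + #({u ∈ B | G.degree u ≤ D}.biUnion fun u => G.neighborFinset u) := card_union_le _ _
      _ ≤ #B + #B * D := by
        gcongr
        exact (card_biUnion_le_card_mul _ _ D fun u hu => (mem_filter.1 hu).2).trans
          (Nat.mul_le_mul_right _ (card_filter_le _ _))
      _ = #B * (1 + D) := by ring
      _ ≤ (1 + D) ^ k * (1 + D) := Nat.mul_le_mul_right _ ih

theorem lowDegreeBall_mono (G : SimpleGraph V) (D : ℕ) (v : V) :
    Monotone fun k => lowDegreeBall G D k v :=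
  monotone_nat_of_le_succ fun _ => subset_union_left

theorem self_mem_lowDegreeBall (k : ℕ) : v ∈ lowDegreeBall G D k v :=
  lowDegreeBall_mono G D v (Nat.zero_le k) (mem_singleton_self v)

theorem mem_lowDegreeBall_succ {k : ℕ} {u w : V} (hu : u ∈ lowDegreeBall G D k v)
    (hdeg : G.degree u ≤ D) (huw : G.Adj u w) : w ∈ lowDegreeBall G D (k + 1) v :=
  mem_union_right _ <|
    mem_biUnion.2 ⟨u, mem_filter.2 ⟨hu, hdeg⟩, (mem_neighborFinset ..).2 huw⟩

theorem subset_lowDegreeBall {S : Finset V} (hS : (G.induce (S : Set V)).Preconnected)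
    (hdeg : ∀ u ∈ S, G.degree u ≤ D) (hv : v ∈ S) : S ⊆ lowDegreeBall G D #S v := by
  have hgrow (k) : S ⊆ lowDegreeBall G D k v ∨ k + 1 ≤ #(S ∩ lowDegreeBall G D k v) := by
    induction k with
    | zero => exact Or.inr (card_pos.2 ⟨v, mem_inter.2 ⟨hv, self_mem_lowDegreeBall 0⟩⟩)
    | succ k ih =>
      have hmono := lowDegreeBall_mono G D v (Nat.le_succ k)
      by_cases hsub : S ⊆ lowDegreeBall G D k v
      · exact Or.inl (hsub.trans hmono)
      obtain ⟨z, hz, hzB⟩ := not_subset.1 hsub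
      obtain ⟨x, hx, y, hy, hxB, hyB, hxy⟩ := preconnected_induce_iff_exists_adj.1 hS
        (lowDegreeBall G D k v) v hv z hz (self_mem_lowDegreeBall k) hzB
      have hlt : #(S ∩ lowDegreeBall G D k v) < #(S ∩ lowDegreeBall G D (k + 1) v) :=
        card_lt_card ⟨inter_subset_inter_left hmono, fun hss => hyB <| (mem_inter.1 <| hss <|
          mem_inter.2 ⟨hy, mem_lowDegreeBall_succ hxB (hdeg x hx) hxy⟩).2⟩
      have := ih.resolve_left hsub
      exact Or.inr (by omega)
  refine (hgrow #S).resolve_right fun h => ?_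
  have := card_le_card (inter_subset_left (s₁ := S) (s₂ := lowDegreeBall G D #S v))
  omega

end LowDegreeBall

/-- The graphs `G` and `G'` agree on all pairs not contained in `W`. -/
def AgreeOff {V : Type*} (G G' : SimpleGraph V) (W : Set V) : Prop :=
  ∀ u w, ¬ (u ∈ W ∧ w ∈ W) → (G.Adj u w ↔ G'.Adj u w)

namespace IsReducible

variable {V ι : Type*} [Fintype V] {G : SimpleGraph V} {pc : V → ι} {Gd T : Finset ι}
  {tg : ι → Option V} {K D : ℕ} (hred : IsReducible G pc Gd tg K D) (hT : T ⊆ Gd)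
  (hind : PairwiseNonadjacent G pc T)

include hred hT hind

theorem exists_pieceBoundary_subset_ball_of_deleted {a : ι} (ha : a ∈ T) (hta : tg a = none) :
    ∃ v, pieceBoundary G pc a ⊆ lowDegreeBall (reduce G pc tg T) (K * D) (K + 1) v := by
  obtain ⟨S, ⟨v, hv⟩, hconn, hcard, hdeg, hSGd, hSadj, hdom⟩ :=
    hred.exists_dominating a (hT ha) hta
  have hadj : ∀ u ∈ S, ∀ w, (reduce G pc tg T).Adj u w ↔ G.Adj u w := by
    intro u hu w
    by_cases hw : pc w ∈ T
    · refine iff_of_false (fun h => ?_) fun h => hSadj u hu w h (hT hw)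
      obtain ⟨-, -, z, hz, hzu⟩ := (hred.reduce_adj_of_mem hT hind hw).1 h.symm
      exact hSadj u hu z hzu.symm (hz ▸ hT hw)
    · exact hred.reduce_adj_of_notMem hT (fun h => hSGd u hu (hT h)) hw
  have hdeg' : ∀ u ∈ S, (reduce G pc tg T).degree u ≤ K * D := by
    intro u hu
    have hnbr : (reduce G pc tg T).neighborFinset u = G.neighborFinset u := by
      ext w
      simp [hadj u hu w]
    rw [← card_neighborFinset_eq_degree, hnbr, card_neighborFinset_eq_degree]
    exact (hdeg u hu).trans (Nat.le_mul_of_pos_left _ ((card_pos.2 ⟨v, hv⟩).trans_le hcard))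
  have hconn' : ((reduce G pc tg T).induce (S : Set V)).Preconnected :=
    hconn.mono fun u w h => (hadj u u.2 w).2 h
  have hsub := (subset_lowDegreeBall hconn' hdeg' hv).trans (lowDegreeBall_mono _ _ v hcard)
  refine ⟨v, fun w hw => ?_⟩
  obtain ⟨hwa, u, hu, huw⟩ := mem_pieceBoundary.1 hw
  obtain ⟨u', hu', h⟩ := hdom u w hu huw hwa
  exact mem_lowDegreeBall_succ (hsub hu') (hdeg' u' hu') ((hadj u' hu' w).2 h)

theorem pieceBoundary_subset_ball_of_contracted {a : ι} (ha : a ∈ T) {v : V} (hv : tg a = some v) :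
    pieceBoundary G pc a ⊆ lowDegreeBall (reduce G pc tg T) (K * D) (K + 1) v := by
  have hadj := hred.reduce_adj_target hT hind ha hv
  have hnbr : (reduce G pc tg T).neighborFinset v = pieceBoundary G pc a := by
    ext w
    rw [mem_neighborFinset, hadj]
  have hdeg : (reduce G pc tg T).degree v ≤ K * D := by
    rw [← card_neighborFinset_eq_degree, hnbr]
    exact hred.card_pieceBoundary_le (hT ha)
  exact fun w hw => mem_lowDegreeBall_succ (self_mem_lowDegreeBall K) hdeg ((hadj w).2 hw)

theorem exists_pieceBoundary_subset_ball {a : ι} (ha : a ∈ T) :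
    ∃ v, (∀ u, tg a = some u → u ∈ lowDegreeBall (reduce G pc tg T) (K * D) (K + 1) v) ∧
      pieceBoundary G pc a ⊆ lowDegreeBall (reduce G pc tg T) (K * D) (K + 1) v := by
  cases hta : tg a with
  | none =>
    obtain ⟨v, hv⟩ := hred.exists_pieceBoundary_subset_ball_of_deleted hT hind ha hta
    exact ⟨v, by simp, hv⟩
  | some v =>
    refine ⟨v, ?_, hred.pieceBoundary_subset_ball_of_contracted hT hind ha hta⟩
    rintro _ ⟨⟩
    exact self_mem_lowDegreeBall _

theorem agreeOff_reduce [Nonempty V] : ∃ v : ι → V, AgreeOff G (reduce G pc tg T)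
    (freedVertices pc tg T ∪
      T.biUnion fun a => lowDegreeBall (reduce G pc tg T) (K * D) (K + 1) (v a) : Finset V) := by
  choose! v hv using fun a ha => hred.exists_pieceBoundary_subset_ball hT hind (a := a) ha
  refine ⟨v, ?_⟩
  set W := freedVertices pc tg T ∪
    T.biUnion fun a => lowDegreeBall (reduce G pc tg T) (K * D) (K + 1) (v a)
  have hpiece (u) (hu : pc u ∈ T) : u ∈ W := by
    by_cases h : tg (pc u) = some u
    · exact mem_union_right _ (mem_biUnion.2 ⟨_, hu, (hv _ hu).1 u h⟩)
    · exact mem_union_left _ (mem_freedVertices.2 ⟨hu, h⟩)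
  have hnbr (u w) (hu : pc u ∈ T) (h : G.Adj u w) : w ∈ W := by
    by_cases hw : pc w = pc u
    · exact hpiece w (hw ▸ hu)
    · exact mem_union_right _
        (mem_biUnion.2 ⟨_, hu, (hv _ hu).2 (mem_pieceBoundary.2 ⟨hw, u, rfl, h⟩)⟩)
  have hout (u w) (hu : pc u ∈ T) (hw : w ∉ W) : G.Adj u w ↔ (reduce G pc tg T).Adj u w := by
    refine iff_of_false (fun h => hw (hnbr u w hu h)) fun h => ?_
    obtain ⟨-, -, z, hz, hzw⟩ := (hred.reduce_adj_of_mem hT hind hu).1 h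
    exact hw (hnbr z w (hz ▸ hu) hzw)
  intro u w hn
  simp only [mem_coe] at hn
  by_cases hu : pc u ∈ T
  · exact hout u w hu fun hw => hn ⟨hpiece u hu, hw⟩
  by_cases hw : pc w ∈ T
  · rw [G.adj_comm u w, SimpleGraph.adj_comm _ u w]
    exact hout w u hw fun hu => hn ⟨hu, hpiece w hw⟩
  · exact (hred.reduce_adj_of_notMem hT hu hw).symm

end IsReducible

/-! ### Existence of reducible pieces -/

section Partition

variable {V ι : Type*} [Fintype V] {G : SimpleGraph V} {pc : V → ι} {X : Finset V} {A : Finset ι}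

/-- The darts of `G - X` joining different pieces. -/
noncomputable def crossingDartsOff (G : SimpleGraph V) (pc : V → ι) (X : Finset V) :
    Finset (V × V) :=
  crossingDarts (G.induce ((X : Set V)ᶜ)).spanningCoe pc

theorem mem_crossingDartsOff {p : V × V} : p ∈ crossingDartsOff G pc X ↔
    p.1 ∉ X ∧ p.2 ∉ X ∧ G.Adj p.1 p.2 ∧ pc p.1 ≠ pc p.2 := by
  simp only [crossingDartsOff, mem_crossingDarts, spanningCoe_induce_adj]
  simp [and_assoc]

theorem sum_freedCount_le (pc : V → ι) (tg : ι → Option V) (T : Finset ι) :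
    ∑ a ∈ T, freedCount pc tg a ≤ Fintype.card V :=
  card_freedVertices pc tg T ▸ card_le_univ _

theorem _root_.IsPlanar.dartCount_le_sum_incidentDarts_add (hG : IsPlanar G) (pc : V → ι)
    (A : Finset ι) :
    dartCount G ≤ ∑ a ∈ A, #(incidentDarts G pc a) + 16 * #{u | pc u ∉ A} := by
  set Y : Finset V := {u | pc u ∉ A}
  have hout : dartCount (G.induce (Y : Set V)).spanningCoe ≤ 16 * #Y :=
    (hG.mono (G.spanningCoe_induce_le _)).dartCount_le fun u v h => (spanningCoe_induce_adj.1 h).1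
  refine le_trans ?_ (Nat.add_le_add_left hout _)
  rw [dartCount_eq_card, dartCount_eq_card]
  refine (card_le_card fun p hp => ?_).trans
    ((card_union_le (A.biUnion (incidentDarts G pc)) _).trans
      (Nat.add_le_add_right card_biUnion_le _))
  simp only [mem_filter, mem_univ, true_and, mem_union, mem_biUnion, incidentDarts,
    spanningCoe_induce_adj, mem_coe, Y] at hp ⊢
  grind

theorem sum_incidentDarts_le (hA : ∀ u, pc u ∈ A → u ∉ X) :
    ∑ a ∈ A, #(incidentDarts G pc a) ≤ dartCount G + #(crossingDartsOff G pc X) := by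
  set E : Finset (V × V) := {p | G.Adj p.1 p.2}
  set C : Finset (V × V) := {p ∈ E | pc p.1 ≠ pc p.2}
  have hpiece : ∀ a ∈ A, #(incidentDarts G pc a) ≤
      #{p ∈ E | pc p.1 = a} + #{p ∈ C | pc p.2 = a} := by
    refine fun a _ => (card_le_card fun p hp => ?_).trans (card_union_le _ _)
    simp only [incidentDarts, mem_filter, mem_univ, true_and, mem_union, E, C] at hp ⊢
    grind
  have hcross : #{p ∈ C | pc p.2 ∈ A} ≤ #{p ∈ E | pc p.1 ∉ A} + #(crossingDartsOff G pc X) := by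
    refine (card_le_card fun p hp => ?_).trans (card_union_le _ _)
    simp only [mem_filter, mem_univ, true_and, mem_union, mem_crossingDartsOff, E, C] at hp ⊢
    grind
  calc ∑ a ∈ A, #(incidentDarts G pc a)
      ≤ #{p ∈ E | pc p.1 ∈ A} + #{p ∈ C | pc p.2 ∈ A} := by
        rw [← sum_card_fiberwise_eq_card_filter, ← sum_card_fiberwise_eq_card_filter,
          ← sum_add_distrib]
        exact sum_le_sum hpiece
    _ ≤ #{p ∈ E | pc p.1 ∈ A} + #{p ∈ E | pc p.1 ∉ A} + #(crossingDartsOff G pc X) := by omega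
    _ = dartCount G + #(crossingDartsOff G pc X) := by
        rw [card_filter_add_card_filter_not, dartCount_eq_card]

/-- The attachments are the darts from the contracted pieces to `X` in the minor of `G` on
`X ⊕ A` that contracts every piece in `A`. -/
theorem _root_.IsPlanar.sum_card_attachments_le {V ι : Type*} [Finite V] [Finite ι]
    {G : SimpleGraph V} {pc : V → ι} {X : Finset V} {A : Finset ι} (hG : IsPlanar G)
    (hA : ∀ u, pc u ∈ A → u ∉ X) (hpc : ∀ a ∈ A, (G.induce {u | pc u = a}).Preconnected) :
    ∑ a ∈ A, #(attachments G pc X a) ≤ 16 * (#X + #A) := by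
  cases nonempty_fintype V
  cases nonempty_fintype ι
  set ρ : V → Option (V ⊕ ι) := fun u =>
    if u ∈ X then some (.inl u) else if pc u ∈ A then some (.inr (pc u)) else none with hρ
  have hplanar : IsPlanar (contract G ρ) := by
    refine hG.contract ρ fun x => ?_
    obtain x | a := x
    · exact preconnected_induce_of_subsingleton fun u hu w hw => by
        simp only [Set.mem_ofPred_eq, hρ] at hu hw
        grind
    by_cases ha : a ∈ A
    · have hfibre : {u | ρ u = some (.inr a)} = {u | pc u = a} := by
        ext u
        have := hA u
        simp only [Set.mem_ofPred_eq, hρ]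
        grind
      exact hfibre ▸ hpc a ha
    · exact preconnected_induce_of_subsingleton fun u hu => by
        simp only [Set.mem_ofPred_eq, hρ] at hu
        grind
  have hdarts : dartCount (contract G ρ) ≤ 16 * #(X.disjSum A) := by
    refine hplanar.dartCount_le fun x y ⟨_, u, _, hu, _⟩ => ?_
    simp only [hρ] at hu
    rw [mem_disjSum]
    grind
  rw [← card_disjSum]
  refine le_trans ?_ hdarts
  calc ∑ a ∈ A, #(attachments G pc X a) ≤ ∑ a ∈ A, (contract G ρ).degree (.inr a) := by
        refine sum_le_sum fun a ha => card_le_card_of_injOn Sum.inl (fun x hx => ?_)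
          Sum.inl_injective.injOn
        obtain ⟨hxX, u, rfl, hux⟩ := mem_attachments.1 hx
        rw [mem_coe, mem_neighborFinset]
        exact ⟨Sum.inr_ne_inl, u, x, by simp [hρ, hA u ha, ha], by simp [hρ, hxX], hux⟩
    _ = ∑ x ∈ A.map .inr, (contract G ρ).degree x := by rw [sum_map]; rfl
    _ ≤ dartCount (contract G ρ) := sum_le_sum_of_subset (subset_univ _)

theorem _root_.IsPlanar.sum_card_pieceBoundary_le [Finite ι] (hG : IsPlanar G)
    (hA : ∀ u, pc u ∈ A → u ∉ X) (hpc : ∀ a ∈ A, (G.induce {u | pc u = a}).Preconnected) :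
    ∑ a ∈ A, #(pieceBoundary G pc a) ≤ 16 * (#X + #A) + #(crossingDartsOff G pc X) := by
  have hpiece : ∀ a ∈ A, #(pieceBoundary G pc a) ≤
      #(attachments G pc X a) + #{p ∈ crossingDartsOff G pc X | pc p.1 = a} := by
    intro a ha
    refine (card_le_card (t := attachments G pc X a ∪
      {p ∈ crossingDartsOff G pc X | pc p.1 = a}.image Prod.snd) fun w hw => ?_).trans
      ((card_union_le _ _).trans (Nat.add_le_add_left card_image_le _))
    obtain ⟨hwa, u, rfl, huw⟩ := mem_pieceBoundary.1 hw
    by_cases hwX : w ∈ X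
    · exact mem_union_left _ (mem_attachments.2 ⟨hwX, u, rfl, huw⟩)
    · refine mem_union_right _ (mem_image.2 ⟨(u, w), mem_filter.2 ⟨?_, rfl⟩, rfl⟩)
      exact mem_crossingDartsOff.2 ⟨hA u ha, hwX, huw, hwa.symm⟩
  calc ∑ a ∈ A, #(pieceBoundary G pc a)
      ≤ ∑ a ∈ A, #(attachments G pc X a) +
          ∑ a ∈ A, #{p ∈ crossingDartsOff G pc X | pc p.1 = a} := by
        rw [← sum_add_distrib]
        exact sum_le_sum hpiece
    _ ≤ 16 * (#X + #A) + #(crossingDartsOff G pc X) := by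
        refine Nat.add_le_add (hG.sum_card_attachments_le hA hpc) ?_
        exact (sum_card_fiberwise_eq_card_filter ..).trans_le (card_filter_le _ _)

/-! In the following definitions `X` is the set of high-degree vertices, and `K₀` separates small
pieces from large ones. -/

/-- The labels of the large pieces avoiding `X`; they will be contracted. -/
noncomputable def largePieces (pc : V → ι) (X : Finset V) (K₀ : ℕ) : Finset ι :=
  {a ∈ univ.image pc | (∀ u, pc u = a → u ∉ X) ∧ K₀ ≤ #{u | pc u = a}}

/-- The labels of the small pieces avoiding `X` and attached only to `X`; they will be deleted,
except for one of each boundary. -/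
noncomputable def sealedPieces (G : SimpleGraph V) (pc : V → ι) (X : Finset V) (K₀ : ℕ) :
    Finset ι :=
  {a ∈ univ.image pc | (∀ u, pc u = a → u ∉ X) ∧ #{u | pc u = a} < K₀ ∧ pieceBoundary G pc a ⊆ X}

/-- `R` contains, for every sealed piece, a sealed piece with the same boundary. -/
structure IsTwinTransversal (G : SimpleGraph V) (pc : V → ι) (X : Finset V) (K₀ : ℕ)
    (R : Finset ι) : Prop where
  subset : R ⊆ sealedPieces G pc X K₀
  exists_twin : ∀ a ∈ sealedPieces G pc X K₀, ∃ a' ∈ R, pieceBoundary G pc a' = pieceBoundary G pc a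

/-- The pieces that will be reduced, `R` being the twins that are kept. -/
noncomputable def reduciblePieces (G : SimpleGraph V) (pc : V → ι) (X : Finset V) (K₀ : ℕ)
    (R : Finset ι) : Finset ι :=
  largePieces pc X K₀ ∪ (sealedPieces G pc X K₀ \ R)

variable {K₀ : ℕ} {R : Finset ι}

theorem mem_largePieces {a : ι} : a ∈ largePieces pc X K₀ ↔
    (∃ u, pc u = a) ∧ (∀ u, pc u = a → u ∉ X) ∧ K₀ ≤ #{u | pc u = a} := by
  simp [largePieces]

theorem mem_sealedPieces {a : ι} : a ∈ sealedPieces G pc X K₀ ↔ (∃ u, pc u = a) ∧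
    (∀ u, pc u = a → u ∉ X) ∧ #{u | pc u = a} < K₀ ∧ pieceBoundary G pc a ⊆ X := by
  simp [sealedPieces]

theorem notMem_of_piece_mem_reduciblePieces {u : V} (hu : pc u ∈ reduciblePieces G pc X K₀ R) :
    u ∉ X := by
  simp only [reduciblePieces, mem_union, Finset.mem_sdiff, mem_largePieces, mem_sealedPieces] at hu
  grind

/-- The vertex to which a large piece is contracted; `none` for the other pieces. -/
noncomputable def largeTarget (pc : V → ι) (X : Finset V) (K₀ : ℕ) (a : ι) : Option V :=
  if h : a ∈ largePieces pc X K₀ then some (mem_largePieces.1 h).1.choose else none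

theorem largeTarget_eq_none {a : ι} : largeTarget pc X K₀ a = none ↔ a ∉ largePieces pc X K₀ := by
  simp [largeTarget]

theorem mem_largePieces_of_largeTarget_eq_some {a : ι} {v : V}
    (h : largeTarget pc X K₀ a = some v) : a ∈ largePieces pc X K₀ :=
  by_contra fun ha => by simp [largeTarget_eq_none.2 ha] at h

theorem piece_of_largeTarget_eq_some {a : ι} {v : V} (h : largeTarget pc X K₀ a = some v) :
    pc v = a := by
  have ha := mem_largePieces_of_largeTarget_eq_some h
  rw [largeTarget, dif_pos ha, Option.some.injEq] at h
  exact h ▸ (mem_largePieces.1 ha).1.choose_spec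

theorem exists_isTwinTransversal [Finite ι] (hG : IsPlanar G)
    (hpc : ∀ a, (G.induce {u | pc u = a}).Preconnected) (X : Finset V) (K₀ : ℕ) :
    ∃ R, IsTwinTransversal G pc X K₀ R ∧ #R ≤ (2 ^ 16 + 16) * #X + 1 := by
  obtain ⟨R, hR, hinj, himage⟩ := exists_subset_injOn_image_eq_of_surjOn
    (sealedPieces G pc X K₀ : Set ι) ((sealedPieces G pc X K₀).image (pieceBoundary G pc))
    (by simpa using Set.surjOn_image (pieceBoundary G pc) (sealedPieces G pc X K₀ : Set ι))
  have hboundary : ∀ a ∈ R, attachments G pc X a = pieceBoundary G pc a := by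
    intro a ha
    obtain ⟨-, hlight, -, hsub⟩ := mem_sealedPieces.1 (hR ha)
    ext x
    have := @hsub x
    have := hlight x
    simp only [mem_attachments, mem_pieceBoundary] at *
    grind
  refine ⟨R, ⟨mod_cast hR, fun a ha => mem_image.1 (himage ▸ mem_image_of_mem _ ha)⟩,
    hG.card_le_of_injOn_attachments (fun a _ => hpc a)
      (fun u hu => (mem_sealedPieces.1 (hR hu)).2.1 u rfl) ?_⟩
  exact hinj.congr fun a ha => (hboundary a ha).symm

theorem IsTwinTransversal.isReducible {K D : ℕ} (hR : IsTwinTransversal G pc X K₀ R)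
    (hpc : ∀ a, (G.induce {u | pc u = a}).Preconnected) (hsize : ∀ a, #{u | pc u = a} ≤ K)
    (hdeg : ∀ u, u ∉ X → G.degree u ≤ D) (hK₀ : 2 ≤ K₀) :
    IsReducible G pc (reduciblePieces G pc X K₀ R) (largeTarget pc X K₀) K D where
  preconnected a _ := hpc a
  card_le a _ := hsize a
  degree_le u hu := hdeg u (notMem_of_piece_mem_reduciblePieces hu)
  piece_target a _ v hv := piece_of_largeTarget_eq_some hv
  exists_freed a ha := by
    cases htg : largeTarget pc X K₀ a with
    | none =>
      have hnl := largeTarget_eq_none.1 htg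
      have hsealed := (Finset.mem_sdiff.1 ((mem_union.1 ha).resolve_left hnl)).1
      obtain ⟨u, hu⟩ := (mem_sealedPieces.1 hsealed).1
      exact ⟨u, hu, by simp⟩
    | some v =>
      have hlarge := (mem_largePieces.1 (mem_largePieces_of_largeTarget_eq_some htg)).2.2
      obtain ⟨u, hu, huv⟩ := exists_mem_ne (s := {u | pc u = a}) (by omega) v
      exact ⟨u, by simpa using hu, by simpa using huv.symm⟩
  exists_dominating a ha htg := by
    have hsealed := (mem_union.1 ha).resolve_left (largeTarget_eq_none.1 htg)
    obtain ⟨a', ha', htwin⟩ := hR.exists_twin a (Finset.mem_sdiff.1 hsealed).1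
    obtain ⟨⟨u₀, hu₀⟩, hlight, hsmall, hbd⟩ := mem_sealedPieces.1 (hR.subset ha')
    have hkept : a' ∉ reduciblePieces G pc X K₀ R := by
      simp only [reduciblePieces, mem_union, Finset.mem_sdiff, mem_largePieces]
      grind
    refine ⟨({u | pc u = a'} : Finset V), ⟨u₀, by simpa using hu₀⟩, ?_, hsize a',
      fun u hu => hdeg u (hlight u (by simpa using hu)), fun u hu => ?_, fun u hu w huw => ?_,
      fun u w hu huw hw => ?_⟩
    · rw [coe_filter_univ]
      exact hpc a'
    · rwa [show pc u = a' by simpa using hu]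
    · intro hw
      refine notMem_of_piece_mem_reduciblePieces hw (hbd (mem_pieceBoundary.2 ⟨?_, u, ?_, huw⟩))
      · exact fun h => hkept (h ▸ hw)
      · simpa using hu
    · have hmem : w ∈ pieceBoundary G pc a' := htwin ▸ mem_pieceBoundary.2 ⟨hw, u, hu, huw⟩
      obtain ⟨-, u', hu', h⟩ := mem_pieceBoundary.1 hmem
      exact ⟨u', by simpa using hu', h⟩

theorem card_unreduced_le (hX : ∀ x ∈ X, ∀ u, pc u = pc x → u = x) :
    #{u | pc u ∉ reduciblePieces G pc X K₀ R} ≤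
      #X + K₀ * (#(crossingDartsOff G pc X) + #R) := by
  set B : Finset ι := {a ∈ (crossingDartsOff G pc X).image (fun p => pc p.1) ∪ R |
    #{u | pc u = a} < K₀}
  have hB : #B ≤ #(crossingDartsOff G pc X) + #R :=
    (card_filter_le _ _).trans ((card_union_le _ _).trans (Nat.add_le_add_right card_image_le _))
  have hsub : ({u | pc u ∉ reduciblePieces G pc X K₀ R} : Finset V) ⊆
      X ∪ B.biUnion fun a => {u | pc u = a} := by
    intro u hu
    by_contra hn
    simp only [mem_union, mem_biUnion, mem_filter, mem_univ, true_and, not_or, B, mem_image,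
      exists_eq_right', reduciblePieces, Finset.mem_sdiff, mem_largePieces, mem_sealedPieces,
      exists_apply_eq_apply] at hu hn
    have hlight (w) (hw : pc w = pc u) : w ∉ X := fun hwX => hn.1 (hX w hwX u hw.symm ▸ hwX)
    obtain ⟨w, hw, hwX⟩ : ∃ w ∈ pieceBoundary G pc (pc u), w ∉ X := by
      by_contra! h
      have : pieceBoundary G pc (pc u) ⊆ X := h
      grind
    obtain ⟨hwu, u', hu', huw⟩ := mem_pieceBoundary.1 hw
    have hdart : (u', w) ∈ crossingDartsOff G pc X :=
      mem_crossingDartsOff.2 ⟨hlight u' hu', hwX, huw, hu' ▸ hwu.symm⟩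
    grind
  calc _ ≤ #X + #(B.biUnion fun a => {u | pc u = a}) :=
        (card_le_card hsub).trans (card_union_le _ _)
    _ ≤ #X + #B * K₀ := by
        gcongr
        exact card_biUnion_le_card_mul _ _ _ fun _ ha => (mem_filter.1 ha).2.le
    _ ≤ _ := by
        rw [mul_comm]
        gcongr

theorem card_largePieces_mul_le (pc : V → ι) (X : Finset V) (K₀ : ℕ) :
    #(largePieces pc X K₀) * K₀ ≤ Fintype.card V :=
  calc #(largePieces pc X K₀) * K₀ ≤ ∑ a ∈ largePieces pc X K₀, #{u | pc u = a} :=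
        card_nsmul_le_sum _ _ _ fun _ ha => (mem_largePieces.1 ha).2.2
    _ = #{u | pc u ∈ largePieces pc X K₀} := sum_card_fiberwise_eq_card_filter ..
    _ ≤ Fintype.card V := card_le_univ _

theorem card_le_sum_freedCount_add (T : Finset ι) : Fintype.card V ≤
    ∑ a ∈ T, freedCount pc (largeTarget pc X K₀) a + #{u | pc u ∉ T} +
      #(largePieces pc X K₀) := by
  set tg := largeTarget pc X K₀
  have htarget : #{u | tg (pc u) = some u} ≤ #(largePieces pc X K₀) := by
    refine card_le_card_of_injOn pc (fun u hu => ?_) fun u hu w hw huw => ?_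
    · exact mem_largePieces_of_largeTarget_eq_some (by simpa using hu)
    · simp_all
  have hcover : (univ : Finset V) ⊆ freedVertices pc tg T ∪ ({u | pc u ∉ T} : Finset V) ∪
      ({u | tg (pc u) = some u} : Finset V) := by
    intro u _
    simp only [mem_union, mem_freedVertices, mem_filter, mem_univ, true_and]
    tauto
  rw [← card_freedVertices, ← card_univ]
  exact (card_le_card hcover).trans ((card_union_le _ _).trans
    (Nat.add_le_add (card_union_le _ _) htarget))

theorem sum_dartLoss_reduciblePieces :
    ∑ a ∈ reduciblePieces G pc X K₀ R, dartLoss G pc (largeTarget pc X K₀) a =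
      ∑ a ∈ reduciblePieces G pc X K₀ R, (#(incidentDarts G pc a) : ℤ) -
        2 * ∑ a ∈ largePieces pc X K₀, (#(pieceBoundary G pc a) : ℤ) := by
  simp only [dartLoss, sum_sub_distrib, largeTarget_eq_none, ite_not, mul_sum]
  rw [sum_ite_mem, inter_eq_right.2 (show _ ⊆ reduciblePieces G pc X K₀ R from subset_union_left)]

theorem _root_.IsPlanar.dartCount_le_sum_dartLoss_add [Finite ι] (hG : IsPlanar G)
    (hpc : ∀ a, (G.induce {u | pc u = a}).Preconnected) (X : Finset V) (K₀ : ℕ) (R : Finset ι) :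
    (dartCount G : ℤ) ≤
      ∑ a ∈ reduciblePieces G pc X K₀ R, dartLoss G pc (largeTarget pc X K₀) a +
        16 * #{u | pc u ∉ reduciblePieces G pc X K₀ R} +
        2 * (16 * (#X + #(largePieces pc X K₀)) + #(crossingDartsOff G pc X)) := by
  have hdarts := hG.dartCount_le_sum_incidentDarts_add pc (reduciblePieces G pc X K₀ R)
  have hboundary := hG.sum_card_pieceBoundary_le (A := largePieces pc X K₀) (X := X)
    (fun u hu => (mem_largePieces.1 hu).2.1 u rfl) fun a _ => hpc a
  rw [sum_dartLoss_reduciblePieces]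
  zify at hdarts hboundary ⊢
  linarith

theorem sum_dartLoss_le (G : SimpleGraph V) (pc : V → ι) (X : Finset V) (K₀ : ℕ) (R : Finset ι) :
    ∑ a ∈ reduciblePieces G pc X K₀ R, dartLoss G pc (largeTarget pc X K₀) a ≤
      dartCount G + #(crossingDartsOff G pc X) := by
  have hdarts := sum_incidentDarts_le (G := G) (pc := pc) (X := X)
    (A := reduciblePieces G pc X K₀ R) fun u => notMem_of_piece_mem_reduciblePieces
  rw [sum_dartLoss_reduciblePieces]
  have : (0 : ℤ) ≤ ∑ a ∈ largePieces pc X K₀, (#(pieceBoundary G pc a) : ℤ) := by positivity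
  zify at hdarts ⊢
  linarith

end Partition

theorem exists_hyperfinite_partition {δ : ℝ} (hδ : 0 < δ) : ∃ K D : ℕ, ∀ {V : Type w} [Fintype V]
    {G : SimpleGraph V}, IsPlanar G → ∃ (X : Finset V) (pc : V → V),
      (∀ u, u ∉ X → G.degree u ≤ D) ∧
      (∀ a, ((G.induce ((X : Set V)ᶜ)).spanningCoe.induce {u | pc u = a}).Preconnected) ∧
      (∀ a, #{u | pc u = a} ≤ K) ∧ (#X : ℝ) ≤ δ * Fintype.card V ∧
      (#(crossingDartsOff G pc X) : ℝ) ≤ δ * Fintype.card V := by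
  obtain ⟨q, hq⟩ := exists_nat_gt (1 / δ)
  rw [div_lt_iff₀ hδ] at hq
  obtain ⟨R, hR⟩ := exists_pow_lt_of_lt_one (show (0 : ℝ) < δ / 16 by positivity)
    (show (127 / 128 : ℝ) < 1 by norm_num)
  obtain ⟨K, hK⟩ := exists_hyperfinite_bound.{w} (16 * q) R
  refine ⟨K, 16 * q, fun {V} _ G hG => ?_⟩
  set X : Finset V := {u | 16 * q < G.degree u} with hX
  have hdarts : dartCount G ≤ 16 * Fintype.card V :=
    hG.dartCount_le (A := univ) fun _ _ _ => mem_univ _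
  have hXcard : (#X : ℝ) ≤ δ * Fintype.card V := by
    have hsum : #X * (16 * q) ≤ dartCount G :=
      (card_nsmul_le_sum X (fun u => G.degree u) _ fun u hu => (mem_filter.1 hu).2.le).trans
        (sum_le_sum_of_subset (subset_univ _))
    have hle : (#X * q : ℝ) ≤ Fintype.card V := by
      norm_cast
      linarith
    nlinarith
  obtain ⟨L, hLG, hL⟩ : ∃ L ≤ G, L = (G.induce ((X : Set V)ᶜ)).spanningCoe :=
    ⟨_, G.spanningCoe_induce_le _, rfl⟩
  have hLdeg (v) : L.degree v ≤ 16 * q := by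
    by_cases hv : v ∈ X
    · have hiso : L.neighborFinset v = ∅ := eq_empty_of_forall_notMem fun w hw => by
        rw [mem_neighborFinset, hL, spanningCoe_induce_adj] at hw
        exact hw.1 hv
      simp [← card_neighborFinset_eq_degree, hiso]
    · exact (degree_le_of_le hLG).trans (by simpa [hX] using hv)
  obtain ⟨pc, hpc, hsize, hcross⟩ := hK (hG.mono hLG) hLdeg
  refine ⟨X, pc, fun u hu => by simpa [hX] using hu, hL ▸ hpc, hsize, hXcard, ?_⟩
  rw [crossingDartsOff, ← hL]
  have hle : (128 : ℝ) ^ R * #(crossingDarts L pc) ≤ 127 ^ R * (16 * Fintype.card V) :=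
    mod_cast hcross.trans (Nat.mul_le_mul_left _ ((dartCount_strictMono.monotone hLG).trans hdarts))
  calc (#(crossingDarts L pc) : ℝ) ≤ (127 / 128) ^ R * (16 * Fintype.card V) := by
        rw [div_pow, div_mul_eq_mul_div, le_div_iff₀ (by positivity)]
        linarith
    _ ≤ δ / 16 * (16 * Fintype.card V) := by gcongr
    _ = δ * Fintype.card V := by ring

theorem eq_of_preconnected_induce_spanningCoe {V : Type*} {G : SimpleGraph V} {A S : Set V}
    (hS : ((G.induce A).spanningCoe.induce S).Preconnected) {x u : V} (hx : x ∈ S) (hu : u ∈ S)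
    (hxA : x ∉ A) : u = x := by
  by_contra hne
  obtain ⟨_, -, y, -, rfl, -, hxy⟩ :=
    preconnected_induce_iff_exists_adj.1 hS {x} x hx u hu rfl hne
  exact hxA (spanningCoe_induce_adj.1 hxy).1

theorem exists_twin_partition {ξ : ℝ} (hξ : 0 < ξ) : ∃ K₀ K D N : ℕ, 2 ≤ K₀ ∧
    ∀ {V : Type w} [Fintype V] {G : SimpleGraph V}, N ≤ Fintype.card V → IsPlanar G →
    ∃ (X R : Finset V) (pc : V → V), IsTwinTransversal G pc X K₀ R ∧
      (∀ u, u ∉ X → G.degree u ≤ D) ∧ (∀ a, (G.induce {u | pc u = a}).Preconnected) ∧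
      (∀ a, #{u | pc u = a} ≤ K) ∧ (#X : ℝ) ≤ ξ * Fintype.card V ∧
      (#(crossingDartsOff G pc X) : ℝ) ≤ ξ * Fintype.card V ∧
      (#(largePieces pc X K₀) : ℝ) ≤ ξ * Fintype.card V ∧
      (#{u | pc u ∉ reduciblePieces G pc X K₀ R} : ℝ) ≤ ξ * Fintype.card V := by
  obtain ⟨K₁, hK₁⟩ := exists_nat_gt (1 / ξ)
  set K₀ := K₁ + 2 with hK₀
  have hK₀ξ : 1 ≤ K₀ * ξ := by
    rw [div_lt_iff₀ hξ] at hK₁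
    push_cast [hK₀]
    linarith
  set c : ℝ := 1 + K₀ * (1 + (2 ^ 16 + 16)) with hc
  have hc1 : 1 ≤ c := le_add_of_nonneg_right (by positivity)
  obtain ⟨K, D, hpart⟩ := exists_hyperfinite_partition.{w} (δ := ξ / (2 * c)) (by positivity)
  obtain ⟨N, hN⟩ := exists_nat_gt (2 * K₀ / ξ)
  refine ⟨K₀, K, D, N, by omega, fun {V} _ G hcard hG => ?_⟩
  obtain ⟨X, pc, hdeg, hpc, hsize, hXcard, hcross⟩ := hpart hG
  have hconn (a) : (G.induce {u | pc u = a}).Preconnected :=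
    (hpc a).mono fun u w h => G.spanningCoe_induce_le _ h
  have hsing : ∀ x ∈ X, ∀ u, pc u = pc x → u = x := fun x hx u hu =>
    eq_of_preconnected_induce_spanningCoe (hpc (pc x)) rfl hu (fun h => h hx)
  obtain ⟨R, hR, hRcard⟩ := exists_isTwinTransversal hG hconn X K₀
  have hδ : c * (ξ / (2 * c) * Fintype.card V) = ξ * Fintype.card V / 2 := by field_simp
  have hδle : ξ / (2 * c) * Fintype.card V ≤ ξ * Fintype.card V := by
    gcongr
    exact div_le_self hξ.le (by linarith)
  have hlarge : (#(largePieces pc X K₀) * K₀ : ℝ) ≤ Fintype.card V :=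
    mod_cast card_largePieces_mul_le pc X K₀
  refine ⟨X, R, pc, hR, hdeg, hconn, hsize, hXcard.trans hδle, hcross.trans hδle, by nlinarith, ?_⟩
  calc (#{u | pc u ∉ reduciblePieces G pc X K₀ R} : ℝ)
      ≤ #X + K₀ * (#(crossingDartsOff G pc X) + #R) := mod_cast card_unreduced_le hsing
    _ ≤ #X + K₀ * (#(crossingDartsOff G pc X) + ((2 ^ 16 + 16) * #X + 1)) := by
      gcongr
      exact mod_cast hRcard
    _ ≤ ξ / (2 * c) * Fintype.card V + K₀ * (ξ / (2 * c) * Fintype.card V +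
        ((2 ^ 16 + 16) * (ξ / (2 * c) * Fintype.card V) + 1)) := by gcongr
    _ = c * (ξ / (2 * c) * Fintype.card V) + K₀ := by rw [hc]; ring
    _ ≤ ξ * Fintype.card V := by
      rw [div_lt_iff₀ hξ] at hN
      have : (N : ℝ) ≤ Fintype.card V := mod_cast hcard
      nlinarith

theorem exists_isReducible {ξ : ℝ} (hξ : 0 < ξ) : ∃ K D N : ℕ, ∀ {V : Type w} [Fintype V]
    {G : SimpleGraph V}, N ≤ Fintype.card V → IsPlanar G →
    ∃ (pc : V → V) (Gd : Finset V) (tg : V → Option V), IsReducible G pc Gd tg K D ∧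
      (1 - 2 * ξ) * Fintype.card V ≤ ∑ a ∈ Gd, (freedCount pc tg a : ℝ) ∧
      (dartCount G : ℝ) - 82 * ξ * Fintype.card V ≤ ∑ a ∈ Gd, (dartLoss G pc tg a : ℝ) ∧
      ∑ a ∈ Gd, (dartLoss G pc tg a : ℝ) ≤ dartCount G + ξ * Fintype.card V := by
  obtain ⟨K₀, K, D, N, hK₀, hpart⟩ := exists_twin_partition.{w} hξ
  refine ⟨K, D, N, fun {V} _ G hcard hG => ?_⟩
  obtain ⟨X, R, pc, hR, hdeg, hconn, hsize, hX, hcross, hlarge, hunreduced⟩ := hpart hcard hG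
  refine ⟨pc, reduciblePieces G pc X K₀ R, largeTarget pc X K₀,
    hR.isReducible hconn hsize hdeg hK₀, ?_, ?_, ?_⟩
  · have := card_le_sum_freedCount_add (pc := pc) (X := X) (K₀ := K₀) (reduciblePieces G pc X K₀ R)
    rify at this
    linarith
  · have := hG.dartCount_le_sum_dartLoss_add hconn X K₀ R
    rify at this
    linarith
  · have := sum_dartLoss_le G pc X K₀ R
    rify at this
    linarith

/-! ### Linearly many choices for each reduction -/

theorem sum_card_le_card_pairwise_not {α : Type*} {r : α → α → Prop} [Std.Symm r] {k : ℕ}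
    (C : Fin (k + 1) → Finset α) :
    ∑ g ∈ {g ∈ Fintype.piFinset fun i : Fin k => C i.succ | Pairwise fun i j => ¬ r (g i) (g j)},
        #{x ∈ C 0 | ∀ i, ¬ r (g i) x} ≤
      #{g ∈ Fintype.piFinset C | Pairwise fun i j => ¬ r (g i) (g j)} := by
  rw [← card_sigma]
  refine card_le_card_of_injOn (fun p => (Fin.cons p.2 p.1 : Fin (k + 1) → α)) ?_ ?_
  · rintro ⟨g, x⟩ hp
    simp only [coe_sigma, Set.mem_sigma_iff, mem_coe, mem_filter, Fintype.mem_piFinset] at hp ⊢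
    obtain ⟨⟨hgC, hg⟩, hxC, hx⟩ := hp
    refine ⟨Fin.cases hxC hgC, fun i j hij => ?_⟩
    induction i using Fin.cases <;> induction j using Fin.cases
    · exact absurd rfl hij
    · exact fun h => hx _ (symm_of r h)
    · exact hx _
    · exact hg (by simpa using hij)
  · rintro ⟨g, x⟩ _ ⟨g', x'⟩ _ h
    obtain ⟨rfl, rfl⟩ := Fin.cons_inj.1 h
    rfl

/-- Choosing the entries one after the other, each choice forbids at most `κ` values for every
later one. -/
theorem pow_le_card_pairwise_not {α : Type*} {r : α → α → Prop} [Std.Symm r]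
    {A : Finset α} {κ Q : ℕ} (hκ : ∀ a ∈ A, #{b ∈ A | r a b} ≤ κ) {k : ℕ} {C : Fin k → Finset α}
    (hCA : ∀ i, C i ⊆ A) (hC : ∀ i, Q + k * κ ≤ #(C i)) :
    Q ^ k ≤ #{g ∈ Fintype.piFinset C | Pairwise fun i j => ¬ r (g i) (g j)} := by
  induction k with
  | zero =>
    refine (pow_zero Q).trans_le (card_pos.2 ⟨Fin.elim0, ?_⟩)
    simp only [mem_filter, Fintype.mem_piFinset]
    exact ⟨fun i => i.elim0, fun i => i.elim0⟩
  | succ k ih =>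
    refine le_trans ?_ (sum_card_le_card_pairwise_not C)
    rw [pow_succ]
    refine (Nat.mul_le_mul_right _ (ih (fun i => hCA i.succ) fun i => ?_)).trans
      (card_nsmul_le_sum _ _ _ fun g hg => ?_)
    · exact (Nat.add_le_add_left (Nat.mul_le_mul_right _ k.le_succ) _).trans (hC _)
    have hgC := Fintype.mem_piFinset.1 (mem_filter.1 hg).1
    have hsub : C 0 ⊆ {x ∈ C 0 | ∀ i, ¬ r (g i) x} ∪ univ.biUnion fun i => {b ∈ A | r (g i) b} := by
      intro x hx
      have := hCA 0 hx
      simp only [mem_union, mem_filter, mem_biUnion, mem_univ, true_and]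
      grind
    have hforbidden : #(univ.biUnion fun i => {b ∈ A | r (g i) b}) ≤ k * κ := by
      simpa using card_biUnion_le_card_mul univ (fun i => {b ∈ A | r (g i) b}) κ
        fun i _ => hκ _ (hCA _ (hgC i))
    have := (card_le_card hsub).trans (card_union_le _ _)
    have := hC 0
    rw [add_mul] at this
    omega

/-- A reduction which frees `s` labels at the cost of `l` darts is balanced if `s` lies in
`[smin, S₀]` and the number `l / 2` of lost edges per freed label lies in `[1 + η, 3 - η]`. -/
structure IsBalanced (smin S₀ : ℕ) (η : ℝ) (s : ℕ) (l : ℤ) : Prop where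
  le_freed : smin ≤ s
  freed_le : s ≤ S₀
  le_loss : 2 * (1 + η) * s ≤ l
  loss_le : (l : ℝ) ≤ 2 * (3 - η) * s

/-- The union of `F` and the balls of `G₀` around the vertices `v i`. A reduction which frees `F`
changes the graph only inside such a set. -/
noncomputable def touchedSet {V : Type*} [Fintype V] (D k : ℕ) {r : ℕ} (G₀ : SimpleGraph V)
    (F : Finset V) (v : Fin r → V) : Finset V :=
  F ∪ univ.biUnion fun i => lowDegreeBall G₀ D k (v i)

theorem subset_touchedSet {V : Type*} [Fintype V] (D k : ℕ) {r : ℕ} (G₀ : SimpleGraph V)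
    (F : Finset V) (v : Fin r → V) : F ⊆ touchedSet D k G₀ F v :=
  subset_union_left

theorem card_touchedSet_le {V : Type*} [Fintype V] {D k r S₀ : ℕ} {F : Finset V} (hF : #F ≤ S₀)
    (G₀ : SimpleGraph V) (v : Fin r → V) :
    #(touchedSet D k G₀ F v) ≤ S₀ + r * (1 + D) ^ k := by
  refine (card_union_le _ _).trans (Nat.add_le_add hF ?_)
  refine (card_biUnion_le_card_mul _ _ _ fun i _ => card_lowDegreeBall_le _ _ _ _).trans ?_
  rw [card_univ, Fintype.card_fin]

/-- `F` can be freed by a balanced reduction: some planar graph `G₀`, in which the vertices of `F`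
are isolated, differs from `G` only inside the union of `F` and `r` bounded balls of `G₀`, and has
fewer darts than `G`, in the balanced proportion to `#F`. -/
def IsFreeable {V : Type*} [Fintype V] (D k smin S₀ : ℕ) (η : ℝ) (r : ℕ) (G : SimpleGraph V)
    (F : Finset V) : Prop :=
  ∃ (G₀ : SimpleGraph V) (v : Fin r → V), IsPlanar G₀ ∧ (∀ u ∈ F, ∀ w, ¬ G₀.Adj u w) ∧
    IsBalanced smin S₀ η #F (dartCount G - dartCount G₀) ∧
    AgreeOff G G₀ (touchedSet D k G₀ F v)

/-- The pieces `a` and `b` coincide or are joined by an edge, so that they cannot both be reduced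
in the same reduction. -/
def Conflict {V ι : Type*} (G : SimpleGraph V) (pc : V → ι) (a b : ι) : Prop :=
  a = b ∨ ∃ u w, pc u = a ∧ pc w = b ∧ G.Adj u w

instance {V ι : Type*} (G : SimpleGraph V) (pc : V → ι) : Std.Symm (Conflict G pc) where
  symm := by
    rintro a b (rfl | ⟨u, w, hu, hw, h⟩)
    · exact .inl rfl
    · exact .inr ⟨w, u, hw, hu, h.symm⟩

section ConflictFree

variable {V ι : Type*} {G : SimpleGraph V} {pc : V → ι} {r : ℕ} {g : Fin r → ι}
  (hg : Pairwise fun i j => ¬ Conflict G pc (g i) (g j))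

include hg

theorem injective_of_pairwise_not_conflict : Function.Injective g :=
  fun _ _ hij => by_contra fun hne => hg hne (.inl hij)

theorem pairwiseNonadjacent_image : PairwiseNonadjacent G pc (univ.image g) := by
  intro u w huw hu hw
  obtain ⟨i, -, hi⟩ := mem_image.1 hu
  obtain ⟨j, -, hj⟩ := mem_image.1 hw
  by_contra hne
  refine hg (i := i) (j := j) ?_ (.inr ⟨u, w, hi.symm, hj.symm, huw⟩)
  rintro rfl
  exact hne (hi.symm.trans hj)

end ConflictFree

/-- The pieces of `Gd` whose reduction frees as many labels, and loses as many darts, as that of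
`a`. -/
noncomputable def sameType {V ι : Type*} [Fintype V] (G : SimpleGraph V) (pc : V → ι)
    (Gd : Finset ι) (tg : ι → Option V) (a : ι) : Finset ι :=
  {b ∈ Gd | (freedCount pc tg b, dartLoss G pc tg b) = (freedCount pc tg a, dartLoss G pc tg a)}

theorem mem_sameType {V ι : Type*} [Fintype V] {G : SimpleGraph V} {pc : V → ι} {Gd : Finset ι}
    {tg : ι → Option V} {a b : ι} : b ∈ sameType G pc Gd tg a ↔ b ∈ Gd ∧
      freedCount pc tg b = freedCount pc tg a ∧ dartLoss G pc tg b = dartLoss G pc tg a := by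
  rw [sameType, mem_filter, Prod.mk.injEq]

theorem exists_pos_le_mul_card_fiber {α τ : Type*} {A : Finset α} {f : α → ℝ} {ty : α → τ}
    {Ty : Finset τ} (hTy : ∀ a ∈ A, ty a ∈ Ty) {x M : ℝ} (hM : 0 ≤ M) (hx : 0 < x)
    (hf : ∀ a ∈ A, f a ≤ M) (hsum : x ≤ ∑ a ∈ A, f a) :
    ∃ a ∈ A, 0 < f a ∧ x ≤ M * (#Ty * #{b ∈ A | ty b = ty a}) := by
  set P : Finset α := {a ∈ A | 0 < f a}
  have hsumP : x ≤ #P * M :=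
    calc x ≤ ∑ a ∈ A, f a := hsum
      _ ≤ ∑ a ∈ A, if 0 < f a then f a else 0 :=
        sum_le_sum fun a _ => by split_ifs with h <;> linarith
      _ = ∑ a ∈ P, f a := (sum_filter _ _).symm
      _ ≤ #P * M := (sum_le_card_nsmul _ _ _ fun a ha => hf a (mem_filter.1 ha).1).trans_eq
        (nsmul_eq_mul _ _)
  have hP : P.Nonempty := by
    rw [nonempty_iff_ne_empty]
    intro h
    rw [h, card_empty, Nat.cast_zero, zero_mul] at hsumP
    exact hsumP.not_gt hx
  obtain ⟨a, ha, hmax⟩ := exists_max_image P (fun a => #{b ∈ A | ty b = ty a}) hP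
  refine ⟨a, (mem_filter.1 ha).1, (mem_filter.1 ha).2, ?_⟩
  have hcard : #P ≤ #Ty * #{b ∈ A | ty b = ty a} := by
    rw [mul_comm]
    refine card_le_mul_card_image_of_maps_to (fun b hb => hTy b (mem_filter.1 hb).1) _
      fun p hp => ?_
    obtain h | ⟨b, hb⟩ := (P.filter fun b => ty b = p).eq_empty_or_nonempty
    · rw [h, card_empty]
      exact Nat.zero_le _
    · obtain ⟨hbP, rfl⟩ := mem_filter.1 hb
      exact (card_le_card (filter_subset_filter _ (filter_subset _ _))).trans (hmax b hbP)
  calc x ≤ #P * M := hsumP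
    _ ≤ (#Ty * #{b ∈ A | ty b = ty a} : ℕ) * M := by gcongr
    _ = _ := by push_cast; ring

namespace IsReducible

variable {V ι : Type*} [Fintype V] {G : SimpleGraph V} {pc : V → ι} {Gd : Finset ι}
  {tg : ι → Option V} {K D : ℕ} (hred : IsReducible G pc Gd tg K D)

include hred

theorem card_incidentDarts_le {a : ι} (ha : a ∈ Gd) :
    #(incidentDarts G pc a) ≤ 2 * (K * D) := by
  set E : Finset (V × V) := {p | G.Adj p.1 p.2 ∧ pc p.1 = a} with hE
  have hEcard : #E ≤ K * D := by
    have hsub : E ⊆ ({u | pc u = a} : Finset V).biUnion fun u =>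
        (G.neighborFinset u).image fun w => (u, w) := by
      rintro ⟨u, w⟩ h
      simpa [hE, and_comm] using h
    refine (card_le_card hsub).trans <| (card_biUnion_le_card_mul _ _ D fun u hu => ?_).trans <|
      Nat.mul_le_mul_right _ (hred.card_le a ha)
    exact card_image_le.trans (hred.degree_le u ((mem_filter.1 hu).2 ▸ ha))
  have hsub : incidentDarts G pc a ⊆ E ∪ E.image Prod.swap := by
    rintro ⟨u, w⟩ h
    simp only [incidentDarts, mem_filter, mem_univ, true_and] at h
    obtain ⟨h, ha | ha⟩ := h
    · simp [hE, h, ha]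
    · simp [hE, h.symm, ha]
  calc #(incidentDarts G pc a) ≤ #E + #(E.image Prod.swap) :=
        (card_le_card hsub).trans (card_union_le _ _)
    _ ≤ #E + #E := Nat.add_le_add_left card_image_le _
    _ ≤ 2 * (K * D) := by omega

theorem abs_dartLoss_le {a : ι} (ha : a ∈ Gd) : |dartLoss G pc tg a| ≤ (2 * (K * D) : ℕ) := by
  have := hred.card_incidentDarts_le ha
  have := hred.card_pieceBoundary_le ha
  rw [abs_le, dartLoss]
  split_ifs <;> omega

theorem freedCount_le {a : ι} (ha : a ∈ Gd) : freedCount pc tg a ≤ K :=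
  (card_le_card (monotone_filter_right _ fun _ _ h => h.1)).trans (hred.card_le a ha)

theorem card_conflict_le {a : ι} (ha : a ∈ Gd) : #{b ∈ Gd | Conflict G pc a b} ≤ 1 + K * D := by
  have hsub : {b ∈ Gd | Conflict G pc a b} ⊆ {a} ∪ (pieceBoundary G pc a).image pc := by
    intro b hb
    obtain ⟨-, rfl | ⟨u, w, hu, rfl, h⟩⟩ := mem_filter.1 hb
    · exact mem_union_left _ (mem_singleton_self _)
    · by_cases hwa : pc w = a
      · exact mem_union_left _ (mem_singleton.2 hwa)
      · exact mem_union_right _ (mem_image_of_mem _ (mem_pieceBoundary.2 ⟨hwa, u, hu, h⟩))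
  refine (card_le_card hsub).trans ((card_union_le _ _).trans ?_)
  rw [card_singleton]
  exact Nat.add_le_add_left (card_image_le.trans (hred.card_pieceBoundary_le ha)) _

variable {r smin S₀ : ℕ} {η : ℝ}

theorem isFreeable_freedVertices [Nonempty V] (hG : IsPlanar G) {g : Fin r → ι}
    (hgGd : ∀ i, g i ∈ Gd) (hg : Pairwise fun i j => ¬ Conflict G pc (g i) (g j))
    (hbal : IsBalanced smin S₀ η (∑ i, freedCount pc tg (g i)) (∑ i, dartLoss G pc tg (g i))) :
    IsFreeable (K * D) (K + 1) smin S₀ η r G (freedVertices pc tg (univ.image g)) := by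
  have hT : univ.image g ⊆ Gd := image_subset_iff.2 fun i _ => hgGd i
  have hind := pairwiseNonadjacent_image hg
  have hinj := (injective_of_pairwise_not_conflict hg).injOn (s := (univ : Finset (Fin r)))
  have hloss := hred.dartCount_eq_add_sum_dartLoss hT hind
  rw [sum_image hinj, ← sub_eq_iff_eq_add'] at hloss
  obtain ⟨v, hv⟩ := hred.agreeOff_reduce hT hind
  refine ⟨reduce G pc tg (univ.image g), v ∘ g, hred.isPlanar_reduce hT hG,
    fun u hu => hred.not_reduce_adj_of_mem_freedVertices hT hu, ?_, ?_⟩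
  · rwa [card_freedVertices, sum_image hinj, hloss]
  · rwa [image_biUnion] at hv

theorem pow_le_card_isFreeable [Nonempty V] (hG : IsPlanar G) {Q : ℕ} {C : Fin r → Finset ι}
    (hC : ∀ i, C i ⊆ Gd) (hQ : ∀ i, Q + r * (1 + K * D) ≤ #(C i))
    (hbal : ∀ g : Fin r → ι, (∀ i, g i ∈ C i) →
      IsBalanced smin S₀ η (∑ i, freedCount pc tg (g i)) (∑ i, dartLoss G pc tg (g i))) :
    Q ^ r ≤ S₀ ^ r * #{F | IsFreeable (K * D) (K + 1) smin S₀ η r G F} := by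
  refine (pow_le_card_pairwise_not (fun a => hred.card_conflict_le) hC hQ).trans ?_
  refine card_le_mul_card_image_of_maps_to (f := fun g => freedVertices pc tg (univ.image g))
    (fun g hg => ?_) _ fun F hF => ?_
  · obtain ⟨hgC, hg⟩ := mem_filter.1 hg
    rw [Fintype.mem_piFinset] at hgC
    exact mem_filter.2 ⟨mem_univ _,
      hred.isFreeable_freedVertices hG (fun i => hC i (hgC i)) hg (hbal g hgC)⟩
  · obtain ⟨_, _, _, _, hFbal, _⟩ := (mem_filter.1 hF).2
    calc _ ≤ #(Fintype.piFinset fun _ : Fin r => F.image pc) := by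
          refine card_le_card fun g hg => Fintype.mem_piFinset.2 fun i => ?_
          obtain ⟨hg, hgF⟩ := mem_filter.1 hg
          have hgC := Fintype.mem_piFinset.1 (mem_filter.1 hg).1 i
          obtain ⟨u, hu, hne⟩ := hred.exists_freed (g i) (hC i hgC)
          refine mem_image.2 ⟨u, hgF ▸ mem_freedVertices.2 ⟨?_, hu ▸ hne⟩, hu⟩
          exact hu ▸ mem_image_of_mem g (mem_univ i)
      _ ≤ S₀ ^ r := by
        rw [Fintype.card_piFinset_const]
        exact Nat.pow_le_pow_left (card_image_le.trans hFbal.freed_le) r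

theorem pow_le_card_isFreeable_of_sameType [Nonempty V] (hG : IsPlanar G) {Q r₁ r₂ : ℕ}
    {a₁ a₂ : ι}
    (hQ₁ : Q + (r₁ + r₂) * (1 + K * D) ≤ #(sameType G pc Gd tg a₁))
    (hQ₂ : Q + (r₁ + r₂) * (1 + K * D) ≤ #(sameType G pc Gd tg a₂))
    (hbal : IsBalanced smin S₀ η (r₁ * freedCount pc tg a₁ + r₂ * freedCount pc tg a₂)
      (r₁ * dartLoss G pc tg a₁ + r₂ * dartLoss G pc tg a₂)) :
    Q ^ (r₁ + r₂) ≤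
      S₀ ^ (r₁ + r₂) * #{F | IsFreeable (K * D) (K + 1) smin S₀ η (r₁ + r₂) G F} := by
  set C : Fin (r₁ + r₂) → Finset ι :=
    Fin.append (fun _ => sameType G pc Gd tg a₁) fun _ => sameType G pc Gd tg a₂
  refine hred.pow_le_card_isFreeable hG (C := C) (fun i => ?_) (fun i => ?_) fun g hg => ?_
  · refine Fin.addCases (fun i => ?_) (fun i => ?_) i <;>
      simp only [C, Fin.append_left, Fin.append_right] <;> exact filter_subset _ _
  · refine Fin.addCases (fun i => ?_) (fun i => ?_) i <;>
      simpa only [C, Fin.append_left, Fin.append_right]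
  · have h₁ (i : Fin r₁) : freedCount pc tg (g (Fin.castAdd r₂ i)) = freedCount pc tg a₁ ∧
        dartLoss G pc tg (g (Fin.castAdd r₂ i)) = dartLoss G pc tg a₁ :=
      (mem_sameType.1 (by simpa only [C, Fin.append_left] using hg (Fin.castAdd r₂ i))).2
    have h₂ (i : Fin r₂) : freedCount pc tg (g (Fin.natAdd r₁ i)) = freedCount pc tg a₂ ∧
        dartLoss G pc tg (g (Fin.natAdd r₁ i)) = dartLoss G pc tg a₂ :=
      (mem_sameType.1 (by simpa only [C, Fin.append_right] using hg (Fin.natAdd r₁ i))).2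
    simpa only [Fin.sum_univ_add, h₁, h₂, sum_const, card_univ, Fintype.card_fin, smul_eq_mul,
      nsmul_eq_mul] using hbal

theorem exists_pos_le_mul_card_sameType {f : ι → ℝ} {x M : ℝ} (hM : 0 ≤ M) (hx : 0 < x)
    (hf : ∀ a ∈ Gd, f a ≤ M) (hsum : x ≤ ∑ a ∈ Gd, f a) : ∃ a ∈ Gd, 0 < f a ∧
      x ≤ M * (((K + 1) * (4 * (K * D) + 1) : ℕ) * #(sameType G pc Gd tg a)) := by
  set Ty : Finset (ℕ × ℤ) :=
    Finset.range (K + 1) ×ˢ Finset.Icc (-(2 * (K * D) : ℕ) : ℤ) (2 * (K * D) : ℕ) with hTydef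
  have hcard : #Ty = (K + 1) * (4 * (K * D) + 1) := by
    rw [hTydef, card_product, card_range, Int.card_Icc]
    congr 1
    omega
  have hTy : ∀ a ∈ Gd, (freedCount pc tg a, dartLoss G pc tg a) ∈ Ty := fun a ha =>
    mem_product.2 ⟨Finset.mem_range.2 (Nat.lt_succ_of_le (hred.freedCount_le ha)),
      Finset.mem_Icc.2 (abs_le.1 (hred.abs_dartLoss_le ha))⟩
  rw [← hcard]
  clear_value Ty
  obtain ⟨a, ha, hpos, h⟩ := exists_pos_le_mul_card_fiber hTy hM hx hf hsum
  exact ⟨a, ha, hpos, by rw [sameType]; convert h⟩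

end IsReducible

/-- If `l₁ ≤ 4 s₁` or `4 s₂ ≤ l₂` then one of the two pieces is balanced by itself; otherwise a
combination of the two loses exactly four darts per freed label. -/
theorem exists_isBalanced_add {smin K Λ R₀ S₀ s₁ s₂ : ℕ} {l₁ l₂ : ℤ} {η : ℝ} (hη : η ≤ 1)
    (hR₀ : smin * (4 * K + 2 * Λ + 1) ≤ R₀) (hS₀ : R₀ * K ≤ S₀) (hs₁ : 0 < s₁) (hs₂ : 0 < s₂)
    (hs₁K : s₁ ≤ K) (hs₂K : s₂ ≤ K) (hl₁Λ : l₁ ≤ Λ) (hl₂Λ : -Λ ≤ l₂)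
    (hl₁ : 2 * (1 + η) * s₁ ≤ l₁) (hl₂ : (l₂ : ℝ) ≤ 2 * (3 - η) * s₂) :
    ∃ r₁ r₂ : ℕ, r₁ + r₂ ≤ R₀ ∧
      IsBalanced smin S₀ η (r₁ * s₁ + r₂ * s₂) (r₁ * l₁ + r₂ * l₂) := by
  suffices ∃ r₁ r₂ : ℕ, r₁ + r₂ ≤ smin * (4 * K + 2 * Λ + 1) ∧ smin ≤ r₁ * s₁ + r₂ * s₂ ∧
      2 * (1 + η) * (r₁ * s₁ + r₂ * s₂) ≤ r₁ * l₁ + r₂ * l₂ ∧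
      (r₁ * l₁ + r₂ * l₂ : ℝ) ≤ 2 * (3 - η) * (r₁ * s₁ + r₂ * s₂) by
    obtain ⟨r₁, r₂, hr, hmin, hlo, hhi⟩ := this
    refine ⟨r₁, r₂, hr.trans hR₀, hmin, ?_, mod_cast hlo, mod_cast hhi⟩
    calc r₁ * s₁ + r₂ * s₂ ≤ r₁ * K + r₂ * K := by gcongr
      _ = (r₁ + r₂) * K := (add_mul _ _ _).symm
      _ ≤ R₀ * K := Nat.mul_le_mul_right _ (hr.trans hR₀)
      _ ≤ S₀ := hS₀
  have hs₁' : (0 : ℝ) ≤ s₁ := s₁.cast_nonneg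
  have hs₂' : (0 : ℝ) ≤ s₂ := s₂.cast_nonneg
  rcases le_or_gt l₁ (4 * s₁) with h₁ | h₁
  · have h₁' : (l₁ : ℝ) ≤ 4 * s₁ := mod_cast h₁
    exact ⟨smin, 0, by nlinarith, by nlinarith, by push_cast; nlinarith,
      by push_cast; nlinarith [mul_nonneg (sub_nonneg.2 hη) hs₁']⟩
  rcases le_or_gt (4 * s₂ : ℤ) l₂ with h₂ | h₂
  · have h₂' : (4 * s₂ : ℝ) ≤ l₂ := mod_cast h₂
    exact ⟨0, smin, by nlinarith, by nlinarith,
      by push_cast; nlinarith [mul_nonneg (sub_nonneg.2 hη) hs₂'], by push_cast; nlinarith⟩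
  obtain ⟨x, hx⟩ := Int.eq_ofNat_of_zero_le (sub_pos.2 h₂).le
  obtain ⟨y, hy⟩ := Int.eq_ofNat_of_zero_le (sub_pos.2 h₁).le
  have hloss : ((smin * x : ℕ) * l₁ + (smin * y : ℕ) * l₂ : ℝ) =
      4 * ((smin * x : ℕ) * s₁ + (smin * y : ℕ) * s₂) := by
    rify at hx hy
    push_cast
    linear_combination (smin * y : ℝ) * -hx + (smin * x : ℝ) * hy
  have hnonneg : (0 : ℝ) ≤ (1 - η) * ((smin * x : ℕ) * s₁ + (smin * y : ℕ) * s₂) :=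
    mul_nonneg (sub_nonneg.2 hη) (by positivity)
  refine ⟨smin * x, smin * y, ?_, ?_, by rw [hloss]; linarith, by rw [hloss]; linarith⟩
  · rw [← mul_add]
    exact Nat.mul_le_mul_left _ (by omega)
  · calc smin = smin * 1 * 1 := by ring
      _ ≤ smin * x * s₁ := Nat.mul_le_mul (Nat.mul_le_mul_left _ (by omega)) hs₁
      _ ≤ _ := Nat.le_add_right _ _

theorem IsReducible.exists_pow_le_card_isFreeable {V ι : Type*} [Fintype V] [Nonempty V]
    {G : SimpleGraph V} {pc : V → ι} {Gd : Finset ι} {tg : ι → Option V} {K D : ℕ}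
    (hred : IsReducible G pc Gd tg K D) (hG : IsPlanar G) {smin R₀ S₀ : ℕ} {η y : ℝ} (hη : η ≤ 1)
    (hR₀ : smin * (4 * K + 2 * (2 * (K * D)) + 1) ≤ R₀) (hS₀ : R₀ * K < S₀) {a₁ a₂ : ι}
    (ha₁ : a₁ ∈ Gd) (ha₂ : a₂ ∈ Gd)
    (hl₁ : 2 * (1 + η) * freedCount pc tg a₁ ≤ dartLoss G pc tg a₁)
    (hl₂ : (dartLoss G pc tg a₂ : ℝ) ≤ 2 * (3 - η) * freedCount pc tg a₂)
    (hy : 2 * (R₀ * (1 + K * D) : ℕ) + 4 ≤ y) (hy₁ : y ≤ #(sameType G pc Gd tg a₁))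
    (hy₂ : y ≤ #(sameType G pc Gd tg a₂)) :
    ∃ r ≤ R₀, (y / (4 * S₀)) ^ r ≤ #{F | IsFreeable (K * D) (K + 1) smin S₀ η r G F} := by
  obtain ⟨r₁, r₂, hr, hbal⟩ := exists_isBalanced_add hη hR₀ hS₀.le (hred.freedCount_pos ha₁)
    (hred.freedCount_pos ha₂) (hred.freedCount_le ha₁) (hred.freedCount_le ha₂)
    (abs_le.1 (hred.abs_dartLoss_le ha₁)).2 (abs_le.1 (hred.abs_dartLoss_le ha₂)).1 hl₁ hl₂
  have hy₀ : (0 : ℝ) ≤ (R₀ * (1 + K * D) : ℕ) := Nat.cast_nonneg _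
  have hQ : (⌊y / 2⌋₊ : ℝ) ≤ y / 2 := Nat.floor_le (by linarith)
  have hQ' : y / 2 < ⌊y / 2⌋₊ + 1 := Nat.lt_floor_add_one _
  have hfit {m : ℕ} (hm : y ≤ m) : ⌊y / 2⌋₊ + (r₁ + r₂) * (1 + K * D) ≤ m := by
    refine (Nat.add_le_add_left (Nat.mul_le_mul_right _ hr) _).trans ?_
    rify at hy₀ ⊢
    push_cast at hy
    linarith
  refine ⟨r₁ + r₂, hr, ?_⟩
  have hcount := hred.pow_le_card_isFreeable_of_sameType hG (hfit hy₁) (hfit hy₂) hbal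
  have hS₀' : (0 : ℝ) < S₀ := by exact_mod_cast Nat.zero_lt_of_lt hS₀
  rify at hcount
  calc (y / (4 * S₀)) ^ (r₁ + r₂) = (y / 4) ^ (r₁ + r₂) / S₀ ^ (r₁ + r₂) := by
        rw [← div_pow, div_div]
    _ ≤ ⌊y / 2⌋₊ ^ (r₁ + r₂) / S₀ ^ (r₁ + r₂) := by
        gcongr <;> linarith
    _ ≤ _ := by rwa [div_le_iff₀' (by positivity)]

theorem exists_isReducible_of_edgeCount {b B : ℝ} (hb : 1 < b) (hB : B < 3) :
    ∃ c > 0, ∃ η > 0, η ≤ 1 ∧ ∃ K D N : ℕ, ∀ {V : Type w} [Fintype V] {G : SimpleGraph V},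
      N ≤ Fintype.card V → IsPlanar G → b * Fintype.card V ≤ edgeCount G →
      edgeCount G ≤ B * Fintype.card V → ∃ (pc : V → V) (Gd : Finset V) (tg : V → Option V),
        IsReducible G pc Gd tg K D ∧
        c * Fintype.card V ≤
          ∑ a ∈ Gd, ((dartLoss G pc tg a : ℝ) - 2 * (1 + η) * freedCount pc tg a) ∧
        c * Fintype.card V ≤
          ∑ a ∈ Gd, (2 * (3 - η) * freedCount pc tg a - (dartLoss G pc tg a : ℝ)) := by
  set c : ℝ := min ((b - 1) / 2) (3 - B)
  have hc : 0 < c := lt_min (by linarith) (by linarith)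
  have hcb : c ≤ (b - 1) / 2 := min_le_left _ _
  have hcB : c ≤ 3 - B := min_le_right _ _
  set η : ℝ := min (c / 4) 1
  have hη : 0 < η := lt_min (by linarith) one_pos
  have hη₁ : η ≤ 1 := min_le_right _ _
  have hηc : η ≤ c / 4 := min_le_left _ _
  obtain ⟨K, D, N, h⟩ := exists_isReducible.{w} (ξ := c / 82) (by positivity)
  refine ⟨c, hc, η, hη, hη₁, K, D, N, fun {V} _ {G} hN hG hlo hhi => ?_⟩
  obtain ⟨pc, Gd, tg, hred, hfreed, hloss, hloss'⟩ := h hN hG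
  refine ⟨pc, Gd, tg, hred, ?_⟩
  rw [sum_sub_distrib, sum_sub_distrib, ← mul_sum, ← mul_sum]
  have hfreed' : ∑ a ∈ Gd, (freedCount pc tg a : ℝ) ≤ Fintype.card V :=
    mod_cast sum_freedCount_le pc tg Gd
  rw [dartCount_eq_two_mul_edgeCount] at hloss hloss'
  push_cast at hloss hloss'
  have hn : (0 : ℝ) ≤ Fintype.card V := Nat.cast_nonneg _
  constructor <;> nlinarith [mul_nonneg hc.le hn, mul_nonneg hη.le (mul_nonneg hc.le hn)]

theorem exists_pow_le_card_isFreeable {b B : ℝ} (hb : 1 < b) (hB : B < 3) :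
    ∃ η > 0, ∀ smin : ℕ, ∃ β : ℝ, 0 < β ∧ ∃ R₀ S₀ D k N : ℕ,
      ∀ {V : Type w} [Fintype V] {G : SimpleGraph V}, N ≤ Fintype.card V → IsPlanar G →
        b * Fintype.card V ≤ edgeCount G → edgeCount G ≤ B * Fintype.card V →
        ∃ r ≤ R₀, (β * Fintype.card V) ^ r ≤ #{F | IsFreeable D k smin S₀ η r G F} := by
  obtain ⟨c, hc, η, hη, hη₁, K, D, N₀, hdec⟩ := exists_isReducible_of_edgeCount.{w} hb hB
  refine ⟨η, hη, fun smin => ?_⟩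
  set R₀ : ℕ := smin * (4 * K + 2 * (2 * (K * D)) + 1)
  set M : ℝ := 6 * K + (2 * (K * D) : ℕ) + 1
  set T : ℕ := (K + 1) * (4 * (K * D) + 1)
  set y : ℝ := c / (M * T)
  have hM : 0 < M := by positivity
  have hT : 0 < (T : ℝ) := by positivity
  have hy : 0 < y := div_pos hc (mul_pos hM hT)
  obtain ⟨N₁, hN₁⟩ := exists_nat_ge ((2 * (R₀ * (1 + K * D) : ℕ) + 4) / y)
  refine ⟨y / (4 * (R₀ * K + 1 : ℕ)), by positivity, R₀, R₀ * K + 1, K * D, K + 1,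
    max N₀ (max N₁ 1), fun {V} _ {G} hN hG hlo hhi => ?_⟩
  simp only [max_le_iff] at hN
  have : Nonempty V := Fintype.card_pos_iff.1 hN.2.2
  have hn : (0 : ℝ) < Fintype.card V := mod_cast hN.2.2
  obtain ⟨pc, Gd, tg, hred, hlo, hhi⟩ := hdec hN.1 hG hlo hhi
  have hfreed {a : V} (ha : a ∈ Gd) : (freedCount pc tg a : ℝ) ≤ K := mod_cast hred.freedCount_le ha
  have hloss {a : V} (ha : a ∈ Gd) : |(dartLoss G pc tg a : ℝ)| ≤ (2 * (K * D) : ℕ) :=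
    mod_cast hred.abs_dartLoss_le ha
  have hcn : 0 < c * Fintype.card V := by positivity
  obtain ⟨a₁, ha₁, hl₁, hcard₁⟩ := hred.exists_pos_le_mul_card_sameType hM.le hcn (fun a ha => by
    have := hloss ha
    have := hfreed ha
    nlinarith [abs_le.1 (hloss ha), (freedCount pc tg a).cast_nonneg (α := ℝ)]) hlo
  obtain ⟨a₂, ha₂, hl₂, hcard₂⟩ := hred.exists_pos_le_mul_card_sameType hM.le hcn (fun a ha => by
    nlinarith [abs_le.1 (hloss ha), hfreed ha, (freedCount pc tg a).cast_nonneg (α := ℝ)]) hhi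
  have hy₁ {m : ℕ} (hm : c * Fintype.card V ≤ M * (T * m)) : y * Fintype.card V ≤ m := by
    rwa [div_mul_eq_mul_div, div_le_iff₀' (by positivity), mul_assoc]
  rw [div_le_iff₀' hy] at hN₁
  have := hred.exists_pow_le_card_isFreeable hG hη₁ le_rfl (R₀ * K).lt_succ_self ha₁ ha₂
    (sub_pos.1 hl₁).le (sub_pos.1 hl₂).le
    (hN₁.trans (mul_le_mul_of_nonneg_left (mod_cast hN.2.1) hy.le)) (hy₁ hcard₁) (hy₁ hcard₂)
  rwa [mul_div_right_comm] at this

/-! ### Building on the freed vertices -/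

/-- The vertex sets of the components of `G` admitting an order-preserving isomorphism to `H`. -/
noncomputable def orderComponents {h n : ℕ} (H : SimpleGraph (Fin h)) (G : SimpleGraph (Fin n)) :
    Finset (Finset (Fin n)) :=
  {W | IsComponent G W ∧ IsOrderCopy H G W}

section OrderComponents

variable {h n : ℕ} {H : SimpleGraph (Fin h)} {G G' : SimpleGraph (Fin n)} {W : Finset (Fin n)}

theorem mem_orderComponents :
    W ∈ orderComponents H G ↔ IsComponent G W ∧ IsOrderCopy H G W := by
  rw [orderComponents, mem_filter_univ]

theorem card_orderComponents (H : SimpleGraph (Fin h)) (G : SimpleGraph (Fin n)) :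
    #(orderComponents H G) = numOrderComponents H G := by
  rw [← Set.ncard_coe_finset, orderComponents, coe_filter_univ, numOrderComponents]

theorem mem_orderComponents_of_adj_iff (hadj : ∀ u ∈ W, ∀ w, G.Adj u w ↔ G'.Adj u w)
    (hW : W ∈ orderComponents H G) : W ∈ orderComponents H G' := by
  obtain ⟨⟨hconn, hclosed⟩, hcard, hcopy⟩ := mem_orderComponents.1 hW
  refine mem_orderComponents.2 ⟨⟨hconn.mono fun u w => (hadj u u.2 w).1, fun u hu w huw =>
    hclosed u hu w ((hadj u hu w).2 huw)⟩, hcard, fun i j => ?_⟩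
  rw [hcopy, hadj _ (Subtype.prop _)]

end OrderComponents

section SupMap

variable {V α : Type*} {G : SimpleGraph V} {K : SimpleGraph α} {e : α ↪ V} {x : α} {y u w : V}

theorem sup_map_adj_of_notMem (hu : u ∉ Set.range e) :
    (G ⊔ K.map e).Adj u w ↔ G.Adj u w := by
  rw [sup_adj, or_iff_left]
  rintro h
  obtain ⟨a, _, _, rfl, _⟩ := (map_adj ..).1 h
  exact hu ⟨a, rfl⟩

theorem _root_.IsPlanar.sup_edge {A : Set V} (hG : IsPlanar G)
    (hA : ∀ u ∈ A, ∀ w, G.Adj u w → w ∈ A) (hu : u ∈ A) (hw : w ∉ A) :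
    IsPlanar (G ⊔ edge u w) := by
  refine isPlanar_of_bridge (A := A) (x := u) (y := w) ?_ ((hG.induce A).mono ?_)
    ((hG.induce Aᶜ).mono ?_) <;>
  · simp only [le_iff_adj, comap_adj, Function.Embedding.subtype_apply, Subtype.forall,
      Set.mem_compl_iff, sup_adj, edge_adj]
    grind

variable (hiso : ∀ a w, ¬ G.Adj (e a) w)

include hiso

theorem sup_map_adj_apply {a : α} : (G ⊔ K.map e).Adj (e a) w ↔ ∃ b, K.Adj a b ∧ e b = w := by
  rw [sup_adj, or_iff_right (hiso a w), map_adj]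
  constructor
  · rintro ⟨a', b, hab, ha, rfl⟩
    exact ⟨b, e.injective ha ▸ hab, rfl⟩
  · rintro ⟨b, hab, rfl⟩
    exact ⟨a, b, hab, rfl, rfl⟩

theorem mem_range_of_sup_map_adj (hu : u ∈ Set.range e) (h : (G ⊔ K.map e).Adj u w) :
    w ∈ Set.range e := by
  obtain ⟨a, rfl⟩ := hu
  obtain ⟨b, -, rfl⟩ := (sup_map_adj_apply hiso).1 h
  exact ⟨b, rfl⟩

theorem _root_.IsPlanar.sup_map (hG : IsPlanar G) (hK : IsPlanar K) : IsPlanar (G ⊔ K.map e) := by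
  obtain _ | ⟨⟨y⟩⟩ := isEmpty_or_nonempty V
  · exact hG.mono fun u => isEmptyElim u
  refine isPlanar_of_bridge (A := Set.range e) (x := y) (y := y)
    (fun u hu w hw h => absurd (mem_range_of_sup_map_adj hiso hu h) hw)
    (((hK.map e).induce _).mono ?_) ((hG.induce _).mono ?_)
  · rintro ⟨_, a, rfl⟩ w h
    exact h.resolve_left (hiso a w)
  · exact fun u w h => (sup_map_adj_of_notMem u.2).1 h

theorem edgeCount_sup_map [Finite V] :
    edgeCount (G ⊔ K.map e) = edgeCount G + edgeCount K := by
  have : Finite α := Finite.of_injective e e.injective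
  rw [edgeCount, edgeSet_sup, Set.ncard_union_eq ?_, edgeSet_map,
    Set.ncard_image_of_injective _ e.sym2Map.injective, edgeCount, edgeCount]
  rw [Set.disjoint_left]
  rintro ⟨u, w⟩ huw h
  obtain ⟨a, -, -, rfl, -⟩ := (map_adj ..).1 h
  exact hiso a w huw

end SupMap

theorem mem_orderComponents_sup_map {n s : ℕ} {G : SimpleGraph (Fin n)} {H : SimpleGraph (Fin s)}
    (hH : H.Connected) {W : Finset (Fin n)} (hW : #W = s) (hiso : ∀ u ∈ W, ∀ w, ¬ G.Adj u w) :
    W ∈ orderComponents H (G ⊔ H.map (W.orderEmbOfFin hW).toEmbedding) := by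
  set e : Fin s ↪ Fin n := (W.orderEmbOfFin hW).toEmbedding
  have hrange : Set.range e = W := range_orderEmbOfFin W hW
  have hiso' (a : Fin s) : ∀ w, ¬ G.Adj (e a) w := hiso _ (orderEmbOfFin_mem W hW a)
  have hadj (a b : Fin s) : (G ⊔ H.map e).Adj (e a) (e b) ↔ H.Adj a b := by
    simp [sup_map_adj_apply hiso', e.injective.eq_iff]
  refine mem_orderComponents.2 ⟨⟨?_, fun u hu w huw => ?_⟩, hW, fun i j => (hadj i j).symm⟩
  · have φ : H ≃g (G ⊔ H.map e).induce (W : Set (Fin n)) :=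
      { toEquiv := (W.orderIsoOfFin hW).toEquiv
        map_rel_iff' := fun {a b} => hadj a b }
    exact φ.connected_iff.1 hH
  · rw [← mem_coe, ← hrange] at hu ⊢
    exact mem_range_of_sup_map_adj hiso' hu huw

/-- The graph obtained from `G` by drawing a copy of `K` along `e` and joining the vertex `x` of the
copy to the vertex `y` of `G`. -/
def plant {V α : Type*} (G : SimpleGraph V) (K : SimpleGraph α) (e : α ↪ V) (x : α) (y : V) :
    SimpleGraph V :=
  G ⊔ K.map e ⊔ edge (e x) y

section Plant

variable {V α : Type*} {G : SimpleGraph V} {K : SimpleGraph α} {e : α ↪ V} {x : α} {y u w : V}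

theorem plant_adj_of_notMem (hu : u ∉ Set.range e) (huy : u ≠ y) :
    (plant G K e x y).Adj u w ↔ G.Adj u w := by
  have hux : u ≠ e x := fun h => hu ⟨x, h.symm⟩
  rw [plant, sup_adj, sup_map_adj_of_notMem hu, edge_adj]
  tauto

theorem plant_adj_of_notMem_of_notMem (hu : u ∉ Set.range e) (hw : w ∉ Set.range e) :
    (plant G K e x y).Adj u w ↔ G.Adj u w := by
  have hux : u ≠ e x := fun h => hu ⟨x, h.symm⟩
  have hwx : w ≠ e x := fun h => hw ⟨x, h.symm⟩
  rw [plant, sup_adj, sup_map_adj_of_notMem hu, edge_adj]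
  tauto

variable (hiso : ∀ a w, ¬ G.Adj (e a) w) (hy : y ∉ Set.range e)

include hiso hy

theorem plant_adj_apply {a : α} :
    (plant G K e x y).Adj (e a) w ↔ (∃ b, K.Adj a b ∧ e b = w) ∨ a = x ∧ w = y := by
  have hay : e a ≠ y := fun h => hy ⟨a, h⟩
  rw [plant, sup_adj, sup_map_adj_apply hiso, edge_adj, e.injective.eq_iff]
  refine or_congr_right ⟨by tauto, ?_⟩
  rintro ⟨rfl, rfl⟩
  exact ⟨.inl ⟨rfl, rfl⟩, hay⟩

theorem isPlanar_plant (hG : IsPlanar G) (hK : IsPlanar K) : IsPlanar (plant G K e x y) :=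
  (hG.sup_map hiso hK).sup_edge (fun _ hu _ => mem_range_of_sup_map_adj hiso hu) ⟨x, rfl⟩ hy

theorem edgeCount_plant [Finite V] :
    edgeCount (plant G K e x y) = edgeCount G + edgeCount K + 1 := by
  have hne : e x ≠ y := fun h => hy ⟨x, h⟩
  rw [plant, ← edgeCount_sup_map hiso, edgeCount, edgeSet_sup, edgeSet_edge_of_ne hne,
    Set.union_singleton, Set.ncard_insert_of_notMem, edgeCount]
  exact fun h => hy (mem_range_of_sup_map_adj hiso ⟨x, rfl⟩ h)

theorem neighborFinset_plant [Fintype V] [DecidableEq V] [Fintype α] (hx : K.IsUniversal x) :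
    (plant G K e x y).neighborFinset (e x) = insert y ((univ.map e).erase (e x)) := by
  ext w
  rw [mem_neighborFinset, plant_adj_apply hiso hy, mem_insert, mem_erase, Finset.mem_map]
  constructor
  · rintro (⟨b, hb, rfl⟩ | ⟨-, rfl⟩)
    · exact .inr ⟨fun h => hb.ne' (e.injective h), b, mem_univ b, rfl⟩
    · exact .inl rfl
  · rintro (rfl | ⟨hw, b, -, rfl⟩)
    · exact .inr ⟨rfl, rfl⟩
    · exact .inl ⟨b, hx fun h => hw (h ▸ rfl), rfl⟩

end Plant

section Completion

variable {ι : Type*} {n : ℕ} {h : ι → ℕ}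

/-- `G₁` is obtained from `G₀` by drawing components ordered like the members of the family `L` of
graphs from `H` on isolated vertices; `𝒟` is the set of these components. -/
structure IsPlacement (H : ∀ i, SimpleGraph (Fin (h i))) (L : Multiset ι)
    (G₀ G₁ : SimpleGraph (Fin n)) (𝒟 : Finset (Finset (Fin n))) : Prop where
  isPlanar : IsPlanar G₁
  edgeCount_eq : edgeCount G₁ = edgeCount G₀ + (L.map fun i => edgeCount (H i)).sum
  card_biUnion : #(𝒟.biUnion id) = (L.map h).sum
  adj_iff : ∀ u ∉ 𝒟.biUnion id, ∀ w, G₁.Adj u w ↔ G₀.Adj u w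
  exists_mem : ∀ W ∈ 𝒟, ∃ i ∈ L, W ∈ orderComponents (H i) G₁
  count_le : ∀ i, L.count i ≤ #(𝒟 ∩ orderComponents (H i) G₁)

/-- `G'` is obtained from the planar graph `G₀` by drawing on the isolated vertices of `F`, for each
`i ∈ I`, at least `t` components ordered like `H i`, and on the remaining vertices of `F` a graph in
which `hub` is adjacent to all other vertices, and by joining `hub` to `y`. The set of the new
components is `𝒟`. -/
structure IsCompletion (H : ∀ i, SimpleGraph (Fin (h i))) (t : ℕ) (I : Finset ι)
    (G₀ : SimpleGraph (Fin n)) (F : Finset (Fin n)) (y : Fin n) (G' : SimpleGraph (Fin n))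
    (hub : Fin n) (𝒟 : Finset (Finset (Fin n))) : Prop where
  isPlanar : IsPlanar G'
  adj_iff : ∀ u ∉ F, ∀ w ∉ F, G'.Adj u w ↔ G₀.Adj u w
  eq_of_adj : ∀ u ∈ F, ∀ w ∉ F, G'.Adj u w → w = y
  mem_neighborFinset : y ∈ G'.neighborFinset hub
  card_neighborFinset_le : #(G'.neighborFinset hub) ≤ #F
  eq_union : F = (insert hub (G'.neighborFinset hub)).erase y ∪ 𝒟.biUnion id
  exists_mem : ∀ W ∈ 𝒟, ∃ i ∈ I, W ∈ orderComponents (H i) G'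
  le_numOrderComponents : ∀ i ∈ I, t ≤ numOrderComponents (H i) G'

variable {H : ∀ i, SimpleGraph (Fin (h i))} {G₀ G₁ : SimpleGraph (Fin n)} {F : Finset (Fin n)}
  {𝒟 : Finset (Finset (Fin n))} {L : Multiset ι}

theorem count_cons_le_card_insert_inter {κ β : Type*} [DecidableEq κ] [DecidableEq β]
    {L : Multiset κ} {i k : κ} {A B : Finset β} {W : β} (hcount : L.count k ≤ #(A ∩ B)) (hW : W ∉ A)
    (hWB : k = i → W ∈ B) : (i ::ₘ L).count k ≤ #(insert W A ∩ B) := by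
  obtain rfl | hk := eq_or_ne k i
  · rw [Multiset.count_cons_self, insert_inter_of_mem (hWB rfl), card_insert_of_notMem]
    · exact Nat.succ_le_succ hcount
    · exact fun h => hW (mem_inter.1 h).1
  · rw [Multiset.count_cons_of_ne hk]
    exact hcount.trans (card_le_card (inter_subset_inter_right (subset_insert _ _)))

theorem IsPlacement.cons (hpl : IsPlacement H L G₀ G₁ 𝒟) {i : ι} (hconn : (H i).Connected)
    (hplanar : IsPlanar (H i)) {W : Finset (Fin n)} (hW : #W = h i)
    (hdisj : Disjoint W (𝒟.biUnion id)) (hiso : ∀ u ∈ W, ∀ w, ¬ G₁.Adj u w) :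
    IsPlacement H (i ::ₘ L) G₀ (G₁ ⊔ (H i).map (W.orderEmbOfFin hW).toEmbedding)
      (insert W 𝒟) := by
  have hWmem := mem_orderComponents_sup_map hconn hW hiso
  set e : Fin (h i) ↪ Fin n := (W.orderEmbOfFin hW).toEmbedding
  have hrange : Set.range e = W := range_orderEmbOfFin W hW
  have hiso' (a : Fin (h i)) : ∀ w, ¬ G₁.Adj (e a) w := hiso _ (orderEmbOfFin_mem W hW a)
  have hout {u : Fin n} (hu : u ∉ W) (w : Fin n) : (G₁ ⊔ (H i).map e).Adj u w ↔ G₁.Adj u w :=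
    sup_map_adj_of_notMem (by rwa [hrange])
  have hmono {W' : Finset (Fin n)} (hW' : W' ∈ 𝒟) {k : ι} :
      W' ∈ orderComponents (H k) G₁ → W' ∈ orderComponents (H k) (G₁ ⊔ (H i).map e) :=
    mem_orderComponents_of_adj_iff fun u hu w => (hout (fun huW =>
      Finset.disjoint_left.1 hdisj huW (mem_biUnion.2 ⟨W', hW', hu⟩)) w).symm
  have hnotMem : W ∉ 𝒟 := by
    intro hW𝒟
    obtain ⟨a⟩ := hconn.nonempty
    have ha : e a ∈ W := orderEmbOfFin_mem W hW a
    exact Finset.disjoint_left.1 hdisj ha (mem_biUnion.2 ⟨W, hW𝒟, ha⟩)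
  have hunion : (insert W 𝒟).biUnion id = W ∪ 𝒟.biUnion id := biUnion_insert
  refine ⟨hpl.isPlanar.sup_map hiso' hplanar, ?_, ?_, fun u hu w => ?_, fun W' hW' => ?_,
    fun k => ?_⟩
  · rw [edgeCount_sup_map hiso', hpl.edgeCount_eq, Multiset.map_cons, Multiset.sum_cons]
    ring
  · rw [hunion, card_union_of_disjoint hdisj, hW, hpl.card_biUnion, Multiset.map_cons,
      Multiset.sum_cons]
  · rw [hunion, mem_union, not_or] at hu
    rw [hout hu.1, hpl.adj_iff u hu.2]
  · obtain rfl | hW' := mem_insert.1 hW'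
    · exact ⟨i, Multiset.mem_cons_self _ _, hWmem⟩
    · obtain ⟨k, hk, hW'k⟩ := hpl.exists_mem W' hW'
      exact ⟨k, Multiset.mem_cons_of_mem hk, hmono hW' hW'k⟩
  · have hsub : 𝒟 ∩ orderComponents (H k) G₁ ⊆
        𝒟 ∩ orderComponents (H k) (G₁ ⊔ (H i).map e) := fun W' hW' =>
      mem_inter.2 ⟨(mem_inter.1 hW').1, hmono (mem_inter.1 hW').1 (mem_inter.1 hW').2⟩
    exact count_cons_le_card_insert_inter ((hpl.count_le k).trans (card_le_card hsub)) hnotMem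
      fun hk => hk ▸ hWmem

section Isolated

variable (hiso : ∀ u ∈ F, ∀ w, ¬ G₀.Adj u w)

include hiso

theorem IsPlacement.not_adj (hpl : IsPlacement H L G₀ G₁ 𝒟) {u : Fin n}
    (hu : u ∈ F \ 𝒟.biUnion id) (w : Fin n) : ¬ G₁.Adj u w := by
  rw [Finset.mem_sdiff] at hu
  rw [hpl.adj_iff u hu.2]
  exact hiso u hu.1 w

theorem exists_isPlacement (hconn : ∀ i, (H i).Connected) (hplanar : ∀ i, IsPlanar (H i))
    (hG₀ : IsPlanar G₀) (L : Multiset ι) (hL : (L.map h).sum ≤ #F) :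
    ∃ G₁ 𝒟, IsPlacement H L G₀ G₁ 𝒟 ∧ 𝒟.biUnion id ⊆ F := by
  induction L using Multiset.induction with
  | empty => exact ⟨G₀, ∅, ⟨hG₀, by simp, by simp, by simp, by simp, by simp⟩, by simp⟩
  | cons i L ih =>
    rw [Multiset.map_cons, Multiset.sum_cons] at hL
    obtain ⟨G₁, 𝒟, hpl, hF⟩ := ih (by omega)
    obtain ⟨W, hWF, hW⟩ := exists_subset_card_eq (s := F \ 𝒟.biUnion id) (n := h i) (by
      rw [card_sdiff_of_subset hF, hpl.card_biUnion]
      omega)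
    refine ⟨_, insert W 𝒟, hpl.cons (hconn i) (hplanar i) hW ?_ fun u hu =>
      hpl.not_adj hiso (hWF hu), ?_⟩
    · exact disjoint_sdiff_self_left.mono_left hWF
    · rw [biUnion_insert]
      exact union_subset (hWF.trans sdiff_subset) hF

theorem IsPlacement.isCompletion {t : ℕ} {I : Finset ι}
    (hpl : IsPlacement H (t • I.val) G₀ G₁ 𝒟) (hF : 𝒟.biUnion id ⊆ F) {α : Type*} [Fintype α]
    {K : SimpleGraph α} (hK : IsPlanar K) {x : α} (hx : K.IsUniversal x) {e : α ↪ Fin n}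
    (he : univ.map e = F \ 𝒟.biUnion id) {y : Fin n} (hy : y ∉ F) :
    IsCompletion H t I G₀ F y (plant G₁ K e x y) (e x) 𝒟 := by
  have hrange {u : Fin n} : u ∈ Set.range e ↔ u ∈ F ∧ u ∉ 𝒟.biUnion id := by
    rw [← Finset.mem_sdiff, ← he]
    simp
  have hiso' (a : α) : ∀ w, ¬ G₁.Adj (e a) w :=
    hpl.not_adj hiso (he ▸ mem_map_of_mem e (mem_univ a))
  have hye : y ∉ Set.range e := fun h => hy (hrange.1 h).1
  have hnotMem {u : Fin n} (hu : u ∉ F) : u ∉ Set.range e := fun h => hu (hrange.1 h).1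
  have hmono {W : Finset (Fin n)} (hW : W ∈ 𝒟) {i : ι} :
      W ∈ orderComponents (H i) G₁ → W ∈ orderComponents (H i) (plant G₁ K e x y) :=
    mem_orderComponents_of_adj_iff fun u hu w => by
      have hu : u ∈ 𝒟.biUnion id := mem_biUnion.2 ⟨W, hW, hu⟩
      refine (plant_adj_of_notMem (fun h => (hrange.1 h).2 hu) ?_).symm
      rintro rfl
      exact hy (hF hu)
  have hnbr := neighborFinset_plant hiso' hye hx
  have hxF : e x ∈ F \ 𝒟.biUnion id := he ▸ mem_map_of_mem e (mem_univ x)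
  refine ⟨isPlanar_plant hiso' hye hpl.isPlanar hK, fun u hu w hw => ?_, fun u hu w hw huw => ?_,
    hnbr ▸ mem_insert_self _ _, ?_, ?_, fun W hW => ?_, fun i hi => ?_⟩
  · rw [plant_adj_of_notMem_of_notMem (hnotMem hu) (hnotMem hw),
      hpl.adj_iff u fun h => hu (hF h)]
  · by_contra hwy
    rw [adj_comm, plant_adj_of_notMem (hnotMem hw) hwy, hpl.adj_iff w fun h => hw (hF h)] at huw
    exact hiso u hu w huw.symm
  · rw [hnbr, he, card_insert_of_notMem fun h => hy (Finset.mem_sdiff.1 (mem_of_mem_erase h)).1,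
      card_erase_add_one hxF]
    exact card_le_card sdiff_subset
  · rw [hnbr, he, insert_comm, insert_erase hxF,
      erase_insert fun h => hy (Finset.mem_sdiff.1 h).1, sdiff_union_of_subset hF]
  · obtain ⟨i, hi, hWi⟩ := hpl.exists_mem W hW
    exact ⟨i, Multiset.mem_of_mem_nsmul hi, hmono hW hWi⟩
  · calc t = (t • I.val).count i := by
          rw [Multiset.count_nsmul, Multiset.count_eq_one_of_mem I.nodup hi, mul_one]
      _ ≤ #(𝒟 ∩ orderComponents (H i) G₁) := hpl.count_le i
      _ ≤ #(orderComponents (H i) (plant G₁ K e x y)) := card_le_card fun W hW =>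
        hmono (mem_inter.1 hW).1 (mem_inter.1 hW).2
      _ = _ := card_orderComponents _ _

theorem exists_isCompletion [Fintype ι] (hconn : ∀ i, (H i).Connected)
    (hplanar : ∀ i, IsPlanar (H i)) (hG₀ : IsPlanar G₀) (t : ℕ) (I : Finset ι) {y : Fin n}
    (hy : y ∉ F) {j : ℕ}
    (hj : #F + t * ∑ i, edgeCount (H i) + 1 ≤ j) (hj' : j + 3 * (t * ∑ i, h i) + 8 ≤ 3 * #F) :
    ∃ G' hub 𝒟, edgeCount G' = edgeCount G₀ + j ∧ IsCompletion H t I G₀ F y G' hub 𝒟 := by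
  have hsum (f : ι → ℕ) : ((t • I.val).map f).sum ≤ t * ∑ i, f i := by
    rw [Multiset.map_nsmul, Multiset.sum_nsmul, smul_eq_mul]
    exact Nat.mul_le_mul_left _ (sum_le_univ_sum_of_nonneg fun _ => Nat.zero_le _)
  have hh := hsum h
  have hedge := hsum fun i => edgeCount (H i)
  obtain ⟨G₁, 𝒟, hpl, hsub⟩ :=
    exists_isPlacement hiso hconn hplanar hG₀ (t • I.val) (by omega)
  have hcard : #(F \ 𝒟.biUnion id) = #F - ((t • I.val).map h).sum := by
    rw [card_sdiff_of_subset hsub, hpl.card_biUnion]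
  obtain ⟨K, hK, hKedge, hx⟩ := exists_isPlanar_isUniversal
    (σ := #F - ((t • I.val).map h).sum)
    (μ := j - 1 - ((t • I.val).map fun i => edgeCount (H i)).sum)
    ⟨0, by omega⟩ rfl (by omega) (by omega)
  have he := map_orderEmbOfFin_univ (F \ 𝒟.biUnion id) hcard
  refine ⟨_, _, 𝒟, ?_, hpl.isCompletion hiso hsub hK hx he hy⟩
  rw [edgeCount_plant, hpl.edgeCount_eq, hKedge]
  · omega
  · exact fun a => hpl.not_adj hiso (orderEmbOfFin_mem _ hcard a)
  · rintro ⟨a, rfl⟩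
    exact hy (Finset.mem_sdiff.1 (orderEmbOfFin_mem _ hcard a)).1

end Isolated

end Completion

/-! ### Double counting -/

section AgreeOff

variable {V : Type*} {G G₀ G' : SimpleGraph V} {W W' Z : Set V}

theorem AgreeOff.symm (h : AgreeOff G G' W) : AgreeOff G' G W :=
  fun u w huw => (h u w huw).symm

theorem AgreeOff.trans (h : AgreeOff G G₀ W) (h' : AgreeOff G₀ G' W') (hW : W ⊆ Z)
    (hW' : W' ⊆ Z) : AgreeOff G G' Z := fun u w huw =>
  (h u w fun hu => huw ⟨hW hu.1, hW hu.2⟩).trans (h' u w fun hu => huw ⟨hW' hu.1, hW' hu.2⟩)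

theorem card_filter_agreeOff_le [Fintype V] (G₀ : SimpleGraph V) (W : Finset V) :
    #{G | AgreeOff G G₀ (W : Set V)} ≤ 2 ^ (#W * #W) := by
  rw [← card_product, ← card_powerset]
  refine card_le_card_of_injOn (fun G => {p ∈ W ×ˢ W | G.Adj p.1 p.2})
    (fun G _ => mem_powerset.2 (filter_subset _ _)) fun G hG G' hG' heq => ?_
  rw [coe_filter_univ, Set.mem_ofPred_eq] at hG hG'
  ext u w
  by_cases huw : u ∈ W ∧ w ∈ W
  · simpa [huw] using Finset.ext_iff.1 heq (u, w)
  · rw [hG u w huw, hG' u w huw]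

end AgreeOff

theorem _root_.IsComponent.subset_of_mem {V : Type*} {G : SimpleGraph V} {W W' : Finset V} {u : V}
    (hW : IsComponent G W) (hW' : IsComponent G W') (hu : u ∈ W) (hu' : u ∈ W') : W' ⊆ W := by
  intro w hw
  by_contra hwW
  obtain ⟨x, -, y, -, hx, hy, hxy⟩ := preconnected_induce_iff_exists_adj.1 hW'.1.preconnected W
    u hu' w hw hu hwW
  exact hy (hW.2 x hx y hxy)

theorem numOrderComponents_le_add_card {h n : ℕ} (H : SimpleGraph (Fin h))
    {G G' : SimpleGraph (Fin n)} {W : Finset (Fin n)} (hW : AgreeOff G G' (W : Set (Fin n))) :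
    numOrderComponents H G ≤ numOrderComponents H G' + #W := by
  rw [← card_orderComponents, ← card_orderComponents,
    ← card_filter_add_card_filter_not (s := orderComponents H G) fun A => Disjoint A W]
  refine Nat.add_le_add (card_le_card fun A hA => ?_) ?_
  · obtain ⟨hA, hdisj⟩ := mem_filter.1 hA
    exact mem_orderComponents_of_adj_iff (fun u hu w => hW u w fun huw =>
      Finset.disjoint_left.1 hdisj hu huw.1) hA
  · refine card_le_card_of_forall_subsingleton (fun A u => u ∈ A) (fun A hA => ?_)
      fun u _ A hA A' hA' => ?_
    · obtain ⟨u, huA, huW⟩ := not_disjoint_iff.1 (mem_filter.1 hA).2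
      exact ⟨u, huW, huA⟩
    · have hcomp {A : Finset (Fin n)} (hA : A ∈ {A ∈ orderComponents H G | ¬ Disjoint A W}) :
          IsComponent G A := (mem_orderComponents.1 (mem_filter.1 hA).1).1
      exact Subset.antisymm ((hcomp hA'.1).subset_of_mem (hcomp hA.1) hA'.2 hA.2)
        ((hcomp hA.1).subset_of_mem (hcomp hA'.1) hA.2 hA'.2)

theorem IsBalanced.exists_edgeCount_eq_add {V : Type*} [Fintype V] {G G₀ : SimpleGraph V}
    {smin S₀ s c : ℕ} {η : ℝ} (hbal : IsBalanced smin S₀ η s (dartCount G - dartCount G₀))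
    (hη : 0 < η) (hc : c ≤ η * smin) :
    ∃ j, edgeCount G = edgeCount G₀ + j ∧ s + c ≤ j ∧ j + c ≤ 3 * s := by
  obtain ⟨hs, -, hlo, hhi⟩ := hbal
  have hηs : (c : ℝ) ≤ η * s := hc.trans (by gcongr)
  rw [dartCount_eq_two_mul_edgeCount, dartCount_eq_two_mul_edgeCount] at hlo hhi
  push_cast at hlo hhi
  have hlo' : edgeCount G₀ + s + c ≤ edgeCount G := by
    rify
    linarith
  have hhi' : edgeCount G + c ≤ edgeCount G₀ + 3 * s := by
    rify
    linarith
  exact ⟨edgeCount G - edgeCount G₀, by omega, by omega, by omega⟩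

/-- The graphs in which `F` could have been freed before completing to `G'`. -/
noncomputable def sourceCandidates {V : Type*} [Fintype V] (D k r : ℕ) (G' : SimpleGraph V)
    (F : Finset V) : Finset (SimpleGraph V) :=
  let G₀ := (G'.induce (F : Set V)ᶜ).spanningCoe
  univ.biUnion fun v : Fin r → V => {G | AgreeOff G G₀ (touchedSet D k G₀ F v)}

theorem mem_sourceCandidates {V : Type*} [Fintype V] {D k r : ℕ} {G G₀ G' : SimpleGraph V}
    {F : Finset V} (hG₀ : (G'.induce (F : Set V)ᶜ).spanningCoe = G₀) :
    G ∈ sourceCandidates D k r G' F ↔ ∃ v : Fin r → V, AgreeOff G G₀ (touchedSet D k G₀ F v) := by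
  simp [sourceCandidates, hG₀]

theorem card_sourceCandidates_le {V : Type*} [Fintype V] {D k r S₀ w : ℕ} {F : Finset V}
    (hF : #F ≤ S₀) (hw : S₀ + r * (1 + D) ^ k ≤ w) (G' : SimpleGraph V) :
    #(sourceCandidates D k r G' F) ≤ Fintype.card V ^ r * 2 ^ (w * w) := by
  refine (card_biUnion_le_card_mul _ _ (2 ^ (w * w)) fun v _ => ?_).trans_eq (by simp)
  refine (card_filter_agreeOff_le _ _).trans (Nat.pow_le_pow_right two_pos ?_)
  exact Nat.mul_self_le_mul_self ((card_touchedSet_le hF _ v).trans hw)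

section Recovery

variable {ι : Type*} {n : ℕ} {h : ι → ℕ} {H : ∀ i, SimpleGraph (Fin (h i))}
  {G G₀ G' : SimpleGraph (Fin n)} {F : Finset (Fin n)} {y hub : Fin n} {I : Finset ι}
  {𝒟 : Finset (Finset (Fin n))} {t D k smin S₀ r w M : ℕ} {η : ℝ}

namespace IsCompletion

variable (hcompl : IsCompletion H t I G₀ F y G' hub 𝒟) (hiso : ∀ u ∈ F, ∀ w, ¬ G₀.Adj u w)

include hcompl hiso

theorem spanningCoe_induce_compl : (G'.induce (F : Set (Fin n))ᶜ).spanningCoe = G₀ := by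
  ext u x
  rw [spanningCoe_induce_adj, Set.mem_compl_iff, Set.mem_compl_iff, mem_coe, mem_coe]
  constructor
  · exact fun ⟨hu, hx, hux⟩ => (hcompl.adj_iff u hu x hx).1 hux
  · intro hux
    have hu : u ∉ F := fun hu => hiso u hu x hux
    have hx : x ∉ F := fun hx => hiso x hx u hux.symm
    exact ⟨hu, hx, (hcompl.adj_iff u hu x hx).2 hux⟩

theorem agreeOff : AgreeOff G₀ G' (insert y F : Finset (Fin n)) := by
  intro u x hux
  rw [mem_coe, mem_coe, mem_insert, mem_insert] at hux
  have hcross {a b : Fin n} (ha : a ∈ F) (hb : b ≠ y) (hbF : b ∉ F) : ¬ G'.Adj a b :=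
    fun hab => hb (hcompl.eq_of_adj a ha b hbF hab)
  by_cases hu : u ∈ F
  · exact iff_of_false (hiso u hu x) (hcross hu (by tauto) (by tauto))
  · by_cases hx : x ∈ F
    · rw [G₀.adj_comm, G'.adj_comm]
      exact iff_of_false (hiso x hx u) (hcross hx (by tauto) (by tauto))
    · exact (hcompl.adj_iff u hu x hx).symm

end IsCompletion

section Candidates

/-- All components of `G` ordered like one of those `H i` that have fewer than `M` such
components. -/
noncomputable def rareComponents [Fintype ι] (H : ∀ i, SimpleGraph (Fin (h i))) (M : ℕ)
    (G : SimpleGraph (Fin n)) : Finset (Finset (Fin n)) :=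
  ({i | numOrderComponents (H i) G < M} : Finset ι).biUnion fun i => orderComponents (H i) G

theorem card_rareComponents_le [Fintype ι] (H : ∀ i, SimpleGraph (Fin (h i))) (M : ℕ)
    (G : SimpleGraph (Fin n)) : #(rareComponents H M G) ≤ Fintype.card ι * M := by
  refine (card_biUnion_le_card_mul _ _ M fun i hi => ?_).trans
    (Nat.mul_le_mul_right _ (card_le_univ _))
  rw [card_orderComponents]
  exact (mem_filter_univ i).1 hi |>.le

/-- The pairs `(F, y)` from which `G'` could have been produced as a completion: the hub is one of
the vertices of `G'` of degree at most `S₀`, and the new components are rare in `G'`. -/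
noncomputable def freedCandidates [Fintype ι] (H : ∀ i, SimpleGraph (Fin (h i))) (S₀ M : ℕ)
    (G' : SimpleGraph (Fin n)) : Finset (Finset (Fin n) × Fin n) :=
  ({x | #(G'.neighborFinset x) ≤ S₀} : Finset (Fin n)).biUnion fun x =>
    (G'.neighborFinset x).biUnion fun y => (rareComponents H M G').powerset.image fun 𝒟 =>
      ((insert x (G'.neighborFinset x)).erase y ∪ 𝒟.biUnion id, y)

theorem card_freedCandidates_le [Fintype ι] (H : ∀ i, SimpleGraph (Fin (h i))) (S₀ M : ℕ)
    (G' : SimpleGraph (Fin n)) :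
    #(freedCandidates H S₀ M G') ≤ n * (S₀ * 2 ^ (Fintype.card ι * M)) := by
  refine (card_biUnion_le_card_mul _ _ _ fun x hx => (card_biUnion_le_card_mul _ _
    (2 ^ (Fintype.card ι * M)) fun y _ => card_image_le.trans ?_).trans
      (Nat.mul_le_mul_right _ ((mem_filter_univ x).1 hx))).trans
        (Nat.mul_le_mul_right _ ((card_le_univ _).trans_eq (Fintype.card_fin n)))
  rw [card_powerset]
  exact Nat.pow_le_pow_right two_pos (card_rareComponents_le H M G')

theorem IsCompletion.mem_freedCandidates [Fintype ι]
    (hcompl : IsCompletion H t I G₀ F y G' hub 𝒟) (hF : #F ≤ S₀)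
    (hI : ∀ i ∈ I, numOrderComponents (H i) G' < M) : (F, y) ∈ freedCandidates H S₀ M G' := by
  refine mem_biUnion.2 ⟨hub, (mem_filter_univ hub).2 (hcompl.card_neighborFinset_le.trans hF),
    mem_biUnion.2 ⟨y, hcompl.mem_neighborFinset, mem_image.2
      ⟨𝒟, mem_powerset.2 fun W hW => ?_, by rw [← hcompl.eq_union]⟩⟩⟩
  obtain ⟨i, hi, hWi⟩ := hcompl.exists_mem W hW
  exact mem_biUnion.2 ⟨i, (mem_filter_univ i).2 (hI i hi), hWi⟩

end Candidates

section Completion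

variable [Fintype ι] (hconn : ∀ i, (H i).Connected) (hplanar : ∀ i, IsPlanar (H i)) (hη : 0 < η)
  (hsmin : (3 * (t * ∑ i, h i) + t * ∑ i, edgeCount (H i) + 8 : ℕ) ≤ η * smin)

include hconn hplanar hη hsmin

/-- Only the components of those `H i` that are scarce in `G` are added, so that they are still rare
in the completion, where they must be found again. -/
theorem IsFreeable.exists_mem_candidates (hw : S₀ + r * (1 + D) ^ k < w)
    (hfree : IsFreeable D k smin S₀ η r G F) (hy : y ∉ F) :
    ∃ G', IsPlanar G' ∧ edgeCount G' = edgeCount G ∧ (∀ i, t ≤ numOrderComponents (H i) G') ∧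
      (F, y) ∈ freedCandidates H S₀ (t + 2 * w) G' ∧ G ∈ sourceCandidates D k r G' F := by
  obtain ⟨G₀, v, hG₀, hiso, hbal, hagree⟩ := hfree
  obtain ⟨j, hj, hlo, hhi⟩ := hbal.exists_edgeCount_eq_add hη hsmin
  obtain ⟨G', hub, 𝒟, hedge, hcompl⟩ := exists_isCompletion hiso hconn hplanar hG₀ t
    {i | numOrderComponents (H i) G < t + w} hy (j := j) (by omega) (by omega)
  set touched := touchedSet D k G₀ F v
  have hagree' : AgreeOff G G' (insert y touched : Finset (Fin n)) :=
    hagree.trans (hcompl.agreeOff hiso) (coe_subset.2 (subset_insert _ _))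
      (coe_subset.2 (insert_subset_insert _ (subset_touchedSet ..)))
  have hcard : #(insert y touched) ≤ w :=
    (card_insert_le _ _).trans ((card_touchedSet_le hbal.freed_le G₀ v).trans_lt hw)
  refine ⟨G', hcompl.isPlanar, by omega, fun i => ?_,
    hcompl.mem_freedCandidates hbal.freed_le fun i hi => ?_, (mem_sourceCandidates
      (hcompl.spanningCoe_induce_compl hiso)).2 ⟨v, hagree⟩⟩
  · by_cases hi : numOrderComponents (H i) G < t + w
    · exact hcompl.le_numOrderComponents i ((mem_filter_univ i).2 hi)
    · have := numOrderComponents_le_add_card (H i) hagree'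
      omega
  · have := (mem_filter_univ i).1 hi
    have := numOrderComponents_le_add_card (H i) hagree'.symm
    omega

end Completion

end Recovery

/-- The planar graphs on `Fin n` with `m` edges, as a finset. -/
noncomputable def planarFinset (n m : ℕ) : Finset (SimpleGraph (Fin n)) :=
  {G | G ∈ planarSet n m}

theorem mem_planarFinset {n m : ℕ} {G : SimpleGraph (Fin n)} :
    G ∈ planarFinset n m ↔ IsPlanar G ∧ edgeCount G = m := by
  rw [planarFinset, mem_filter_univ, planarSet, Set.mem_ofPred_eq]

theorem planarProb_eq_card_div_card (n m : ℕ) (P : SimpleGraph (Fin n) → Prop) :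
    planarProb n m P = #{G ∈ planarFinset n m | P G} / #(planarFinset n m) := by
  rw [planarProb, planarFinset, filter_filter, ← Set.ncard_coe_finset, ← Set.ncard_coe_finset,
    coe_filter_univ, coe_filter_univ]
  rfl

/-- The planar graphs on `Fin n` with `m` edges and at least `t` components ordered like each member
of the family `H`. -/
noncomputable def richPlanarFinset {ι : Type*} {h : ι → ℕ} (H : ∀ i, SimpleGraph (Fin (h i)))
    (t n m : ℕ) : Finset (SimpleGraph (Fin n)) :=
  {G ∈ planarFinset n m | ∀ i, t ≤ numOrderComponents (H i) G}

theorem mem_richPlanarFinset {ι : Type*} {h : ι → ℕ} {H : ∀ i, SimpleGraph (Fin (h i))}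
    {t n m : ℕ} {G : SimpleGraph (Fin n)} : G ∈ richPlanarFinset H t n m ↔
      G ∈ planarFinset n m ∧ ∀ i, t ≤ numOrderComponents (H i) G := by
  rw [richPlanarFinset, mem_filter]

theorem planarFinset_nonempty {n m : ℕ} (h₁ : n ≤ m + 1) (h₂ : m ≤ 3 * (n - 3)) (hn : 0 < n) :
    (planarFinset n m).Nonempty := by
  obtain ⟨G, hG, hGm, -⟩ := exists_isPlanar_isUniversal ⟨0, hn⟩ rfl h₁ h₂
  exact ⟨G, mem_planarFinset.2 ⟨hG, hGm⟩⟩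

theorem eventually_planarFinset_nonempty {b B : ℝ} (hb : 1 < b) (hB : B < 3) :
    ∀ᶠ n : ℕ in atTop, ∀ m : ℕ, b * n ≤ m → m ≤ B * n → (planarFinset n m).Nonempty := by
  filter_upwards [tendsto_natCast_atTop_atTop.eventually_ge_atTop (9 / (3 - B)),
    eventually_gt_atTop 0] with n hn hn₀ m hlo hhi
  rw [div_le_iff₀' (by linarith)] at hn
  have h₁ : n ≤ m := by
    rify
    nlinarith [(Nat.cast_nonneg n : (0 : ℝ) ≤ n)]
  have h₂ : m + 9 ≤ 3 * n := by
    rify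
    linarith
  exact planarFinset_nonempty (by omega) (by omega) hn₀

/-- The pairs `(F, y)` such that `F` can be freed in `G` and a graph on `F` can be attached at
`y`. -/
noncomputable def freedPairs {V : Type*} [Fintype V] (D k smin S₀ : ℕ) (η : ℝ) (r : ℕ)
    (G : SimpleGraph V) : Finset (Finset V × V) :=
  {x | IsFreeable D k smin S₀ η r G x.1 ∧ x.2 ∉ x.1}

theorem mem_freedPairs {V : Type*} [Fintype V] {D k smin S₀ : ℕ} {η : ℝ} {r : ℕ}
    {G : SimpleGraph V} {x : Finset V × V} :
    x ∈ freedPairs D k smin S₀ η r G ↔ IsFreeable D k smin S₀ η r G x.1 ∧ x.2 ∉ x.1 := by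
  rw [freedPairs, mem_filter_univ]

theorem card_isFreeable_mul_le_card_freedPairs {V : Type*} [Fintype V] (D k smin S₀ : ℕ) (η : ℝ)
    (r : ℕ) (G : SimpleGraph V) :
    #{F | IsFreeable D k smin S₀ η r G F} * (Fintype.card V - S₀) ≤
      #(freedPairs D k smin S₀ η r G) := by
  have hfst : ∀ x ∈ freedPairs D k smin S₀ η r G, x.1 ∈ ({F | IsFreeable D k smin S₀ η r G F} :
      Finset (Finset V)) := fun x hx => (mem_filter_univ _).2 (mem_freedPairs.1 hx).1
  rw [card_eq_sum_card_fiberwise hfst]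
  refine card_nsmul_le_sum _ _ _ fun F hF => ?_
  obtain ⟨_, _, _, _, hbal, _⟩ := (mem_filter_univ F).1 hF
  calc Fintype.card V - S₀ ≤ #Fᶜ := by
        rw [card_compl]
        exact Nat.sub_le_sub_left hbal.freed_le _
    _ = #(Fᶜ.image (Prod.mk F)) := (card_image_of_injective _ (Prod.mk_right_injective F)).symm
    _ ≤ _ := card_le_card fun x hx => by
      obtain ⟨y, hy, rfl⟩ := mem_image.1 hx
      exact mem_filter.2 ⟨mem_freedPairs.2 ⟨(mem_filter_univ F).1 hF, mem_compl.1 hy⟩, rfl⟩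

section Count

variable {ι : Type*} [Fintype ι] {h : ι → ℕ} {H : ∀ i, SimpleGraph (Fin (h i))}
  {t D k smin S₀ r : ℕ} {η : ℝ} (hconn : ∀ i, (H i).Connected) (hplanar : ∀ i, IsPlanar (H i))
  (hη : 0 < η)
  (hsmin : (3 * (t * ∑ i, h i) + t * ∑ i, edgeCount (H i) + 8 : ℕ) ≤ η * smin)

include hconn hplanar hη hsmin

theorem exists_sum_card_freedPairs_le : ∃ K : ℕ, ∀ n m : ℕ,
    ∑ G ∈ planarFinset n m, #(freedPairs D k smin S₀ η r G) ≤
      K * n ^ (r + 1) * #(richPlanarFinset H t n m) := by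
  set w := S₀ + r * (1 + D) ^ k + 1
  set c := S₀ * 2 ^ (Fintype.card ι * (t + 2 * w))
  refine ⟨c * 2 ^ (w * w), fun n m => ?_⟩
  rw [← card_sigma]
  have hex : ∀ x ∈ (planarFinset n m).sigma fun G => freedPairs D k smin S₀ η r G,
      ∃ G' ∈ richPlanarFinset H t n m,
        x ∈ ({x ∈ freedCandidates H S₀ (t + 2 * w) G' | #x.1 ≤ S₀} : Finset _).biUnion
          fun x => (sourceCandidates D k r G' x.1).image fun G =>
            (⟨G, x⟩ : Σ _ : SimpleGraph (Fin n), Finset (Fin n) × Fin n) := by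
    rintro ⟨G, F, y⟩ hx
    obtain ⟨hG, hx⟩ := mem_sigma.1 hx
    obtain ⟨hfree, hy⟩ := mem_freedPairs.1 hx
    obtain ⟨G', hG', hedge, hnum, hcand, hsource⟩ :=
      hfree.exists_mem_candidates hconn hplanar hη hsmin (Nat.lt_succ_self _) hy
    obtain ⟨_, _, _, _, hbal, _⟩ := hfree
    refine ⟨G', mem_richPlanarFinset.2 ⟨mem_planarFinset.2 ⟨hG', ?_⟩, hnum⟩, mem_biUnion.2 ⟨(F, y),
      mem_filter.2 ⟨hcand, hbal.freed_le⟩, mem_image_of_mem _ hsource⟩⟩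
    rw [hedge, (mem_planarFinset.1 hG).2]
  refine (card_le_card fun x hx => mem_biUnion.2 (hex x hx)).trans
    ((card_biUnion_le_card_mul _ _ (c * 2 ^ (w * w) * n ^ (r + 1)) fun G' _ => ?_).trans_eq
      (mul_comm _ _))
  calc _ ≤ n * c * (n ^ r * 2 ^ (w * w)) := by
        refine (card_biUnion_le_card_mul _ _ _ fun x hx => card_image_le.trans ?_).trans
          (Nat.mul_le_mul_right _ ((card_filter_le _ _).trans (card_freedCandidates_le ..)))
        exact (card_sourceCandidates_le (mem_filter.1 hx).2 (Nat.le_succ _) G').trans_eq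
          (by rw [Fintype.card_fin])
    _ = c * 2 ^ (w * w) * n ^ (r + 1) := by ring

theorem exists_card_isFreeable_le {β : ℝ} (hβ : 0 < β) : ∃ C : ℕ, ∀ n > 2 * S₀, ∀ m : ℕ,
    #{G ∈ planarFinset n m | (β * n) ^ r ≤ #{F | IsFreeable D k smin S₀ η r G F}} ≤
      C * #(richPlanarFinset H t n m) := by
  obtain ⟨K, hK⟩ := exists_sum_card_freedPairs_le (D := D) (k := k) (S₀ := S₀) (r := r) hconn
    hplanar hη hsmin
  refine ⟨⌈2 * K / β ^ r⌉₊, fun n hn m => ?_⟩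
  set good := #(richPlanarFinset H t n m)
  set source : Finset (SimpleGraph (Fin n)) :=
    {G ∈ planarFinset n m | (β * n) ^ r ≤ #{F | IsFreeable D k smin S₀ η r G F}}
  have hn₀ : (0 : ℝ) < n ^ (r + 1) := by
    have : 0 < n := by omega
    positivity
  have hlow : #source * ((β * n) ^ r * (n / 2)) ≤
      ∑ G ∈ planarFinset n m, (#(freedPairs D k smin S₀ η r G) : ℝ) := by
    rw [← nsmul_eq_mul]
    refine (card_nsmul_le_sum _ _ _ fun G hG => ?_).trans
      (sum_le_sum_of_subset_of_nonneg (filter_subset _ _) fun _ _ _ => Nat.cast_nonneg _)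
    have hhalf : (n : ℝ) / 2 ≤ (n - S₀ : ℕ) := by
      rw [div_le_iff₀' two_pos]
      exact_mod_cast (by omega : n ≤ 2 * (n - S₀))
    calc (β * n) ^ r * ((n : ℝ) / 2)
        ≤ #{F | IsFreeable D k smin S₀ η r G F} * (n - S₀ : ℕ) := by
          gcongr
          exact (mem_filter.1 hG).2
      _ ≤ #(freedPairs D k smin S₀ η r G) := by
        have := card_isFreeable_mul_le_card_freedPairs D k smin S₀ η r G
        rw [Fintype.card_fin] at this
        exact_mod_cast this
  have hupp : #source * ((β * n) ^ r * (n / 2)) ≤ K * n ^ (r + 1) * good :=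
    hlow.trans (by exact_mod_cast hK n m)
  have hmul : β ^ r * #source * n ^ (r + 1) ≤ 2 * K * good * n ^ (r + 1) :=
    calc β ^ r * #source * n ^ (r + 1) = 2 * (#source * ((β * n) ^ r * (n / 2))) := by ring
      _ ≤ 2 * (K * n ^ (r + 1) * good) := by gcongr
      _ = 2 * K * good * n ^ (r + 1) := by ring
  have hsource : β ^ r * #source ≤ 2 * K * good := le_of_mul_le_mul_right hmul hn₀
  rify
  calc (#source : ℝ) ≤ 2 * K / β ^ r * good := by
        rwa [div_mul_eq_mul_div, le_div_iff₀' (pow_pos hβ r)]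
    _ ≤ ⌈2 * K / β ^ r⌉₊ * good := by
      gcongr
      exact Nat.le_ceil _

end Count

theorem exists_card_planarFinset_le {b B : ℝ} (hb : 1 < b) (hB : B < 3) {ι : Type*} [Finite ι]
    {h : ι → ℕ} {H : ∀ i, SimpleGraph (Fin (h i))} (hconn : ∀ i, (H i).Connected)
    (hplanar : ∀ i, IsPlanar (H i)) (t : ℕ) :
    ∃ C : ℕ, ∀ᶠ n : ℕ in atTop, ∀ m : ℕ, b * n ≤ m → m ≤ B * n → #(planarFinset n m) ≤
      C * #(richPlanarFinset H t n m) := by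
  cases nonempty_fintype ι
  obtain ⟨η, hη, hfree⟩ := exists_pow_le_card_isFreeable.{0} hb hB
  obtain ⟨smin, hsmin⟩ :=
    exists_nat_ge (((3 * (t * ∑ i, h i) + t * ∑ i, edgeCount (H i) + 8 : ℕ) : ℝ) / η)
  obtain ⟨β, hβ, R₀, S₀, D, k, N, hfree⟩ := hfree smin
  choose C hC using fun r => exists_card_isFreeable_le (D := D) (k := k) (S₀ := S₀) (r := r) hconn
    hplanar hη ((div_le_iff₀' hη).1 hsmin) hβ
  refine ⟨∑ r ∈ Finset.range (R₀ + 1), C r, ?_⟩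
  filter_upwards [eventually_ge_atTop N, eventually_gt_atTop (2 * S₀)] with n hN hn m hlo hhi
  have hcover : planarFinset n m ⊆ (Finset.range (R₀ + 1)).biUnion fun r =>
      {G ∈ planarFinset n m | (β * n) ^ r ≤ #{F | IsFreeable D k smin S₀ η r G F}} := by
    intro G hG
    obtain ⟨hGp, rfl⟩ := mem_planarFinset.1 hG
    obtain ⟨r, hr, hpow⟩ := hfree (V := Fin n) (by rwa [Fintype.card_fin]) hGp
      (by rwa [Fintype.card_fin]) (by rwa [Fintype.card_fin])
    rw [Fintype.card_fin] at hpow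
    exact mem_biUnion.2 ⟨r, Finset.mem_range.2 (Nat.lt_succ_of_le hr), mem_filter.2 ⟨hG, hpow⟩⟩
  rw [sum_mul]
  exact ((card_le_card hcover).trans card_biUnion_le).trans
    (sum_le_sum fun r _ => hC r n hn m)

end PlanarSwitch

theorem components_lower_bound (b B : ℝ) (hb : 1 < b) (hB : B < 3) (m : ℕ → ℕ)
    (hm : ∀ᶠ n : ℕ in atTop, b * (n : ℝ) ≤ (m n : ℝ) ∧ (m n : ℝ) ≤ B * (n : ℝ))
    (l : ℕ) (h : Fin l → ℕ) (H : ∀ i : Fin l, SimpleGraph (Fin (h i)))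
    (hconn : ∀ i, (H i).Connected) (hplanar : ∀ i, IsPlanar (H i))
    (t : ℕ) (ht : 0 < t) :
    ∃ ε : ℝ, 0 < ε ∧ ∃ N : ℕ, ∀ n ≥ N,
      ε ≤ planarProb n (m n) fun G => ∀ i, t ≤ numOrderComponents (H i) G := by
  obtain ⟨C, hC⟩ := PlanarSwitch.exists_card_planarFinset_le hb hB hconn hplanar t
  refine ⟨1 / (C + 1), by positivity, eventually_atTop.1 ?_⟩
  filter_upwards [hC, hm, PlanarSwitch.eventually_planarFinset_nonempty hb hB]
    with n hle ⟨hlo, hhi⟩ hne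
  have hpos : (0 : ℝ) < (PlanarSwitch.planarFinset n (m n)).card :=
    Nat.cast_pos.2 (hne _ hlo hhi).card_pos
  rw [PlanarSwitch.planarProb_eq_card_div_card, div_le_div_iff₀ (by positivity) hpos, one_mul,
    mul_comm]
  exact_mod_cast (hle _ hlo hhi).trans (Nat.mul_le_mul_right _ C.le_succ)
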